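/- Let ν > −1 and δ > 0, and let μ be a signed Borel measure on ℝ satisfying (H1)-(H2)-(H3) with supp(μ) ⊂ [−δ, ∞). Then the infimum of ∫_{-∞}^{∞} {M(x) − L(x)} |x|^{2ν+1} dx over all pairs of real entire functions L, M of exponential type at most δ with L(x) ≤ f_μ(x) ≤ M(x) for all real x equals Γ(ν+1)Γ(ν+2)(4/δ)^{2ν+2}. -/

import Mathlib

open MeasureTheory Set Filter

/-- An entire function has exponential type at most `τ` if for every `ε > 0` it is
`O(e^{(τ+ε)|z|})`. -/
def ExpTypeLE (F : ℂ → ℂ) (τ : ℝ) : Prop :=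
  ∀ ε : ℝ, 0 < ε → ∃ C : ℝ, ∀ z : ℂ, ‖F z‖ ≤ C * Real.exp ((τ + ε) * ‖z‖)

section
open Polynomial Topology


lemma A_gamma_add (x : ℝ) (hx : 0 < x) (n : ℕ) :
    Real.Gamma (x + n) = Real.Gamma x * (ascPochhammer ℝ n).eval x := by
  induction n with
  | zero => simp
  | succ n ih =>
    rw [ascPochhammer_succ_eval, ← mul_assoc, ← ih, Nat.cast_succ, ← add_assoc,
      Real.Gamma_add_one (by positivity)]
    ring

lemma A_altsum (n : ℕ) (f : ℝ → ℝ) (y : ℝ) : (fwdDiff 1)^[n] f y =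
    (-1) ^ n * ∑ k ∈ Finset.range (n + 1), (-1 : ℝ) ^ k * n.choose k * f (y + k) := by
  rw [fwdDiff_iter_eq_sum_shift, Finset.mul_sum]
  refine Finset.sum_congr rfl fun k hk => ?_
  have hk' : k ≤ n := by simpa [Nat.lt_succ_iff] using hk
  have : (-1 : ℝ) ^ (n - k) = (-1) ^ n * (-1) ^ k := by
    obtain ⟨m, rfl⟩ := Nat.exists_eq_add_of_le hk'
    rw [Nat.add_sub_cancel_left, pow_add, mul_comm ((-1 : ℝ)^k), mul_assoc, ← mul_pow]
    simp
  simp only [zsmul_eq_mul, nsmul_eq_mul, mul_one]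
  push_cast
  rw [this]; ring

lemma A_altsum_poly (n : ℕ) (R : ℝ[X]) (hR : R.natDegree < n) :
    ∑ k ∈ Finset.range (n + 1), (-1 : ℝ) ^ k * n.choose k * R.eval (k : ℝ) = 0 := by
  have h := congrFun (Polynomial.fwdDiff_iter_eq_zero_of_degree_lt hR) 0
  rw [A_altsum] at h
  simpa using h

lemma A_altsum_inv_aux (n : ℕ) : ∀ x : ℝ, 0 < x → (fwdDiff 1)^[n] (fun t : ℝ => t⁻¹) x =
    (-1) ^ n * n.factorial / (ascPochhammer ℝ (n + 1)).eval x := by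
  induction n with
  | zero => intro x hx; simp
  | succ n ih =>
    intro x hx
    rw [Function.iterate_succ_apply']
    simp only [fwdDiff]
    rw [ih x hx, ih (x + 1) (by linarith)]
    have h1 : (ascPochhammer ℝ (n + 1 + 1)).eval x = (ascPochhammer ℝ (n + 1)).eval x * (x + (n + 1)) := by
      rw [ascPochhammer_succ_eval]; push_cast; ring
    have h2 : (ascPochhammer ℝ (n + 1 + 1)).eval x = x * (ascPochhammer ℝ (n + 1)).eval (x + 1) := by
      rw [ascPochhammer_succ_left]; simp
    have p1 : 0 < (ascPochhammer ℝ (n + 1)).eval x := ascPochhammer_pos _ _ hx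
    have p2 : 0 < (ascPochhammer ℝ (n + 1)).eval (x + 1) := ascPochhammer_pos _ _ (by linarith)
    have h3 : (ascPochhammer ℝ (n + 1)).eval (x + 1) = (ascPochhammer ℝ (n + 1)).eval x * (x + (n + 1)) / x := by
      field_simp; linarith
    rw [h1, h3, Nat.factorial_succ]
    have : 0 < x + (n + 1) := by positivity
    field_simp
    push_cast
    ring

lemma A_altsum_inv (n : ℕ) (x : ℝ) (hx : 0 < x) :
    ∑ k ∈ Finset.range (n + 1), (-1 : ℝ) ^ k * n.choose k * (x + k)⁻¹ =
      n.factorial / (ascPochhammer ℝ (n + 1)).eval x := by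
  have h := A_altsum_inv_aux n x hx
  rw [A_altsum, mul_div_assoc] at h
  exact mul_left_cancel₀ (by simp) h

/-- coefficients of the Jacobi polynomial -/
noncomputable def Acoef (ν : ℝ) (n k : ℕ) : ℝ :=
  (-1 : ℝ) ^ k * n.choose k * ((ascPochhammer ℝ k).eval (n + ν + 3 / 2) / (ascPochhammer ℝ k).eval (ν + 2))

noncomputable def Apoly (ν : ℝ) (n : ℕ) : ℝ[X] :=
  ∑ k ∈ Finset.range (n + 1), C (Acoef ν n k) * X ^ k

noncomputable def Amom (ν : ℝ) (k : ℕ) : ℝ :=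
  Real.Gamma (ν + 1 + k) / Real.Gamma (ν + 3 / 2 + k)

lemma A_orth (ν : ℝ) (hν : -1 < ν) (n j : ℕ) (hj : j < n) :
    ∑ k ∈ Finset.range (n + 1), Acoef ν n k * Amom ν (k + 1 + j) = 0 := by
  obtain ⟨i, rfl⟩ : ∃ i, n = j + 1 + i := Nat.exists_eq_add_of_le hj
  set n := j + 1 + i with hn
  let R : ℝ[X] := C (Real.Gamma (ν + 2) / Real.Gamma (n + ν + 3 / 2)) *
    ((ascPochhammer ℝ j).comp (X + C (ν + 2)) * (ascPochhammer ℝ i).comp (X + C (ν + 3 / 2 + 1 + j)))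
  have hR : R.natDegree < n := by
    calc R.natDegree ≤ ((ascPochhammer ℝ j).comp (X + C (ν + 2)) * (ascPochhammer ℝ i).comp (X + C (ν + 3 / 2 + 1 + j))).natDegree :=
          natDegree_C_mul_le _ _
      _ ≤ _ := natDegree_mul_le
      _ = j + i := by rw [natDegree_comp, natDegree_comp, ascPochhammer_natDegree, ascPochhammer_natDegree, natDegree_X_add_C, natDegree_X_add_C]; ring
      _ < n := by omega
  rw [← A_altsum_poly n R hR]
  refine Finset.sum_congr rfl fun k _ => ?_
  unfold Acoef
  rw [mul_assoc]
  congr 1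
  simp only [R, eval_mul, eval_C, eval_comp, eval_add, eval_X, Amom]
  have e1 := A_gamma_add (n + ν + 3/2) (by have : (0:ℝ) ≤ n := by positivity
                                           linarith) k
  have e2 := A_gamma_add (ν + 2) (by linarith) k
  have e3 := A_gamma_add (ν + 2 + k) (by have : (0:ℝ) ≤ k := by positivity
                                         linarith) j
  have e4 := A_gamma_add (ν + 3/2 + 1 + j + k) (by have : (0:ℝ) ≤ k := by positivity
                                                   have : (0:ℝ) ≤ j := by positivity
                                                   linarith) i
  have p1 : 0 < Real.Gamma (n + ν + 3/2) := Real.Gamma_pos_of_pos (by have : (0:ℝ) ≤ n := by positivity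
                                                                      linarith)
  have p2 : 0 < Real.Gamma (ν + 2) := Real.Gamma_pos_of_pos (by linarith)
  have p3 : 0 < Real.Gamma (ν + 3/2 + 1 + j + k) := Real.Gamma_pos_of_pos (by have : (0:ℝ) ≤ k := by positivity
                                                                              have : (0:ℝ) ≤ j := by positivity
                                                                              linarith)
  have p4 : 0 < (ascPochhammer ℝ k).eval (ν + 2) := ascPochhammer_pos _ _ (by linarith)
  have e5 : (n : ℝ) + ν + 3/2 + k = ν + 3/2 + 1 + j + k + i := by rw [hn]; push_cast; ring
  rw [e5, e4] at e1
  have a1 : ν + 1 + ((k + 1 + j : ℕ) : ℝ) = ν + 2 + k + j := by push_cast; ring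
  have a2 : ν + 3 / 2 + ((k + 1 + j : ℕ) : ℝ) = ν + 3/2 + 1 + j + k := by push_cast; ring
  have a3 : (k : ℝ) + (ν + 2) = ν + 2 + k := by ring
  have a4 : (k : ℝ) + (ν + 3/2 + 1 + j) = ν + 3/2 + 1 + j + k := by ring
  rw [a1, a2, a3, a4, e3, e2]
  generalize Real.Gamma (ν + 3 / 2 + 1 + j + k) = G1 at *
  generalize Real.Gamma (n + ν + 3 / 2) = G2 at *
  generalize eval ((n:ℝ) + ν + 3 / 2) (ascPochhammer ℝ k) = G3 at *
  generalize eval (ν + 3 / 2 + 1 + (j:ℝ) + k) (ascPochhammer ℝ i) = G4 at *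
  field_simp
  linear_combination (-eval (ν + 2 + (k:ℝ)) (ascPochhammer ℝ j)) * e1

lemma A_eval_sum (ν : ℝ) (hν : -1 < ν) (n : ℕ) :
    ∑ k ∈ Finset.range (n + 1), Acoef ν n k * Amom ν k =
      Real.Gamma (ν + 1) * Real.Gamma (ν + 2) * (ascPochhammer ℝ n).eval (1 / 2) * n.factorial /
        (Real.Gamma (n + ν + 3 / 2) * Real.Gamma (n + ν + 2)) := by
  let N : ℝ[X] := (ascPochhammer ℝ n).comp (X + C (ν + 3 / 2))
  have hNdeg : N.natDegree = n := by
    rw [natDegree_comp, ascPochhammer_natDegree, natDegree_X_add_C, mul_one]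
  obtain ⟨D, hD⟩ : (X - C (-(ν + 1))) ∣ N - C (N.eval (-(ν + 1))) := by
    rw [dvd_iff_isRoot]; simp
  have hNe : N.eval (-(ν + 1)) = (ascPochhammer ℝ n).eval (1/2) := by
    simp only [N, eval_comp, eval_add, eval_X, eval_C]; congr 1; ring
  have g0 : 0 < Real.Gamma (ν + 1) := Real.Gamma_pos_of_pos (by linarith)
  have hnn : (0:ℝ) ≤ n := by positivity
  have p1 : 0 < Real.Gamma (n + ν + 3/2) := Real.Gamma_pos_of_pos (by linarith)
  have p5 : 0 < Real.Gamma (n + ν + 2) := Real.Gamma_pos_of_pos (by linarith)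
  have key : ∀ k : ℕ, Acoef ν n k * Amom ν k = Real.Gamma (ν + 2) / Real.Gamma (n + ν + 3/2) *
     ((-1 : ℝ) ^ k * n.choose k * D.eval (k:ℝ) + N.eval (-(ν + 1)) * ((-1 : ℝ) ^ k * n.choose k * (ν + 1 + k)⁻¹)) := by
    intro k
    have hk : (0:ℝ) ≤ k := by positivity
    have hpos : 0 < ν + 1 + k := by linarith
    have hDk : D.eval (k:ℝ) = (N.eval (k:ℝ) - N.eval (-(ν + 1))) / (ν + 1 + k) := by
      have := congrArg (eval (k:ℝ)) hD
      simp only [eval_sub, eval_C, eval_mul, eval_X] at this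
      rw [eq_div_iff hpos.ne']; linarith
    have hNk : N.eval (k:ℝ) = (ascPochhammer ℝ n).eval (ν + 3/2 + k) := by
      simp only [N, eval_comp, eval_add, eval_X, eval_C]; congr 1; ring
    have e1 := A_gamma_add (n + ν + 3/2) (by linarith) k
    have e2 := A_gamma_add (ν + 2) (by linarith) k
    have e3 : Real.Gamma (ν + 2 + k) = (ν + 1 + k) * Real.Gamma (ν + 1 + k) := by
      rw [← Real.Gamma_add_one hpos.ne']; congr 1; ring
    have e4 := A_gamma_add (ν + 3/2 + k) (by linarith) n
    have p2 : 0 < Real.Gamma (ν + 2) := Real.Gamma_pos_of_pos (by linarith)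
    have p3 : 0 < Real.Gamma (ν + 3/2 + k) := Real.Gamma_pos_of_pos (by linarith)
    have p4 : 0 < (ascPochhammer ℝ k).eval (ν + 2) := ascPochhammer_pos _ _ (by linarith)
    have e5 : (n : ℝ) + ν + 3/2 + k = ν + 3/2 + k + n := by ring
    rw [e5, e4] at e1
    rw [hDk, hNk]
    have : (-1 : ℝ) ^ k * (n.choose k) * (((ascPochhammer ℝ n).eval (ν + 3/2 + k) - N.eval (-(ν + 1))) / (ν + 1 + k)) +
      N.eval (-(ν + 1)) * ((-1 : ℝ) ^ k * (n.choose k) * (ν + 1 + k)⁻¹) = (-1 : ℝ) ^ k * (n.choose k) *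
        ((ascPochhammer ℝ n).eval (ν + 3/2 + k) / (ν + 1 + k)) := by
      field_simp; ring
    rw [this]
    unfold Acoef Amom
    rw [e2] at e3
    have e6 : Real.Gamma (ν + 1 + k) = Real.Gamma (ν + 2) * (ascPochhammer ℝ k).eval (ν + 2) / (ν + 1 + k) := by
      field_simp; linarith
    have e7 : (ascPochhammer ℝ k).eval (n + ν + 3/2) = Real.Gamma (ν + 3/2 + k) * (ascPochhammer ℝ n).eval (ν + 3/2 + k) / Real.Gamma (n + ν + 3/2) := by
      rw [eq_div_iff p1.ne']; linarith
    rw [e6, e7]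
    generalize Real.Gamma (ν + 3 / 2 + k) = G1 at *
    generalize Real.Gamma (n + ν + 3 / 2) = G2 at *
    generalize eval (ν + 3 / 2 + (k:ℝ)) (ascPochhammer ℝ n) = G4 at *
    field_simp
  simp only [key]
  rw [← Finset.mul_sum, Finset.sum_add_distrib, ← Finset.mul_sum, A_altsum_inv n _ (by linarith), hNe]
  have hs : ∑ k ∈ Finset.range (n + 1), (-1 : ℝ) ^ k * n.choose k * D.eval (k : ℝ) = 0 := by
    by_cases hD0 : D = 0
    · simp [hD0]
    refine A_altsum_poly n D ?_
    have h1 := congrArg natDegree hD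
    rw [natDegree_sub_C, hNdeg, natDegree_mul (X_sub_C_ne_zero _) hD0, natDegree_X_sub_C] at h1
    omega
  rw [hs]
  have e8 := A_gamma_add (ν + 1) (by linarith) (n + 1)
  have e9 : ν + 1 + ((n + 1 : ℕ) : ℝ) = n + ν + 2 := by push_cast; ring
  rw [e9] at e8
  rw [e8]
  have p6 : 0 < (ascPochhammer ℝ (n+1)).eval (ν + 1) := ascPochhammer_pos _ _ (by linarith)
  field_simp
  ring


lemma B_coeff (ν : ℝ) (n k : ℕ) : (Apoly ν n).coeff k = if k ≤ n then Acoef ν n k else 0 := by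
  unfold Apoly
  simp only [finsetSum_coeff, coeff_C_mul, coeff_X_pow, mul_ite, mul_one, mul_zero]
  rw [Finset.sum_ite_eq]
  simp [Nat.lt_succ_iff]

lemma B_coef_ne (ν : ℝ) (hν : -1 < ν) (n k : ℕ) (hk : k ≤ n) : Acoef ν n k ≠ 0 := by
  unfold Acoef
  have hn : (0:ℝ) ≤ n := by positivity
  have p1 : 0 < (ascPochhammer ℝ k).eval (n + ν + 3/2) := ascPochhammer_pos _ _ (by linarith)
  have p2 : 0 < (ascPochhammer ℝ k).eval (ν + 2) := ascPochhammer_pos _ _ (by linarith)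
  have p3 : 0 < n.choose k := Nat.choose_pos hk
  have : (n.choose k : ℝ) ≠ 0 := by exact_mod_cast p3.ne'
  have h4 := div_pos p1 p2
  have : ((-1 : ℝ) ^ k) ≠ 0 := by simp
  positivity

lemma B_natDegree (ν : ℝ) (hν : -1 < ν) (n : ℕ) : (Apoly ν n).natDegree = n := by
  apply natDegree_eq_of_le_of_coeff_ne_zero
  · rw [natDegree_le_iff_coeff_eq_zero]
    intro N hN
    rw [B_coeff, if_neg (by omega)]
  · rw [B_coeff, if_pos le_rfl]; exact B_coef_ne ν hν n n le_rfl

lemma B_ne_zero (ν : ℝ) (n : ℕ) : (Apoly ν n) ≠ 0 := by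
  intro h
  have := B_coeff ν n 0
  rw [h] at this
  simp [Acoef] at this

lemma B_eval_zero (ν : ℝ) (n : ℕ) : (Apoly ν n).eval 0 = 1 := by
  rw [← coeff_zero_eq_eval_zero, B_coeff]; simp [Acoef]

lemma B_orth (ν : ℝ) (hν : -1 < ν) (n : ℕ) (J : ℝ[X] →ₗ[ℝ] ℝ) (κ : ℝ)
    (hmom : ∀ k, J (X ^ k) = κ * Amom ν k) (s : ℝ[X]) (hs : s.degree < n) :
    J (X * Apoly ν n * s) = 0 := by
  have h1 : ∀ j < n, J (X * Apoly ν n * X ^ j) = 0 := by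
    intro j hj
    have : X * Apoly ν n * X ^ j = ∑ k ∈ Finset.range (n + 1), (Acoef ν n k) • (X ^ (k + 1 + j) : ℝ[X]) := by
      unfold Apoly
      rw [Finset.mul_sum, Finset.sum_mul]
      refine Finset.sum_congr rfl fun k _ => ?_
      rw [smul_eq_C_mul]; ring
    rw [this, map_sum]
    simp only [map_smul, hmom, smul_eq_mul]
    have := A_orth ν hν n j hj
    calc _ = κ * ∑ k ∈ Finset.range (n + 1), Acoef ν n k * Amom ν (k + 1 + j) := by
          rw [Finset.mul_sum]; exact Finset.sum_congr rfl fun k _ => by ring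
      _ = 0 := by rw [this, mul_zero]
  by_cases hs0 : s = 0
  · simp [hs0]
  have hs' : s.natDegree < n := by rwa [← natDegree_lt_iff_degree_lt hs0] at hs
  rw [s.as_sum_range_C_mul_X_pow, Finset.mul_sum, map_sum]
  refine Finset.sum_eq_zero fun j hj => ?_
  have : X * Apoly ν n * (C (s.coeff j) * X ^ j) = (s.coeff j) • (X * Apoly ν n * X ^ j) := by
    rw [smul_eq_C_mul]; ring
  rw [this, map_smul, h1 j (by rw [Finset.mem_range] at hj; omega), smul_zero]

lemma B_lambda (ν : ℝ) (n : ℕ) (J : ℝ[X] →ₗ[ℝ] ℝ) (κ : ℝ)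
    (hmom : ∀ k, J (X ^ k) = κ * Amom ν k) :
    J (Apoly ν n) = κ * ∑ k ∈ Finset.range (n + 1), Acoef ν n k * Amom ν k := by
  unfold Apoly
  rw [map_sum, Finset.mul_sum]
  refine Finset.sum_congr rfl fun k _ => ?_
  rw [← smul_eq_C_mul, map_smul, hmom, smul_eq_mul]; ring

lemma B_sq (ν : ℝ) (hν : -1 < ν) (n : ℕ) (J : ℝ[X] →ₗ[ℝ] ℝ) (κ : ℝ)
    (hmom : ∀ k, J (X ^ k) = κ * Amom ν k) : J (Apoly ν n ^ 2) = J (Apoly ν n) := by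
  obtain ⟨s, hs⟩ : X ∣ Apoly ν n - 1 := by
    rw [X_dvd_iff, coeff_zero_eq_eval_zero, eval_sub, B_eval_zero]; simp
  have h0 : J (X * Apoly ν n * s) = 0 := by
    refine B_orth ν hν n J κ hmom s ?_
    by_cases hs0 : s = 0
    · rw [hs0, degree_zero]; exact WithBot.bot_lt_coe _
    rw [← natDegree_lt_iff_degree_lt hs0]
    have := congrArg natDegree hs
    rw [← C_1, natDegree_sub_C, B_natDegree ν hν, natDegree_X_mul hs0] at this
    omega
  have : Apoly ν n ^ 2 = Apoly ν n + X * Apoly ν n * s := by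
    linear_combination Apoly ν n * hs
  rw [this, map_add, h0, add_zero]

lemma B_sign (d : ℕ) : ∀ q : ℝ[X], q.natDegree = d → q ≠ 0 → ∃ S : Finset ℝ,
    (∀ s ∈ S, 0 < s ∧ s < 1 ∧ q.eval s = 0) ∧
    ((∀ y ∈ Icc (0:ℝ) 1, 0 ≤ (q * ∏ s ∈ S, (X - C s)).eval y) ∨
     (∀ y ∈ Icc (0:ℝ) 1, (q * ∏ s ∈ S, (X - C s)).eval y ≤ 0)) := by
  induction d with
  | zero =>
    intro q hq _
    rw [eq_C_of_natDegree_eq_zero hq]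
    refine ⟨∅, by simp, ?_⟩
    simpa using (by
      rcases le_total 0 (q.coeff 0) with h | h
      · exact Or.inl fun _ _ _ => h
      · exact Or.inr fun _ _ _ => h)
  | succ d ih =>
    intro q hq hq0
    by_cases hr : ∃ s, 0 < s ∧ s < 1 ∧ q.eval s = 0
    · obtain ⟨s, hs0, hs1, hs⟩ := hr
      obtain ⟨q1, rfl⟩ := (dvd_iff_isRoot.mpr hs)
      have hq1 : q1 ≠ 0 := right_ne_zero_of_mul hq0
      have hd : q1.natDegree = d := by
        rw [natDegree_mul (X_sub_C_ne_zero _) hq1, natDegree_X_sub_C] at hq; omega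
      obtain ⟨S, hS, hsgn⟩ := ih q1 hd hq1
      by_cases hsS : s ∈ S
      · refine ⟨S.erase s, fun t ht => ?_, ?_⟩
        · obtain ⟨a, b, c⟩ := hS t (Finset.mem_of_mem_erase ht)
          exact ⟨a, b, by rw [eval_mul, c, mul_zero]⟩
        · have : (X - C s) * q1 * ∏ s ∈ S.erase s, (X - C s) = q1 * ∏ s ∈ S, (X - C s) := by
            rw [← Finset.mul_prod_erase S _ hsS]; ring
          rwa [this]
      · refine ⟨insert s S, fun t ht => ?_, ?_⟩
        · rcases Finset.mem_insert.mp ht with rfl | ht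
          · exact ⟨hs0, hs1, hs⟩
          · obtain ⟨a, b, c⟩ := hS t ht
            exact ⟨a, b, by rw [eval_mul, c, mul_zero]⟩
        · have : (X - C s) * q1 * ∏ s ∈ insert s S, (X - C s) = (X - C s)^2 * (q1 * ∏ s ∈ S, (X - C s)) := by
            rw [Finset.prod_insert hsS]; ring
          rw [this]
          rcases hsgn with h | h
          · left; intro y hy
            rw [eval_mul, eval_pow]
            exact mul_nonneg (sq_nonneg _) (h y hy)
          · right; intro y hy
            rw [eval_mul, eval_pow]
            exact mul_nonpos_of_nonneg_of_nonpos (sq_nonneg _) (h y hy)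
    · refine ⟨∅, by simp, ?_⟩
      simp only [Finset.prod_empty, mul_one]
      -- constant sign on (0,1), then closure
      have hcl : Icc (0:ℝ) 1 = closure (Ioo 0 1) := (closure_Ioo (by norm_num)).symm
      have key : (∀ y ∈ Ioo (0:ℝ) 1, 0 ≤ q.eval y) ∨ (∀ y ∈ Ioo (0:ℝ) 1, q.eval y ≤ 0) := by
        by_contra hcon
        push Not at hcon
        obtain ⟨⟨a, ha, ha'⟩, ⟨b, hb, hb'⟩⟩ := hcon
        have hpre : IsPreconnected (Ioo (0:ℝ) 1) := isPreconnected_Ioo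
        obtain ⟨c, hc, hc'⟩ := hpre.intermediate_value ha hb (q.continuous.continuousOn) ⟨ha'.le, hb'.le⟩
        exact hr ⟨c, hc.1, hc.2, hc'⟩
      rcases key with h | h
      · left
        rw [hcl]
        exact fun y hy => closure_minimal (t := {y | 0 ≤ q.eval y}) h (isClosed_le continuous_const q.continuous) hy
      · right
        rw [hcl]
        exact fun y hy => closure_minimal (t := {y | q.eval y ≤ 0}) h (isClosed_le q.continuous continuous_const) hy

lemma B_roots (ν : ℝ) (hν : -1 < ν) (n : ℕ) (J : ℝ[X] →ₗ[ℝ] ℝ) (κ : ℝ)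
    (hmom : ∀ k, J (X ^ k) = κ * Amom ν k)
    (hstrict : ∀ p : ℝ[X], p ≠ 0 → (∀ y ∈ Icc (0:ℝ) 1, 0 ≤ p.eval y) → 0 < J p) :
    ∃ S : Finset ℝ, S.card = n ∧ (∀ s ∈ S, 0 < s ∧ s < 1 ∧ (Apoly ν n).eval s = 0) ∧
      Apoly ν n = ∏ s ∈ S, (1 - C (s⁻¹) * X) := by
  obtain ⟨S, hS, hsgn⟩ := B_sign n (Apoly ν n) (B_natDegree ν hν n) (B_ne_zero ν n)
  have hprod : (∏ s ∈ S, (X - C s) : ℝ[X]).Monic := monic_prod_of_monic _ _ fun s _ => monic_X_sub_C s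
  have hdeg : (∏ s ∈ S, (X - C s) : ℝ[X]).natDegree = S.card := by
    rw [natDegree_prod_of_monic _ _ fun s _ => monic_X_sub_C s]; simp
  have hcard1 : n ≤ S.card := by
    by_contra hlt
    push Not at hlt
    have h0 := B_orth ν hν n J κ hmom (∏ s ∈ S, (X - C s)) (by
      rw [← natDegree_lt_iff_degree_lt hprod.ne_zero, hdeg]; exact hlt)
    have hne : X * Apoly ν n * ∏ s ∈ S, (X - C s) ≠ 0 :=
      mul_ne_zero (mul_ne_zero X_ne_zero (B_ne_zero ν n)) hprod.ne_zero
    rcases hsgn with h | h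
    · have := hstrict _ hne (fun y hy => by
        rw [mul_assoc, eval_mul, eval_X]; exact mul_nonneg hy.1 (h y hy))
      linarith
    · have := hstrict _ (neg_ne_zero.mpr hne) (fun y hy => by
        rw [mul_assoc, eval_neg, eval_mul, eval_X]; have := mul_nonneg hy.1 (neg_nonneg.mpr (h y hy)); linarith)
      rw [map_neg] at this
      linarith
  have hdvd : (∏ s ∈ S, (X - C s)) ∣ Apoly ν n := by
    apply Finset.prod_dvd_of_coprime
    · intro a _ b _ hab
      exact isCoprime_X_sub_C_of_isUnit_sub (sub_ne_zero.mpr hab).isUnit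
    · intro s hs
      exact dvd_iff_isRoot.mpr (hS s hs).2.2
  obtain ⟨c, hc⟩ := hdvd
  have hc0 : c ≠ 0 := by
    rintro rfl; rw [mul_zero] at hc; exact B_ne_zero ν n hc
  have h1 := congrArg natDegree hc
  rw [B_natDegree ν hν, natDegree_mul hprod.ne_zero hc0, hdeg] at h1
  have hcard : S.card = n := by omega
  refine ⟨S, hcard, hS, ?_⟩
  have hcd : c.natDegree = 0 := by omega
  have hcC := eq_C_of_natDegree_eq_zero hcd
  set a := c.coeff 0
  have h2 := congrArg (eval 0) hc
  rw [B_eval_zero, hcC, eval_mul, eval_C, eval_prod] at h2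
  simp only [eval_sub, eval_X, eval_C, zero_sub] at h2
  rw [hc, hcC]
  have h3 : (∏ s ∈ S, (X - C s) : ℝ[X]) = C (∏ s ∈ S, (-s)) * ∏ s ∈ S, (1 - C (s⁻¹) * X) := by
    rw [map_prod, ← Finset.prod_mul_distrib]
    refine Finset.prod_congr rfl fun s hs => ?_
    have hs0 : s ≠ 0 := (hS s hs).1.ne'
    have : (C s * C s⁻¹ : ℝ[X]) = 1 := by rw [← C_mul, mul_inv_cancel₀ hs0, C_1]
    rw [C_neg]
    linear_combination (-X) * this
  rw [h3, mul_comm, ← mul_assoc, ← C_mul, mul_comm a, ← h2, C_1, one_mul]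

lemma B_radau (ν : ℝ) (hν : -1 < ν) (n : ℕ) (J : ℝ[X] →ₗ[ℝ] ℝ) (κ : ℝ)
    (hmom : ∀ k, J (X ^ k) = κ * Amom ν k)
    (hpos : ∀ p : ℝ[X], (∀ y ∈ Icc (0:ℝ) 1, 0 ≤ p.eval y) → 0 ≤ J p)
    (hstrict : ∀ p : ℝ[X], p ≠ 0 → (∀ y ∈ Icc (0:ℝ) 1, 0 ≤ p.eval y) → 0 < J p)
    (p : ℝ[X]) (hp : p.natDegree ≤ 2 * n) (hp0 : ∀ y ∈ Icc (0:ℝ) 1, 0 ≤ p.eval y) :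
    J (Apoly ν n) * p.eval 0 ≤ J p := by
  obtain ⟨S, hcard, hS, hfac⟩ := B_roots ν hν n J κ hmom hstrict
  have h0S : (0:ℝ) ∉ S := fun h => lt_irrefl _ (hS 0 h).1
  -- a polynomial of degree ≤ 2n vanishing on all nodes is killed by J
  have kill : ∀ r : ℝ[X], r.natDegree ≤ 2 * n → r.eval 0 = 0 → (∀ s ∈ S, r.eval s = 0) → J r = 0 := by
    intro r hr hr0 hrS
    have hqd : Apoly ν n ∣ r := by
      rw [hfac]
      apply Finset.prod_dvd_of_coprime
      · intro a ha b hb hab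
        have ha0 := (hS a ha).1.ne'
        have hb0 := (hS b hb).1.ne'
        have hab' : b - a ≠ 0 := sub_ne_zero.mpr (Ne.symm hab)
        refine ⟨-C (a / (b - a)), C (b / (b - a)), ?_⟩
        apply Polynomial.funext; intro x
        simp
        field_simp
        ring
      · intro s hs
        have : (1 - C s⁻¹ * X : ℝ[X]) = C (-s⁻¹) * (X - C s) := by
          have : (C s * C s⁻¹ : ℝ[X]) = 1 := by rw [← C_mul, mul_inv_cancel₀ (hS s hs).1.ne', C_1]
          rw [C_neg]; linear_combination -this
        rw [this]
        have hu : IsUnit (C (-s⁻¹) : ℝ[X]) := isUnit_C.mpr (by simpa using (hS s hs).1.ne')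
        rw [hu.mul_left_dvd]
        exact dvd_iff_isRoot.mpr (hrS s hs)
    have hXq : X * Apoly ν n ∣ r := by
      refine IsCoprime.mul_dvd ?_ ?_ hqd
      · rw [← sub_zero X, ← C_0]
        refine (irreducible_X_sub_C (0:ℝ)).coprime_iff_not_dvd.mpr ?_
        rw [dvd_iff_isRoot, IsRoot, B_eval_zero]; norm_num
      · rw [X_dvd_iff, coeff_zero_eq_eval_zero, hr0]
    obtain ⟨s, rfl⟩ := hXq
    by_cases hs0 : s = 0
    · simp [hs0]
    refine B_orth ν hν n J κ hmom s ?_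
    rw [← natDegree_lt_iff_degree_lt hs0]
    rw [natDegree_mul (mul_ne_zero X_ne_zero (B_ne_zero ν n)) hs0, natDegree_mul X_ne_zero (B_ne_zero ν n),
      natDegree_X, B_natDegree ν hν] at hr
    omega
  let N : Finset ℝ := insert 0 S
  have hNcard : N.card = n + 1 := by rw [Finset.card_insert_of_notMem h0S, hcard]
  have hinj : Set.InjOn (id : ℝ → ℝ) N := fun _ _ _ _ h => h
  have hbdeg : ∀ i ∈ N, (Lagrange.basis N id i).natDegree = n := by
    intro i hi
    rw [Lagrange.natDegree_basis hinj hi, hNcard]; rfl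
  have hJb : ∀ i ∈ N, 0 ≤ J (Lagrange.basis N id i) := by
    intro i hi
    have hk := kill (Lagrange.basis N id i ^ 2 - Lagrange.basis N id i) (by
        refine (natDegree_sub_le _ _).trans (max_le ?_ ?_)
        · refine natDegree_pow_le.trans ?_
          rw [hbdeg i hi]
        · rw [hbdeg i hi]; omega)
    have hval : ∀ x ∈ N, eval x (Lagrange.basis N id i ^ 2 - Lagrange.basis N id i) = 0 := by
      intro x hx
      by_cases hxi : x = i
      · subst hxi
        have := Lagrange.eval_basis_self hinj hi
        simp only [id] at this
        rw [eval_sub, eval_pow]; rw [show Lagrange.basis N id x = Lagrange.basis N id x from rfl]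
        simp [this]
      · have := Lagrange.eval_basis_of_ne (v := (id : ℝ → ℝ)) (Ne.symm hxi) hx
        simp only [id] at this
        rw [eval_sub, eval_pow]
        simp [this]
    have hk' := hk (hval 0 (Finset.mem_insert_self _ _)) (fun s hs => hval s (Finset.mem_insert_of_mem hs))
    rw [map_sub, sub_eq_zero] at hk'
    rw [← hk']
    exact hpos _ fun y _ => by rw [eval_pow]; exact sq_nonneg _
  -- interpolation
  let R := Lagrange.interpolate N id (fun i => p.eval i)
  have hRe : ∀ x ∈ N, R.eval x = p.eval x := by
    intro x hx
    exact Lagrange.eval_interpolate_at_node (fun i => p.eval i) hinj hx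
  have hRdeg : R.natDegree ≤ n := by
    have h := Lagrange.degree_interpolate_le (fun i => p.eval i) hinj
    rw [hNcard] at h
    exact natDegree_le_of_degree_le h
  have h1 := kill (p - R) ((natDegree_sub_le _ _).trans (max_le hp (by omega)))
    (by rw [eval_sub, hRe 0 (Finset.mem_insert_self _ _), sub_self])
    (fun s hs => by rw [eval_sub, hRe s (Finset.mem_insert_of_mem hs), sub_self])
  rw [map_sub, sub_eq_zero] at h1
  have h2 : J R = ∑ i ∈ N, p.eval i * J (Lagrange.basis N id i) := by
    simp only [R, Lagrange.interpolate_apply, map_sum]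
    refine Finset.sum_congr rfl fun i _ => ?_
    rw [← smul_eq_C_mul, map_smul, smul_eq_mul]
  have h3 : Lagrange.basis N id 0 = Apoly ν n := by
    refine Polynomial.eq_of_degrees_lt_of_eval_index_eq N hinj ?_ ?_ ?_
    · refine degree_le_natDegree.trans_lt ?_
      rw [hbdeg 0 (Finset.mem_insert_self _ _), hNcard]; exact_mod_cast Nat.lt_succ_self n
    · refine degree_le_natDegree.trans_lt ?_
      rw [B_natDegree ν hν, hNcard]; exact_mod_cast Nat.lt_succ_self n
    · intro i hi
      rcases Finset.mem_insert.mp hi with rfl | hi'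
      · have := Lagrange.eval_basis_self hinj hi
        simp only [id] at this ⊢
        rw [B_eval_zero]; exact this
      · have hne : (0:ℝ) ≠ i := fun h => h0S (h ▸ hi')
        have := Lagrange.eval_basis_of_ne (v := (id : ℝ → ℝ)) hne hi
        rw [this]; exact ((hS i hi').2.2).symm
  rw [h1, h2, Finset.sum_insert h0S, h3, mul_comm]
  refine le_add_of_nonneg_right (Finset.sum_nonneg fun i hi => ?_)
  exact mul_nonneg (hp0 i ⟨(hS i hi).1.le, (hS i hi).2.1.le⟩) (hJb i (Finset.mem_insert_of_mem hi))


lemma C_beta (α β : ℝ) (hα : 0 < α) (hβ : 0 < β) :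
    IntegrableOn (fun x : ℝ => x ^ (α - 1) * (1 - x) ^ (β - 1)) (Ioo 0 1) ∧
    ∫ x in Ioo (0:ℝ) 1, x ^ (α - 1) * (1 - x) ^ (β - 1) =
      Real.Gamma α * Real.Gamma β / Real.Gamma (α + β) := by
  have hc := Complex.betaIntegral_convergent (u := α) (v := β) (by simpa) (by simpa)
  rw [intervalIntegrable_iff_integrableOn_Ioo_of_le (by simp)] at hc
  have heq : ∀ x ∈ Ioo (0:ℝ) 1, ((x : ℂ) ^ ((α : ℂ) - 1) * (1 - (x:ℂ)) ^ ((β:ℂ) - 1)).re =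
      x ^ (α - 1) * (1 - x) ^ (β - 1) := by
    intro x hx
    norm_cast
    rw [← Complex.ofReal_cpow (by linarith [hx.1]), ← Complex.ofReal_cpow (by linarith [hx.2]),
      ← Complex.ofReal_mul, Complex.ofReal_re]
  have hI : IntegrableOn (fun x : ℝ => x ^ (α - 1) * (1 - x) ^ (β - 1)) (Ioo 0 1) := by
    refine (hc.re).congr ?_
    filter_upwards [ae_restrict_mem measurableSet_Ioo] with x hx
    exact heq x hx
  refine ⟨hI, ?_⟩
  have := ProbabilityTheory.beta_eq_betaIntegralReal α β hα hβ
  rw [ProbabilityTheory.beta] at this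
  rw [this, Complex.betaIntegral, intervalIntegral.integral_of_le (by norm_num),
    integral_Ioc_eq_integral_Ioo, ← RCLike.re_to_complex, ← integral_re hc]
  exact setIntegral_congr_fun measurableSet_Ioo fun x hx => (heq x hx).symm

lemma C_half (s : ℝ) (hs : -1 < s) :
    IntegrableOn (fun θ : ℝ => Real.sin (θ / 2) ^ s) (Ioo 0 Real.pi) ∧
    ∫ θ in Ioo (0:ℝ) Real.pi, Real.sin (θ / 2) ^ s =
      Real.Gamma ((s + 1) / 2) * Real.Gamma (1 / 2) / Real.Gamma (s / 2 + 1) := by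
  obtain ⟨hI, hv⟩ := C_beta ((s + 1) / 2) (1 / 2) (by linarith) (by norm_num)
  have himg : (fun θ : ℝ => Real.sin (θ / 2) ^ 2) '' Ioo 0 Real.pi = Ioo 0 1 := by
    ext y; constructor
    · rintro ⟨θ, hθ, rfl⟩
      have h1 : 0 < Real.sin (θ / 2) := Real.sin_pos_of_pos_of_lt_pi (by linarith [hθ.1]) (by linarith [hθ.1, hθ.2])
      have h2 : 0 < Real.cos (θ / 2) := Real.cos_pos_of_mem_Ioo ⟨by linarith [hθ.1, Real.pi_pos], by linarith [hθ.2]⟩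
      have h3 := Real.sin_sq_add_cos_sq (θ / 2)
      exact ⟨by positivity, by simp only []; nlinarith⟩
    · intro hy
      have h1 : 0 < √y := Real.sqrt_pos.mpr hy.1
      have h2 : √y < 1 := by rw [Real.sqrt_lt' one_pos]; simpa using hy.2
      refine ⟨2 * Real.arcsin √y, ⟨by have := Real.arcsin_pos.mpr h1; linarith, ?_⟩, ?_⟩
      · have := Real.arcsin_lt_pi_div_two.mpr h2; linarith
      · simp only [mul_div_cancel_left₀ _ (two_ne_zero' ℝ)]
        rw [Real.sin_arcsin (by linarith) h2.le, Real.sq_sqrt hy.1.le]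
  have hder : ∀ θ ∈ Ioo (0:ℝ) Real.pi, HasDerivWithinAt (fun θ : ℝ => Real.sin (θ / 2) ^ 2)
      (Real.sin (θ / 2) * Real.cos (θ / 2)) (Ioo 0 Real.pi) θ := by
    intro θ _
    have h := (((hasDerivAt_id θ).div_const 2).sin).pow 2
    refine (h.congr_deriv ?_).hasDerivWithinAt
    simp; ring
  have hpos : ∀ θ ∈ Ioo (0:ℝ) Real.pi, 0 < Real.sin (θ / 2) := fun θ hθ =>
    Real.sin_pos_of_pos_of_lt_pi (by linarith [hθ.1]) (by linarith [hθ.1, hθ.2])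
  have hposc : ∀ θ ∈ Ioo (0:ℝ) Real.pi, 0 < Real.cos (θ / 2) := fun θ hθ =>
    Real.cos_pos_of_mem_Ioo ⟨by linarith [hθ.1, Real.pi_pos], by linarith [hθ.2]⟩
  have hinj : InjOn (fun θ : ℝ => Real.sin (θ / 2) ^ 2) (Ioo 0 Real.pi) := by
    intro a ha b hb hab
    have h1 : Real.sin (a / 2) = Real.sin (b / 2) := by
      have := hab
      simp only [] at this
      exact (pow_left_inj₀ (hpos a ha).le (hpos b hb).le two_ne_zero).mp this
    have := Real.injOn_sin ⟨by linarith [ha.1, Real.pi_pos], by linarith [ha.2]⟩ ⟨by linarith [hb.1, Real.pi_pos], by linarith [hb.2]⟩ h1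
    linarith
  have hfun : ∀ θ ∈ Ioo (0:ℝ) Real.pi, |Real.sin (θ / 2) * Real.cos (θ / 2)| •
      ((Real.sin (θ / 2) ^ 2) ^ ((s + 1) / 2 - 1) * (1 - Real.sin (θ / 2) ^ 2) ^ ((1:ℝ) / 2 - 1)) =
      Real.sin (θ / 2) ^ s := by
    intro θ hθ
    have h1 := hpos θ hθ
    have h2 := hposc θ hθ
    have h3 : 1 - Real.sin (θ / 2) ^ 2 = Real.cos (θ / 2) ^ 2 := by
      have := Real.sin_sq_add_cos_sq (θ / 2); linarith
    rw [h3, abs_of_pos (by positivity), smul_eq_mul]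
    generalize Real.sin (θ / 2) = a at *
    generalize Real.cos (θ / 2) = b at *
    rw [← Real.rpow_natCast, ← Real.rpow_mul h1.le, ← Real.rpow_natCast b, ← Real.rpow_mul h2.le]
    have e1 : ((2:ℕ):ℝ) * ((s + 1) / 2 - 1) = s - 1 := by push_cast; ring
    have e2 : ((2:ℕ):ℝ) * ((1:ℝ) / 2 - 1) = -1 := by push_cast; ring
    rw [e1, e2, Real.rpow_neg_one, Real.rpow_sub_one h1.ne']
    field_simp
  rw [← himg] at hI hv
  rw [integrableOn_image_iff_integrableOn_abs_deriv_smul measurableSet_Ioo hder hinj] at hI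
  rw [integral_image_eq_integral_abs_deriv_smul measurableSet_Ioo hder hinj] at hv
  constructor
  · exact hI.congr_fun hfun measurableSet_Ioo
  · rw [← setIntegral_congr_fun measurableSet_Ioo hfun, hv]
    congr 2; ring

lemma C_comp_abs {f : ℝ → ℝ} (hf : IntegrableOn f (Ioi 0)) : Integrable (fun x => f |x|) := by
  have hf' : IntegrableOn (fun x => f |x|) (Ioi 0) :=
    hf.congr_fun (fun x hx => by simp only [abs_of_pos (show 0 < x from hx)]) measurableSet_Ioi
  have int_Iic : IntegrableOn (fun x ↦ f |x|) (Iic 0) := by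
    rw [← Measure.map_neg_eq_self (volume : Measure ℝ)]
    let m : MeasurableEmbedding fun x : ℝ => -x := (Homeomorph.neg ℝ).measurableEmbedding
    rw [m.integrableOn_map_iff]
    simp_rw [Function.comp_def, abs_neg, neg_preimage, neg_Iic, neg_zero]
    exact Iff.mpr integrableOn_Ici_iff_integrableOn_Ioi hf'
  rw [← integrableOn_univ, ← Iic_union_Ioi (a := (0:ℝ))]
  exact int_Iic.union hf'

lemma C_full (s : ℝ) (hs : -1 < s) :
    IntegrableOn (fun θ : ℝ => |Real.sin (θ / 2)| ^ s) (Ioo (-Real.pi) Real.pi) ∧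
    ∫ θ in Ioo (-Real.pi) Real.pi, |Real.sin (θ / 2)| ^ s =
      2 * (Real.Gamma ((s + 1) / 2) * Real.Gamma (1 / 2) / Real.Gamma (s / 2 + 1)) := by
  obtain ⟨hI, hv⟩ := C_half s hs
  let f : ℝ → ℝ := (Iio Real.pi).indicator (fun θ => Real.sin (θ / 2) ^ s)
  have hf : (fun x => f |x|) = (Ioo (-Real.pi) Real.pi).indicator (fun θ : ℝ => |Real.sin (θ / 2)| ^ s) := by
    ext x
    by_cases hx : |x| < Real.pi
    · have hx' : x ∈ Ioo (-Real.pi) Real.pi := abs_lt.mp hx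
      rw [indicator_of_mem hx']
      simp only [f]
      rw [indicator_of_mem (by exact hx)]
      congr 1
      rcases le_total 0 x with h | h
      · rw [abs_of_nonneg h, abs_of_nonneg (Real.sin_nonneg_of_nonneg_of_le_pi (by linarith) (by linarith [hx'.2, Real.pi_pos]))]
      · rw [abs_of_nonpos h, neg_div, Real.sin_neg, abs_of_nonpos (Real.sin_nonpos_of_nonpos_of_neg_pi_le (by linarith) (by linarith [hx'.1, Real.pi_pos]))]
    · have hx' : x ∉ Ioo (-Real.pi) Real.pi := fun h => hx (abs_lt.mpr h)
      rw [indicator_of_notMem hx']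
      simp only [f]
      rw [indicator_of_notMem (by exact hx)]
  have hfI : IntegrableOn f (Ioi 0) := by
    simp only [f]
    rw [IntegrableOn, integrable_indicator_iff measurableSet_Iio, IntegrableOn, Measure.restrict_restrict measurableSet_Iio]
    rw [inter_comm, Ioi_inter_Iio]; exact hI
  constructor
  · rw [← integrable_indicator_iff measurableSet_Ioo, ← hf]
    exact C_comp_abs hfI
  · rw [← integral_indicator measurableSet_Ioo, ← hf, integral_comp_abs]
    congr 1
    simp only [f]
    rw [setIntegral_indicator measurableSet_Iio, Ioi_inter_Iio, hv]

noncomputable def CW (ν : ℝ) (θ : ℝ) : ℝ := |2 * Real.sin (θ / 2)| ^ (2 * ν + 1)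

lemma C_CW_nonneg (ν θ : ℝ) : 0 ≤ CW ν θ := by unfold CW; positivity

lemma C_CW_eq (ν θ : ℝ) : CW ν θ = 2 ^ (2 * ν + 1) * |Real.sin (θ / 2)| ^ (2 * ν + 1) := by
  unfold CW
  rw [abs_mul, Real.mul_rpow (by positivity) (by positivity), abs_of_pos (by norm_num : (0:ℝ) < 2)]

lemma C_CW_int (ν : ℝ) (hν : -1 < ν) : IntegrableOn (CW ν) (Ioo (-Real.pi) Real.pi) := by
  have := ((C_full (2 * ν + 1) (by linarith)).1).const_mul (2 ^ (2 * ν + 1))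
  refine this.congr ?_
  filter_upwards with θ
  exact (C_CW_eq ν θ).symm

lemma C_int_cont (ν : ℝ) (hν : -1 < ν) (g : ℝ → ℝ) (hg : Continuous g) :
    IntegrableOn (fun θ => g θ * CW ν θ) (Ioo (-Real.pi) Real.pi) := by
  obtain ⟨C, hC⟩ := (isCompact_Icc (a := -Real.pi) (b := Real.pi)).exists_bound_of_continuousOn hg.continuousOn
  refine Integrable.bdd_mul (c := C) (C_CW_int ν hν) hg.aestronglyMeasurable ?_
  filter_upwards [ae_restrict_mem measurableSet_Ioo] with x hx
  exact hC x (Ioo_subset_Icc_self hx)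

noncomputable def CJ (ν : ℝ) (hν : -1 < ν) : ℝ[X] →ₗ[ℝ] ℝ where
  toFun p := ∫ θ in Ioo (-Real.pi) Real.pi, p.eval (Real.sin (θ / 2) ^ 2) * CW ν θ
  map_add' p q := by
    rw [← integral_add]
    · congr 1; ext θ; rw [eval_add]; ring
    · exact C_int_cont ν hν _ (by fun_prop)
    · exact C_int_cont ν hν _ (by fun_prop)
  map_smul' c p := by
    simp only [eval_smul, smul_eq_mul, RingHom.id_apply]
    rw [← integral_const_mul]
    congr 1; ext θ; ring

lemma C_J_apply (ν : ℝ) (hν : -1 < ν) (p : ℝ[X]) :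
    CJ ν hν p = ∫ θ in Ioo (-Real.pi) Real.pi, p.eval (Real.sin (θ / 2) ^ 2) * CW ν θ := rfl

noncomputable def Ckap (ν : ℝ) : ℝ := 4 ^ (ν + 1) * Real.Gamma (1 / 2)

lemma C_mom (ν : ℝ) (hν : -1 < ν) (k : ℕ) : CJ ν hν (X ^ k) = Ckap ν * Amom ν k := by
  rw [C_J_apply]
  have h := (C_full (2 * ν + 1 + 2 * k) (by have : (0:ℝ) ≤ k := k.cast_nonneg
                                            linarith)).2
  have hfun : ∀ᵐ θ : ℝ, (X ^ k : ℝ[X]).eval (Real.sin (θ / 2) ^ 2) * CW ν θ =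
      2 ^ (2 * ν + 1) * |Real.sin (θ / 2)| ^ (2 * ν + 1 + 2 * k) := by
    have hz : ∀ᵐ θ : ℝ, Real.sin (θ / 2) ≠ 0 := by
      have : {θ : ℝ | Real.sin (θ / 2) = 0} ⊆ range (fun n : ℤ => 2 * (n * Real.pi)) := by
        intro θ hθ
        obtain ⟨n, hn⟩ := Real.sin_eq_zero_iff.mp hθ
        exact ⟨n, by simp only []; linarith⟩
      rw [ae_iff]
      simp only [ne_eq, not_not]
      exact ((countable_range _).mono this).measure_zero _
    filter_upwards [hz] with θ hθ
    have hp : 0 < |Real.sin (θ / 2)| := abs_pos.mpr hθ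
    rw [C_CW_eq, eval_pow, eval_X, ← sq_abs, Real.rpow_add hp (2 * ν + 1), ← pow_mul]
    have : |Real.sin (θ / 2)| ^ (2 * (k:ℝ)) = |Real.sin (θ / 2)| ^ (2 * k) := by
      rw [← Real.rpow_natCast]; push_cast; rfl
    rw [this]; ring
  rw [integral_congr_ae (ae_restrict_of_ae hfun), integral_const_mul, h, Amom, Ckap]
  have e1 : (2 * ν + 1 + 2 * (k:ℝ) + 1) / 2 = ν + 1 + k := by ring
  have e2 : (2 * ν + 1 + 2 * (k:ℝ)) / 2 + 1 = ν + 3 / 2 + k := by ring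
  rw [e1, e2]
  have e3 : (4:ℝ) ^ (ν + 1) = 2 ^ (2 * ν + 1) * 2 := by
    rw [show (4:ℝ) = 2 ^ (2:ℝ) by norm_num, ← Real.rpow_mul (by norm_num), ← Real.rpow_add_one (by norm_num)]
    congr 1; ring
  rw [e3]; ring

lemma C_strict (ν : ℝ) (hν : -1 < ν) (p : ℝ[X]) (hp : p ≠ 0) (h : ∀ y ∈ Icc (0:ℝ) 1, 0 ≤ p.eval y) :
    0 < CJ ν hν p := by
  rw [C_J_apply]
  have hsq : ∀ θ : ℝ, Real.sin (θ / 2) ^ 2 ∈ Icc (0:ℝ) 1 := fun θ => ⟨by positivity, Real.sin_sq_le_one _⟩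
  rw [setIntegral_pos_iff_support_of_nonneg_ae]
  · have hS : ({θ : ℝ | p.eval (Real.sin (θ / 2) ^ 2) = 0 ∨ Real.sin (θ/2) = 0} ∩ Ioo 0 Real.pi).Finite := by
      have hfin : ((p * X).roots.toFinset : Set ℝ).Finite := Finset.finite_toSet _
      refine Set.Finite.of_finite_image (f := fun θ : ℝ => Real.sin (θ / 2) ^ 2) (hfin.subset ?_) ?_
      · rintro y ⟨θ, ⟨h1, h2⟩, rfl⟩
        simp only [Finset.mem_coe, Multiset.mem_toFinset]
        rw [mem_roots (mul_ne_zero hp X_ne_zero), IsRoot, eval_mul, eval_X]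
        rcases h1 with h1 | h1
        · rw [h1, zero_mul]
        · rw [h1]; simp
      · intro a ha b hb hab
        have ha := ha.2
        have hb := hb.2
        have hpos : ∀ θ ∈ Ioo (0:ℝ) Real.pi, 0 < Real.sin (θ / 2) := fun θ hθ =>
          Real.sin_pos_of_pos_of_lt_pi (by linarith [hθ.1]) (by linarith [hθ.1, hθ.2])
        have h1 : Real.sin (a / 2) = Real.sin (b / 2) :=
          (pow_left_inj₀ (hpos a ha).le (hpos b hb).le two_ne_zero).mp hab
        have := Real.injOn_sin ⟨by linarith [ha.1, Real.pi_pos], by linarith [ha.2]⟩ ⟨by linarith [hb.1, Real.pi_pos], by linarith [hb.2]⟩ h1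
        linarith
    have h0 : volume (Ioo 0 Real.pi \ ({θ : ℝ | p.eval (Real.sin (θ / 2) ^ 2) = 0 ∨ Real.sin (θ/2) = 0} ∩ Ioo 0 Real.pi)) > 0 := by
      rw [measure_sdiff_null (hS.measure_zero _)]
      simp [Real.pi_pos]
    refine lt_of_lt_of_le h0 (measure_mono ?_)
    rintro θ ⟨h1, h2⟩
    refine ⟨?_, ⟨by linarith [h1.1, Real.pi_pos], h1.2⟩⟩
    have h3 : ¬ (p.eval (Real.sin (θ / 2) ^ 2) = 0 ∨ Real.sin (θ/2) = 0) := fun h => h2 ⟨h, h1⟩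
    push Not at h3
    rw [Function.mem_support]
    refine mul_ne_zero h3.1 ?_
    rw [C_CW_eq]
    have := abs_pos.mpr h3.2
    positivity
  · filter_upwards with θ
    exact mul_nonneg (h _ (hsq θ)) (C_CW_nonneg ν θ)
  · exact C_int_cont ν hν _ (by fun_prop)

lemma C_pos (ν : ℝ) (hν : -1 < ν) (p : ℝ[X]) (h : ∀ y ∈ Icc (0:ℝ) 1, 0 ≤ p.eval y) :
    0 ≤ CJ ν hν p := by
  rw [C_J_apply]
  refine integral_nonneg fun θ => mul_nonneg (h _ ⟨by positivity, Real.sin_sq_le_one _⟩) (C_CW_nonneg ν θ)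

lemma C_gratio (s : ℝ) (hs : 0 < s) :
    Tendsto (fun n : ℕ => Real.Gamma (s + n) / ((n:ℝ) ^ (s - 1) * n.factorial)) atTop (𝓝 1) := by
  have h1 := Real.GammaSeq_tendsto_Gamma s
  have hG : Real.Gamma s ≠ 0 := (Real.Gamma_pos_of_pos hs).ne'
  have h2 : Tendsto (fun n : ℕ => (n:ℝ) / (n + s)) atTop (𝓝 1) := tendsto_natCast_div_add_atTop s
  have h3 := ((tendsto_const_nhds (x := Real.Gamma s)).div h1 hG).mul h2
  rw [div_self hG, one_mul] at h3
  refine h3.congr' ?_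
  filter_upwards [eventually_gt_atTop 0] with n hn
  have hn' : (0:ℝ) < n := by exact_mod_cast hn
  have e := A_gamma_add s hs (n + 1)
  have e2 : Real.Gamma (s + (n + 1 : ℕ)) = (s + n) * Real.Gamma (s + n) := by
    rw [← Real.Gamma_add_one (by positivity)]; congr 1; push_cast; ring
  rw [e2] at e
  have e3 : (ascPochhammer ℝ (n + 1)).eval s = ∏ j ∈ Finset.range (n + 1), (s + j) := by
    generalize n + 1 = m
    induction m with
    | zero => simp
    | succ m ih => rw [ascPochhammer_succ_eval, ih, Finset.prod_range_succ]
  simp only [Pi.div_apply]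
  rw [Real.GammaSeq, ← e3, Real.rpow_sub_one hn'.ne']
  have hA : (ascPochhammer ℝ (n + 1)).eval s ≠ 0 := by
    rw [e3]; exact (Finset.prod_pos fun j _ => by positivity).ne'
  have hf : (n.factorial : ℝ) ≠ 0 := by positivity
  have hp : (n:ℝ) ^ s ≠ 0 := by positivity
  have hsn : s + n ≠ 0 := by positivity
  generalize Real.Gamma (s + n) = g at *
  generalize (ascPochhammer ℝ (n + 1)).eval s = A at *
  generalize (n:ℝ) ^ s = P at *
  have : (n:ℝ) + s ≠ 0 := by positivity
  field_simp
  linear_combination -e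

lemma C_lambda (ν : ℝ) (hν : -1 < ν) :
    Tendsto (fun n : ℕ => CJ ν hν (Apoly ν n) * (n:ℝ) ^ (2 * ν + 2)) atTop
      (𝓝 (4 ^ (ν + 1) * (Real.Gamma (ν + 1) * Real.Gamma (ν + 2)))) := by
  have h := ((C_gratio (1 / 2) (by norm_num)).mul (C_gratio 1 (by norm_num))).div
    ((C_gratio (ν + 3 / 2) (by linarith)).mul (C_gratio (ν + 2) (by linarith))) (by norm_num)
  have h2 := h.const_mul (4 ^ (ν + 1) * (Real.Gamma (ν + 1) * Real.Gamma (ν + 2)))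
  simp only [mul_one, div_one] at h2
  refine h2.congr' ?_
  filter_upwards [eventually_gt_atTop 0] with n hn
  have hn' : (0:ℝ) < n := by exact_mod_cast hn
  rw [B_lambda ν n (CJ ν hν) (Ckap ν) (C_mom ν hν), A_eval_sum ν hν, Ckap]
  have e := A_gamma_add (1 / 2) (by norm_num) n
  have e2 : Real.Gamma (1 + n) = n.factorial := by rw [add_comm]; exact Real.Gamma_nat_eq_factorial n
  simp only [Pi.div_apply]
  rw [e, e2, show (n:ℝ) + ν + 3 / 2 = ν + 3 / 2 + n by ring, show (n:ℝ) + ν + 2 = ν + 2 + n by ring]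
  have g1 : Real.Gamma (ν + 3 / 2 + n) ≠ 0 := (Real.Gamma_pos_of_pos (by linarith)).ne'
  have g2 : Real.Gamma (ν + 2 + n) ≠ 0 := (Real.Gamma_pos_of_pos (by linarith)).ne'
  have p1 : (n:ℝ) ^ (2 * ν + 2) = (n:ℝ) ^ (ν + 3 / 2 - 1) * (n:ℝ) ^ (ν + 2 - 1) * ((n:ℝ) ^ ((1:ℝ) / 2 - 1))⁻¹ := by
    rw [← Real.rpow_neg hn'.le, ← Real.rpow_add hn', ← Real.rpow_add hn']; congr 1; ring
  rw [p1, sub_self, Real.rpow_zero]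
  have q1 : (n:ℝ) ^ (ν + 3 / 2 - 1) ≠ 0 := by positivity
  have q2 : (n:ℝ) ^ (ν + 2 - 1) ≠ 0 := by positivity
  have q3 : (n:ℝ) ^ ((1:ℝ) / 2 - 1) ≠ 0 := by positivity
  have hf : (n.factorial : ℝ) ≠ 0 := by positivity
  generalize Real.Gamma (ν + 3 / 2 + n) = a1 at *
  generalize Real.Gamma (ν + 2 + n) = a2 at *
  generalize (n:ℝ) ^ (ν + 3 / 2 - 1) = a3 at *
  generalize (n:ℝ) ^ (ν + 2 - 1) = a4 at *
  generalize (n:ℝ) ^ ((1:ℝ) / 2 - 1) = a5 at *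
  generalize (4:ℝ) ^ (ν + 1) = a6 at *
  generalize Real.Gamma (1 / 2) = a7 at *
  generalize Polynomial.eval (1 / 2) (ascPochhammer ℝ n) = a8 at *
  generalize Real.Gamma (ν + 1) = a9 at *
  generalize Real.Gamma (ν + 2) = a10 at *
  field_simp

noncomputable def CLam (ν τ : ℝ) : ℝ := Real.Gamma (ν + 1) * Real.Gamma (ν + 2) * (4 / τ) ^ (2 * ν + 2)

lemma C_lambda' (ν : ℝ) (hν : -1 < ν) (τ : ℝ) (hτ : 0 < τ) :
    Tendsto (fun n : ℕ => (2 * n / τ) ^ (2 * ν + 2) * CJ ν hν (Apoly ν n)) atTop (𝓝 (CLam ν τ)) := by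
  have h := (C_lambda ν hν).const_mul ((2 / τ) ^ (2 * ν + 2))
  have e : (2 / τ) ^ (2 * ν + 2) * ((4:ℝ) ^ (ν + 1) * (Real.Gamma (ν + 1) * Real.Gamma (ν + 2))) = CLam ν τ := by
    rw [CLam, show (4:ℝ) / τ = 2 / τ * 2 by ring, Real.mul_rpow (by positivity) (by norm_num),
      show (4:ℝ) = 2 ^ (2:ℝ) by norm_num, ← Real.rpow_mul (by norm_num), show 2 * (ν + 1) = 2 * ν + 2 by ring]
    ring
  rw [e] at h
  refine h.congr fun n => ?_
  rw [show 2 * (n:ℝ) / τ = 2 / τ * n by ring, Real.mul_rpow (by positivity) (by positivity)]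
  ring


lemma D_int (H : ℂ → ℂ) (hH : Differentiable ℂ H) (A y : ℝ)
    (hb : ∀ x : ℝ, ‖H (x + y * Complex.I)‖ ≤ A / (1 + x ^ 2)) :
    Integrable (fun x : ℝ => H (x + y * Complex.I)) := by
  have h1 : Integrable (fun x : ℝ => A * (1 + x ^ 2)⁻¹) := integrable_inv_one_add_sq.const_mul A
  refine h1.mono' ?_ ?_
  · have := hH.continuous
    exact (by fun_prop : Continuous fun x : ℝ => H (x + y * Complex.I)).aestronglyMeasurable
  · filter_upwards with x
    simpa [div_eq_mul_inv] using hb x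

lemma D_shift (H : ℂ → ℂ) (hH : Differentiable ℂ H) (Y A : ℝ)
    (hb : ∀ x y : ℝ, |y| ≤ |Y| → ‖H (x + y * Complex.I)‖ ≤ A / (1 + x ^ 2)) :
    ∫ x : ℝ, H x = ∫ x : ℝ, H (x + Y * Complex.I) := by
  have i0 : Integrable (fun x : ℝ => H x) := by
    have := D_int H hH A 0 (fun x => hb x 0 (by simp))
    simpa using this
  have iY := D_int H hH A Y (fun x => hb x Y le_rfl)
  have t0 := intervalIntegral_tendsto_integral i0 tendsto_neg_atTop_atBot tendsto_id
  have tY := intervalIntegral_tendsto_integral iY tendsto_neg_atTop_atBot tendsto_id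
  have hv : ∀ s : ℝ → ℝ, (∀ T, s T ^ 2 = T ^ 2) →
      Tendsto (fun T : ℝ => ∫ y : ℝ in (0:ℝ)..Y, H (s T + y * Complex.I)) atTop (𝓝 0) := by
    intro s hs
    have hz : Tendsto (fun T : ℝ => A / (1 + T ^ 2) * |Y - 0|) atTop (𝓝 0) := by
      have : Tendsto (fun T : ℝ => A / (1 + T ^ 2)) atTop (𝓝 0) := by
        refine tendsto_const_nhds.div_atTop ?_
        exact tendsto_atTop_add_const_left _ _ (tendsto_pow_atTop two_ne_zero)
      simpa using this.mul_const |Y - 0|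
    refine squeeze_zero_norm (fun T => ?_) hz
    refine intervalIntegral.norm_integral_le_of_norm_le_const fun y hy => ?_
    rw [← hs T]
    refine hb (s T) y ?_
    rcases le_total 0 Y with h | h
    · rw [uIoc_of_le h] at hy; rw [abs_of_pos hy.1, abs_of_nonneg h]; exact hy.2
    · rw [uIoc_of_ge h] at hy; rw [abs_of_nonpos hy.2, abs_of_nonpos h]; linarith [hy.1]
  have hv1 := hv id (fun T => rfl)
  have hv2 := hv (fun T => -T) (fun T => by ring)
  have hrect : ∀ T : ℝ, (∫ x : ℝ in -T..T, H x) - (∫ x : ℝ in -T..T, H (x + Y * Complex.I)) +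
      Complex.I • (∫ y : ℝ in (0:ℝ)..Y, H (T + y * Complex.I)) -
      Complex.I • (∫ y : ℝ in (0:ℝ)..Y, H ((-T : ℝ) + y * Complex.I)) = 0 := by
    intro T
    have := Complex.integral_boundary_rect_eq_zero_of_differentiableOn H ⟨-T, 0⟩ ⟨T, Y⟩ hH.differentiableOn
    simpa using this
  have hlim := ((t0.sub tY).add (hv1.const_smul Complex.I)).sub (hv2.const_smul Complex.I)
  have h0 := tendsto_nhds_unique (hlim.congr (fun T => by simpa using hrect T)) tendsto_const_nhds
  simp at h0
  exact sub_eq_zero.mp h0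

lemma D_vanish (G : ℂ → ℂ) (hG : Differentiable ℂ G) (A τ : ℝ) (hτ : 0 ≤ τ)
    (hb : ∀ x y : ℝ, ‖G (x + y * Complex.I)‖ ≤ A * Real.exp (τ * |y|) / (1 + x ^ 2))
    (a : ℝ) (ha : τ < |a|) : ∫ x : ℝ, G x * Complex.exp (-(a * x) * Complex.I) = 0 := by
  have hA : 0 ≤ A := by
    have := (norm_nonneg _).trans (hb 0 0)
    simpa using this
  set H : ℂ → ℂ := fun z => G z * Complex.exp (-(a * z) * Complex.I)
  have hH : Differentiable ℂ H := by fun_prop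
  have hn : ∀ x y : ℝ, ‖H (x + y * Complex.I)‖ ≤ A * Real.exp (τ * |y| + a * y) / (1 + x ^ 2) := by
    intro x y
    simp only [H]
    rw [norm_mul, Complex.norm_exp]
    have : (-((a:ℂ) * (x + y * Complex.I)) * Complex.I).re = a * y := by simp
    rw [this, Real.exp_add]
    calc _ ≤ (A * Real.exp (τ * |y|) / (1 + x ^ 2)) * Real.exp (a * y) := by gcongr; exact hb x y
      _ = _ := by ring
  have hs : ∀ Y : ℝ, ∫ x : ℝ, H x = ∫ x : ℝ, H (x + Y * Complex.I) := by
    intro Y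
    refine D_shift H hH Y (A * Real.exp (τ * |Y| + |a| * |Y|)) fun x y hy => (hn x y).trans ?_
    have : a * y ≤ |a| * |Y| := (le_abs_self _).trans (by rw [abs_mul]; gcongr)
    gcongr
  have hbd : ∀ Y : ℝ, ‖∫ x : ℝ, H x‖ ≤ A * Real.exp (τ * |Y| + a * Y) * Real.pi := by
    intro Y
    rw [hs Y]
    have h1 : Integrable (fun x : ℝ => (A * Real.exp (τ * |Y| + a * Y)) * (1 + x ^ 2)⁻¹) :=
      integrable_inv_one_add_sq.const_mul _
    have := norm_integral_le_of_norm_le h1 (f := fun x : ℝ => H (x + Y * Complex.I)) (by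
      filter_upwards with x
      simpa [div_eq_mul_inv] using hn x Y)
    rwa [integral_const_mul, integral_univ_inv_one_add_sq] at this
  have hbd2 : ∀ t : ℝ, 0 ≤ t → ‖∫ x : ℝ, H x‖ ≤ A * Real.exp ((τ - |a|) * t) * Real.pi := by
    intro t ht
    rcases le_total 0 a with h | h
    · have := hbd (-t)
      rw [abs_neg, abs_of_nonneg ht] at this
      rw [abs_of_nonneg h]
      convert this using 4; ring
    · have := hbd t
      rw [abs_of_nonneg ht] at this
      rw [abs_of_nonpos h]
      convert this using 4; ring
  have hlim : Tendsto (fun t : ℝ => A * Real.exp ((τ - |a|) * t) * Real.pi) atTop (𝓝 0) := by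
    have : Tendsto (fun t : ℝ => Real.exp ((τ - |a|) * t)) atTop (𝓝 0) := by
      refine Real.tendsto_exp_atBot.comp ?_
      exact tendsto_id.const_mul_atTop_of_neg (by linarith)
    simpa using (this.const_mul A).mul_const Real.pi
  have : ‖∫ x : ℝ, H x‖ ≤ 0 := ge_of_tendsto hlim (by
    filter_upwards [eventually_ge_atTop 0] with t ht using hbd2 t ht)
  exact norm_le_zero_iff.mp this

/-- periodization -/
noncomputable def DP (G : ℂ → ℂ) (L θ : ℝ) : ℂ := ∑' k : ℤ, G ((L * (θ + 2 * Real.pi * k) : ℝ))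

lemma D_poisson (G : ℂ → ℂ) (hG : Differentiable ℂ G) (A τ : ℝ) (hτ : 0 < τ)
    (hb : ∀ x y : ℝ, ‖G (x + y * Complex.I)‖ ≤ A * Real.exp (τ * |y|) / (1 + x ^ 2))
    (n : ℕ) (hn : 0 < n) : ∃ c : ℤ → ℂ, ∀ θ : ℝ,
      DP G (2 * n / τ) θ = ∑ k ∈ Finset.Icc (-(2 * n : ℤ)) (2 * n), c k * Complex.exp (k * θ * Complex.I) := by
  set L : ℝ := 2 * n / τ with hL
  have hn' : (0:ℝ) < n := by exact_mod_cast hn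
  have hLpos : 0 < L := by positivity
  have hA : 0 ≤ A := by
    have := (norm_nonneg _).trans (hb 0 0)
    simpa using this
  set D : ℝ := 2 * Real.pi * L with hD
  have hDpos : 0 < D := by positivity
  set f : ℝ → ℂ := fun t => G ((D * t : ℝ)) with hf
  have hfc : Continuous f := by
    have := hG.continuous
    simp only [hf]; fun_prop
  have hdec : f =O[cocompact ℝ] fun x : ℝ => |x| ^ (-(2:ℝ)) := by
    refine Asymptotics.IsBigO.of_bound (A / D ^ 2) ?_
    have : ∀ᶠ x : ℝ in cocompact ℝ, x ≠ 0 := by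
      have := (isCompact_singleton (x := (0:ℝ))).compl_mem_cocompact
      filter_upwards [this] with x hx using hx
    filter_upwards [this] with x hx
    have h := hb (D * x) 0
    simp only [hf]
    have e : |x| ^ (-(2:ℝ)) = (x ^ 2)⁻¹ := by
      rw [Real.rpow_neg (abs_nonneg _)]; norm_num
    rw [e, Real.norm_of_nonneg (by positivity)]
    have hx2 : 0 < x ^ 2 := by positivity
    calc ‖G ((D * x : ℝ))‖ ≤ A / (1 + (D * x) ^ 2) := by simpa using h
      _ ≤ A / ((D * x) ^ 2) := by gcongr; linarith
      _ = _ := by field_simp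
  have hF : ∀ k : ℤ, k ∉ Finset.Icc (-(2 * n : ℤ)) (2 * n) → FourierTransform.fourier f (k : ℝ) = 0 := by
    intro k hk
    rw [Real.fourier_eq']
    have hk' : (2 * n : ℤ) < |k| := by
      rw [Finset.mem_Icc, ← abs_le] at hk
      exact not_le.mp hk
    have hk'' : (2 * n : ℝ) < |(k:ℝ)| := by exact_mod_cast hk'
    have hv := D_vanish G hG A τ hτ.le hb (k / L) (by
      rw [abs_div, abs_of_pos hLpos, lt_div_iff₀ hLpos, hL]
      rw [show τ * (2 * n / τ) = 2 * n by field_simp]; exact hk'')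
    have hcv := Measure.integral_comp_mul_left (fun x : ℝ => G x * Complex.exp (-((k / L : ℝ) * x) * Complex.I)) D
    rw [hv, smul_zero] at hcv
    rw [← hcv]
    congr 1; ext t
    simp only [hf, smul_eq_mul]
    rw [mul_comm]
    congr 2
    have : (L:ℂ) ≠ 0 := by exact_mod_cast hLpos.ne'
    simp only [hD, RCLike.inner_apply, conj_trivial]
    push_cast
    field_simp
  have hsum : Summable fun k : ℤ => FourierTransform.fourier f (k:ℝ) :=
    summable_of_ne_finset_zero (s := Finset.Icc (-(2 * n : ℤ)) (2 * n)) hF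
  refine ⟨fun k => FourierTransform.fourier f (k:ℝ), fun θ => ?_⟩
  have hP := Real.tsum_eq_tsum_fourier_of_rpow_decay_of_summable hfc (by norm_num) hdec hsum (θ / (2 * Real.pi))
  have h1 : DP G L θ = ∑' k : ℤ, f (θ / (2 * Real.pi) + k) := by
    unfold DP
    congr 1; ext k
    simp only [hf, hD]
    congr 2
    have := Real.pi_pos
    field_simp
  rw [h1, hP, tsum_eq_sum (s := Finset.Icc (-(2 * n : ℤ)) (2 * n))]
  · refine Finset.sum_congr rfl fun k _ => ?_
    congr 1
    rw [fourier_coe_apply]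
    congr 1
    have : (Real.pi:ℂ) ≠ 0 := by exact_mod_cast Real.pi_pos.ne'
    push_cast
    field_simp
  · intro k hk
    rw [hF k hk, zero_mul]

lemma D_sin_surj (y : ℝ) (hy : y ∈ Icc (0:ℝ) 1) : ∃ θ : ℝ, |θ| ≤ Real.pi ∧ Real.sin (θ / 2) ^ 2 = y := by
  have h2 : √y ≤ 1 := by rw [Real.sqrt_le_one]; exact hy.2
  refine ⟨2 * Real.arcsin √y, ?_, ?_⟩
  · rw [abs_mul, abs_two]
    have := abs_le.mpr ⟨Real.neg_pi_div_two_le_arcsin √y, Real.arcsin_le_pi_div_two √y⟩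
    linarith
  · rw [mul_div_cancel_left₀ _ (two_ne_zero' ℝ), Real.sin_arcsin (by linarith [Real.sqrt_nonneg y]) h2, Real.sq_sqrt hy.1]

lemma D_radau (ν : ℝ) (hν : -1 < ν) (n : ℕ) (c : ℤ → ℂ) (P : ℝ → ℂ)
    (hP : ∀ θ, P θ = ∑ k ∈ Finset.Icc (-(2 * n : ℤ)) (2 * n), c k * Complex.exp (k * θ * Complex.I))
    (hpos : ∀ θ, 0 ≤ (P θ).re) (heven : ∀ θ, (P (-θ)).re = (P θ).re) (h0 : 1 ≤ (P 0).re) :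
    CJ ν hν (Apoly ν n) ≤ ∫ θ in Ioo (-Real.pi) Real.pi, (P θ).re * CW ν θ := by
  set p : ℝ[X] := ∑ k ∈ Finset.Icc (-(2 * n : ℤ)) (2 * n),
    Polynomial.C (c k).re * (Polynomial.Chebyshev.T ℝ k).comp (1 - 2 * X) with hp
  have hev : ∀ θ : ℝ, p.eval (Real.sin (θ / 2) ^ 2) = (P θ).re := by
    intro θ
    have h1 : (P θ).re = ((P θ).re + (P (-θ)).re) / 2 := by rw [heven]; ring
    rw [h1, hP, hP, Complex.re_sum, Complex.re_sum, ← Finset.sum_add_distrib, Finset.sum_div, hp, eval_finsetSum]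
    refine Finset.sum_congr rfl fun k _ => ?_
    have hc : (1 - 2 * Real.sin (θ / 2) ^ 2) = Real.cos θ := by
      have h := Real.cos_two_mul (θ / 2)
      rw [show 2 * (θ / 2) = θ by ring] at h
      have h2 := Real.sin_sq_add_cos_sq (θ / 2)
      linarith
    simp only [eval_mul, eval_C, eval_comp, eval_sub, eval_one, eval_ofNat, eval_X, hc, Polynomial.Chebyshev.T_real_cos]
    have e1 : ((k:ℂ) * (θ:ℂ) * Complex.I) = ((k * θ : ℝ) : ℂ) * Complex.I := by push_cast; ring
    have e2 : ((k:ℂ) * ((-θ:ℝ):ℂ) * Complex.I) = ((-(k * θ) : ℝ) : ℂ) * Complex.I := by push_cast; ring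
    rw [e1, e2, Complex.mul_re, Complex.mul_re, Complex.exp_ofReal_mul_I_re, Complex.exp_ofReal_mul_I_im,
      Complex.exp_ofReal_mul_I_re, Complex.exp_ofReal_mul_I_im, Real.cos_neg, Real.sin_neg]
    ring
  have hdeg : p.natDegree ≤ 2 * n := by
    refine natDegree_sum_le_of_forall_le _ _ fun k hk => ?_
    refine (natDegree_C_mul_le _ _).trans ?_
    rw [natDegree_comp, Polynomial.Chebyshev.natDegree_T]
    have h1 : (1 - 2 * X : ℝ[X]).natDegree ≤ 1 := by
      compute_degree
    have h2 : k.natAbs ≤ 2 * n := by rw [Finset.mem_Icc] at hk; omega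
    calc _ ≤ 2 * n * 1 := Nat.mul_le_mul h2 h1
      _ = _ := by ring
  have hnn : ∀ y ∈ Icc (0:ℝ) 1, 0 ≤ p.eval y := by
    intro y hy
    obtain ⟨θ, _, rfl⟩ := D_sin_surj y hy
    rw [hev]; exact hpos θ
  have hr := B_radau ν hν n (CJ ν hν) (Ckap ν) (C_mom ν hν) (C_pos ν hν) (C_strict ν hν) p hdeg hnn
  have hp0 : p.eval 0 = (P 0).re := by rw [← hev 0]; simp
  rw [hp0] at hr
  have hl : 0 ≤ CJ ν hν (Apoly ν n) := by
    rw [← B_sq ν hν n (CJ ν hν) (Ckap ν) (C_mom ν hν)]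
    exact C_pos ν hν _ fun y _ => by rw [eval_pow]; positivity
  calc _ ≤ CJ ν hν (Apoly ν n) * (P 0).re := le_mul_of_one_le_right hl h0
    _ ≤ _ := hr
    _ = _ := by rw [C_J_apply]; congr 1; ext θ; rw [hev]

noncomputable def DW (ν L : ℝ) : ℝ → ℝ :=
  (Ioo (-(Real.pi * L)) (Real.pi * L)).indicator (fun x => |2 * L * Real.sin (x / (2 * L))| ^ (2 * ν + 1))

lemma D_scale (ν L : ℝ) (hL : 0 < L) (g : ℝ → ℝ) :
    L ^ (2 * ν + 2) * ∫ θ in Ioo (-Real.pi) Real.pi, g θ * CW ν θ = ∫ x, g (x / L) * DW ν L x := by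
  rw [← integral_indicator measurableSet_Ioo]
  set h : ℝ → ℝ := (Ioo (-Real.pi) Real.pi).indicator (fun θ => g θ * CW ν θ) with hh
  have e : ∀ x, g (x / L) * DW ν L x = L ^ (2 * ν + 1) * h (x / L) := by
    intro x
    by_cases hx : x ∈ Ioo (-(Real.pi * L)) (Real.pi * L)
    · have hx' : x / L ∈ Ioo (-Real.pi) Real.pi := by
        constructor
        · rw [lt_div_iff₀ hL]; linarith [hx.1]
        · rw [div_lt_iff₀ hL]; exact hx.2
      rw [DW, indicator_of_mem hx, hh, indicator_of_mem hx', CW]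
      have : 2 * L * Real.sin (x / (2 * L)) = L * (2 * Real.sin (x / L / 2)) := by
        rw [div_div, mul_comm L 2]; ring
      rw [this, abs_mul, abs_of_pos hL, Real.mul_rpow hL.le (abs_nonneg _)]; ring
    · have hx' : x / L ∉ Ioo (-Real.pi) Real.pi := by
        intro h; apply hx
        constructor
        · have := h.1; rw [lt_div_iff₀ hL] at this; linarith
        · have := h.2; rwa [div_lt_iff₀ hL] at this
      rw [DW, indicator_of_notMem hx, hh, indicator_of_notMem hx']; ring
  simp_rw [e]
  rw [integral_const_mul, Measure.integral_comp_div, abs_of_pos hL, smul_eq_mul,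
    show 2 * ν + 2 = 2 * ν + 1 + 1 by ring, Real.rpow_add_one hL.ne']
  ring

lemma D_DW_nonneg (ν L x : ℝ) : 0 ≤ DW ν L x :=
  indicator_nonneg (fun _ _ => by positivity) _

lemma D_DW_meas (ν L : ℝ) : Measurable (DW ν L) := by
  refine Measurable.indicator ?_ measurableSet_Ioo
  have : Measurable (fun x : ℝ => |2 * L * Real.sin (x / (2 * L))|) := by fun_prop
  exact this.pow_const _

lemma D_DW_bound (ν L : ℝ) (hL : 0 < L) (x : ℝ) (hx0 : x ≠ 0) :
    DW ν L x ≤ max 1 ((2 / Real.pi) ^ (2 * ν + 1)) * |x| ^ (2 * ν + 1) := by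
  have hpi := Real.pi_pos
  by_cases hx : x ∈ Ioo (-(Real.pi * L)) (Real.pi * L)
  · rw [DW, indicator_of_mem hx]
    have hxa : 0 < |x| := abs_pos.mpr hx0
    have hxL : |x| < Real.pi * L := abs_lt.mpr hx
    have up : |2 * L * Real.sin (x / (2 * L))| ≤ |x| := by
      rw [abs_mul, abs_of_pos (by positivity : 0 < 2 * L)]
      have := Real.abs_sin_le_abs (x := x / (2 * L))
      rw [abs_div, abs_of_pos (by positivity : 0 < 2 * L), le_div_iff₀ (by positivity)] at this
      linarith
    have lo : 2 / Real.pi * |x| ≤ |2 * L * Real.sin (x / (2 * L))| := by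
      rw [abs_mul, abs_of_pos (by positivity : 0 < 2 * L)]
      have hh : |x / (2 * L)| ≤ Real.pi / 2 := by
        rw [abs_div, abs_of_pos (by positivity : 0 < 2 * L), div_le_iff₀ (by positivity)]; linarith
      have := Real.mul_abs_le_abs_sin hh
      calc 2 / Real.pi * |x| = 2 * L * (2 / Real.pi * |x / (2 * L)|) := by
            rw [abs_div, abs_of_pos (by positivity : 0 < 2 * L)]; field_simp
        _ ≤ _ := by gcongr
    rcases le_total 0 (2 * ν + 1) with h | h
    · calc _ ≤ |x| ^ (2 * ν + 1) := Real.rpow_le_rpow (abs_nonneg _) up h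
        _ = 1 * |x| ^ (2 * ν + 1) := by ring
        _ ≤ _ := by gcongr; exact le_max_left _ _
    · calc _ ≤ (2 / Real.pi * |x|) ^ (2 * ν + 1) := Real.rpow_le_rpow_of_nonpos (by positivity) lo h
        _ = (2 / Real.pi) ^ (2 * ν + 1) * |x| ^ (2 * ν + 1) := Real.mul_rpow (by positivity) (by positivity)
        _ ≤ _ := by gcongr; exact le_max_right _ _
  · rw [DW, indicator_of_notMem hx]; positivity

lemma D_sinlim (x : ℝ) (L : ℕ → ℝ) (hL : Tendsto L atTop atTop) :
    Tendsto (fun n => 2 * L n * Real.sin (x / (2 * L n))) atTop (𝓝 x) := by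
  have h1 : Tendsto (fun n => x / (2 * L n)) atTop (𝓝 0) :=
    tendsto_const_nhds.div_atTop (hL.const_mul_atTop two_pos)
  have h2 := ((Real.continuous_sinc.tendsto 0).comp h1).const_mul x
  rw [Real.sinc_zero, mul_one] at h2
  refine h2.congr' ?_
  filter_upwards [hL.eventually_gt_atTop 0] with n hn
  simp only [Function.comp]
  by_cases hx : x = 0
  · simp [hx]
  · rw [Real.sinc_of_ne_zero (by positivity)]; field_simp

lemma D_DW_tendsto (ν x : ℝ) (hx : x ≠ 0) (L : ℕ → ℝ) (hL : Tendsto L atTop atTop) :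
    Tendsto (fun n => DW ν (L n) x) atTop (𝓝 (|x| ^ (2 * ν + 1))) := by
  have h1 := ((D_sinlim x L hL).abs).rpow_const (p := 2 * ν + 1) (Or.inl (abs_pos.mpr hx).ne')
  refine h1.congr' ?_
  filter_upwards [(hL.const_mul_atTop Real.pi_pos).eventually_gt_atTop |x|] with n hn
  rw [DW, indicator_of_mem (show x ∈ Ioo _ _ from abs_lt.mp hn)]


lemma D_tail (G : ℂ → ℂ) (A : ℝ) (K : ℕ) (hK : 2 ≤ K)
    (hb : ∀ x : ℝ, x ≠ 0 → ‖G x‖ ≤ A / |x| ^ K) (hpos : ∀ x : ℝ, 0 ≤ (G x).re) :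
    ∃ Z : ℝ, ∀ L > 0, ∀ θ : ℝ, |θ| ≤ Real.pi →
      (G (L * θ : ℝ)).re ≤ (DP G L θ).re ∧ (DP G L θ).re ≤ (G (L * θ : ℝ)).re + Z / L ^ K := by
  have hpi := Real.pi_pos
  have hs : Summable fun k : ℤ => |1 / (k:ℝ) ^ K| := ((Real.summable_one_div_int_pow).mpr (by omega)).abs
  have hA : 0 ≤ A := by
    have := (norm_nonneg _).trans (hb 1 one_ne_zero); simpa using this
  refine ⟨∑' k : ℤ, A / Real.pi ^ K * |1 / (k:ℝ) ^ K|, fun L hL θ hθ => ?_⟩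
  have hk : ∀ k : ℤ, k ≠ 0 → ‖G ((L * (θ + 2 * Real.pi * k) : ℝ))‖ ≤ A / Real.pi ^ K * |1 / (k:ℝ) ^ K| / L ^ K := by
    intro k hk
    have h1 : (1:ℝ) ≤ |(k:ℝ)| := by exact_mod_cast Int.one_le_abs hk
    have h2 : Real.pi * |(k:ℝ)| ≤ |θ + 2 * Real.pi * k| := by
      have h3 : |2 * Real.pi * (k:ℝ)| ≤ |θ + 2 * Real.pi * k| + |θ| := by
        have := abs_sub (θ + 2 * Real.pi * k) θ
        simpa using this
      rw [abs_mul, abs_of_pos (by positivity : 0 < 2 * Real.pi)] at h3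
      nlinarith
    have h4 : 0 < |θ + 2 * Real.pi * k| := lt_of_lt_of_le (by positivity) h2
    have hne : L * (θ + 2 * Real.pi * k) ≠ 0 := mul_ne_zero hL.ne' (abs_pos.mp h4)
    refine (hb _ hne).trans ?_
    rw [abs_mul, abs_of_pos hL, mul_pow, abs_div, abs_one, abs_pow]
    calc A / (L ^ K * |θ + 2 * Real.pi * ↑k| ^ K) ≤ A / (L ^ K * (Real.pi * |(k:ℝ)|) ^ K) := by gcongr
      _ = _ := by rw [mul_pow]; field_simp
  have hsum : Summable fun k : ℤ => G ((L * (θ + 2 * Real.pi * k) : ℝ)) := by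
    refine Summable.of_norm_bounded_eventually ((hs.mul_left (A / Real.pi ^ K)).div_const (L ^ K)) ?_
    have : ∀ᶠ k : ℤ in cofinite, k ≠ 0 := (finite_singleton (0:ℤ)).compl_mem_cofinite
    filter_upwards [this] with k h using hk k h
  have hre : (DP G L θ).re = ∑' k : ℤ, (G ((L * (θ + 2 * Real.pi * k) : ℝ))).re := Complex.re_tsum hsum
  have hsre : Summable fun k : ℤ => (G ((L * (θ + 2 * Real.pi * k) : ℝ))).re := by
    exact (Complex.hasSum_re hsum.hasSum).summable
  have hsplit := hsre.tsum_eq_add_tsum_ite 0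
  have h0 : (G ((L * (θ + 2 * Real.pi * ((0:ℤ):ℝ)) : ℝ))).re = (G (L * θ : ℝ)).re := by simp
  rw [hre, hsplit, h0]
  constructor
  · have : 0 ≤ ∑' k : ℤ, if k = 0 then 0 else (G ((L * (θ + 2 * Real.pi * k) : ℝ))).re :=
      tsum_nonneg fun k => by split_ifs <;> [exact le_rfl; exact hpos _]
    linarith
  · gcongr
    rw [← tsum_div_const]
    have hterm : ∀ k : ℤ, (if k = 0 then 0 else (G ((L * (θ + 2 * Real.pi * k) : ℝ))).re) ≤
        A / Real.pi ^ K * |1 / (k:ℝ) ^ K| / L ^ K := by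
      intro k
      split_ifs with h
      · positivity
      · exact (Complex.re_le_norm _).trans (hk k h)
    have hs2 := (hs.mul_left (A / Real.pi ^ K)).div_const (L ^ K)
    refine Summable.tsum_le_tsum hterm ?_ hs2
    refine Summable.of_nonneg_of_le (fun k => ?_) hterm hs2
    split_ifs <;> [exact le_rfl; exact hpos _]

lemma D_lower (ν : ℝ) (hν : -1 < ν) (G : ℂ → ℂ) (hG : Differentiable ℂ G) (A τ : ℝ) (hτ : 0 < τ)
    (hb : ∀ x y : ℝ, ‖G (x + y * Complex.I)‖ ≤ A * Real.exp (τ * |y|) / (1 + x ^ 2))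
    (A' : ℝ) (K : ℕ) (hK : 2 ≤ K) (hKν : 2 * ν + 2 < K)
    (hb' : ∀ x : ℝ, x ≠ 0 → ‖G x‖ ≤ A' / |x| ^ K) (hpos : ∀ x : ℝ, 0 ≤ (G x).re)
    (heven : ∀ x : ℝ, G (-x : ℝ) = G x) (h0 : 1 ≤ (G 0).re)
    (hInt : Integrable (fun x : ℝ => (G x).re * |x| ^ (2 * ν + 1))) :
    CLam ν τ ≤ ∫ x : ℝ, (G x).re * |x| ^ (2 * ν + 1) := by
  have hpi := Real.pi_pos
  obtain ⟨Z, hZ⟩ := D_tail G A' K hK hb' hpos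
  set L : ℕ → ℝ := fun n => 2 * n / τ with hL
  have hLt : Tendsto L atTop atTop := by
    have := (tendsto_natCast_atTop_atTop (R := ℝ)).const_mul_atTop (by positivity : 0 < 2 / τ)
    refine this.congr fun n => ?_
    simp only [hL]; ring
  have hPpos : ∀ L θ : ℝ, 0 ≤ (DP G L θ).re := by
    intro L θ
    unfold DP
    by_cases hs : Summable fun k : ℤ => G ((L * (θ + 2 * Real.pi * k) : ℝ))
    · rw [Complex.re_tsum hs]; exact tsum_nonneg fun k => hpos _
    · rw [tsum_eq_zero_of_not_summable hs]; simp
  have hPeven : ∀ L θ : ℝ, DP G L (-θ) = DP G L θ := by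
    intro L θ
    unfold DP
    rw [← (Equiv.neg ℤ).tsum_eq]
    congr 1; ext k
    rw [← heven]
    congr 2
    simp; ring
  have hmain : ∀ᶠ n : ℕ in atTop, (L n) ^ (2 * ν + 2) * CJ ν hν (Apoly ν n) ≤
      (∫ x : ℝ, (G x).re * DW ν (L n) x) +
      (L n) ^ (2 * ν + 2) * (Z / (L n) ^ K * ∫ θ in Ioo (-Real.pi) Real.pi, CW ν θ) := by
    filter_upwards [eventually_gt_atTop 0] with n hn
    have hn' : (0:ℝ) < n := by exact_mod_cast hn
    have hLn : 0 < L n := by simp only [hL]; positivity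
    obtain ⟨c, hc⟩ := D_poisson G hG A τ hτ hb n hn
    have hr := D_radau ν hν n c (DP G (L n)) hc (hPpos _) (fun θ => by rw [hPeven]) (by
      have := (hZ (L n) hLn 0 (by simp [hpi.le])).1
      simp only [mul_zero, Complex.ofReal_zero] at this
      linarith)
    have hcont : Continuous fun θ : ℝ => (G (L n * θ : ℝ)).re := by
      have := hG.continuous
      fun_prop
    have i1 := C_int_cont ν hν _ hcont
    have i2 := (C_CW_int ν hν).const_mul (Z / (L n) ^ K)
    have h2 : ∫ θ in Ioo (-Real.pi) Real.pi, (DP G (L n) θ).re * CW ν θ ≤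
        ∫ θ in Ioo (-Real.pi) Real.pi, ((G (L n * θ : ℝ)).re * CW ν θ + Z / (L n) ^ K * CW ν θ) := by
      refine integral_mono_of_nonneg ?_ (i1.add i2) ?_
      · filter_upwards with θ
        exact mul_nonneg (hPpos _ _) (C_CW_nonneg ν θ)
      · filter_upwards [ae_restrict_mem measurableSet_Ioo] with θ hθ
        rw [← add_mul]
        exact mul_le_mul_of_nonneg_right (hZ (L n) hLn θ (abs_le.mpr ⟨hθ.1.le, hθ.2.le⟩)).2 (C_CW_nonneg ν θ)
    rw [integral_add i1 i2, integral_const_mul] at h2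
    have h3 := D_scale ν (L n) hLn (fun θ => (G (L n * θ : ℝ)).re)
    have h4 : ∀ x : ℝ, (L n) * (x / L n) = x := fun x => by field_simp
    simp only [h4] at h3
    rw [← h3, ← mul_add]
    gcongr
    exact hr.trans h2
  have hlim1 : Tendsto (fun n => ∫ x : ℝ, (G x).re * DW ν (L n) x) atTop
      (𝓝 (∫ x : ℝ, (G x).re * |x| ^ (2 * ν + 1))) := by
    have hae : ∀ᵐ x : ℝ, x ≠ 0 := by simp [ae_iff]
    refine tendsto_integral_filter_of_dominated_convergence
      (fun x => max 1 ((2 / Real.pi) ^ (2 * ν + 1)) * ((G x).re * |x| ^ (2 * ν + 1))) ?_ ?_ (hInt.const_mul _) ?_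
    · filter_upwards with n
      have := hG.continuous
      exact ((by fun_prop : Continuous fun x : ℝ => (G x).re).measurable.mul (D_DW_meas ν (L n))).aestronglyMeasurable
    · filter_upwards [hLt.eventually_gt_atTop 0] with n hn
      filter_upwards [hae] with x hx
      rw [Real.norm_of_nonneg (mul_nonneg (hpos x) (D_DW_nonneg _ _ _))]
      have := mul_le_mul_of_nonneg_left (D_DW_bound ν (L n) hn x hx) (hpos x)
      linarith
    · filter_upwards [hae] with x hx
      exact (D_DW_tendsto ν x hx L hLt).const_mul _
  have hlim2 : Tendsto (fun n => (L n) ^ (2 * ν + 2) * (Z / (L n) ^ K * ∫ θ in Ioo (-Real.pi) Real.pi, CW ν θ)) atTop (𝓝 0) := by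
    have h1 : Tendsto (fun n => (L n) ^ (-(K - (2 * ν + 2)))) atTop (𝓝 0) :=
      (tendsto_rpow_neg_atTop (by linarith : (0:ℝ) < K - (2 * ν + 2))).comp hLt
    have h2 := h1.mul_const (Z * ∫ θ in Ioo (-Real.pi) Real.pi, CW ν θ)
    rw [zero_mul] at h2
    refine h2.congr' ?_
    filter_upwards [hLt.eventually_gt_atTop 0] with n hn
    rw [neg_sub, Real.rpow_sub hn, Real.rpow_natCast]; ring
  have := le_of_tendsto_of_tendsto (C_lambda' ν hν τ hτ) (hlim1.add hlim2) hmain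
  simpa using this



lemma E_quad (Ψ : ℂ → ℂ) (hΨ : Differentiable ℂ Ψ) (C σ : ℝ) (N : ℕ) (hC : 0 ≤ C) (hσ : 0 ≤ σ)
    (hre : ∀ x : ℝ, 0 ≤ x → ‖Ψ x‖ ≤ C * (1 + x) ^ N) (hz : ∀ z, ‖Ψ z‖ ≤ C * Real.exp (σ * ‖z‖))
    (z : ℂ) (h1 : 0 ≤ z.re) (h2 : 0 ≤ z.im) :
    ‖Ψ z‖ ≤ C * (1 + ‖z‖) ^ N * Real.exp (σ * z.im) := by
  set f : ℂ → ℂ := fun z => Ψ z * Complex.exp (Complex.I * σ * z) / (1 + z) ^ N with hf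
  have hne : ∀ z : ℂ, 0 ≤ z.re → 1 ≤ ‖1 + z‖ := by
    intro z hz
    have := Complex.abs_re_le_norm (1 + z)
    simp only [Complex.add_re, Complex.one_re] at this
    rw [abs_of_nonneg (by linarith)] at this
    linarith
  have hn : ∀ z : ℂ, ‖f z‖ = ‖Ψ z‖ * Real.exp (-(σ * z.im)) / ‖1 + z‖ ^ N := by
    intro z
    simp only [hf]
    rw [norm_div, norm_mul, norm_pow, Complex.norm_exp]
    congr 3; simp
  have hle : ∀ z : ℂ, 0 ≤ z.re → ‖f z‖ ≤ ‖Ψ z‖ * Real.exp (-(σ * z.im)) := by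
    intro z hz
    rw [hn]
    exact div_le_self (by positivity) (one_le_pow₀ (hne z hz))
  have hfz : ‖f z‖ ≤ C := by
    refine PhragmenLindelof.quadrant_I (f := f) (C := C) ?_ ⟨1, by norm_num, σ, ?_⟩ ?_ ?_ h1 h2
    · apply DifferentiableOn.diffContOnCl
      rw [Complex.closure_reProdIm, closure_Ioi]
      intro w hw
      have hw' : 0 ≤ w.re := hw.1
      have : (1 + w) ^ N ≠ 0 := pow_ne_zero _ (by
        intro h; have := hne w hw'; rw [h] at this; norm_num at this)
      refine DifferentiableAt.differentiableWithinAt ?_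
      simp only [hf]
      fun_prop (disch := exact this)
    · refine Asymptotics.IsBigO.of_bound C ?_
      refine eventually_inf_principal.mpr (Eventually.of_forall fun w hw => ?_)
      have hw1 : 0 < w.re := hw.1
      have hw2 : 0 < w.im := hw.2
      rw [Real.rpow_one, Real.norm_of_nonneg (Real.exp_pos _).le]
      calc _ ≤ ‖Ψ w‖ * Real.exp (-(σ * w.im)) := hle w hw1.le
        _ ≤ ‖Ψ w‖ * 1 := by gcongr; rw [Real.exp_le_one_iff]; nlinarith
        _ ≤ _ := by rw [mul_one]; exact hz w
    · intro x hx
      rw [hn]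
      have e : ‖(1:ℂ) + x‖ = 1 + x := by
        rw [← Complex.ofReal_one, ← Complex.ofReal_add, Complex.norm_real, Real.norm_of_nonneg (by positivity)]
      rw [e, div_le_iff₀ (by positivity)]
      simpa using hre x hx
    · intro x hx
      refine (hle _ (by simp)).trans ?_
      have := hz (x * Complex.I)
      rw [norm_mul, Complex.norm_I, mul_one, Complex.norm_real, Real.norm_of_nonneg hx] at this
      calc _ ≤ C * Real.exp (σ * x) * Real.exp (-(σ * (x * Complex.I : ℂ).im)) := by gcongr
        _ = C := by
          rw [mul_assoc, ← Real.exp_add]; simp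
  rw [hn, div_le_iff₀ (by have := hne z h1; positivity), Real.exp_neg, ← div_eq_mul_inv, div_le_iff₀ (Real.exp_pos _)] at hfz
  refine hfz.trans ?_
  gcongr
  exact (norm_add_le _ _).trans (by simp)

lemma E_all (Ψ : ℂ → ℂ) (hΨ : Differentiable ℂ Ψ) (C σ : ℝ) (N : ℕ) (hC : 0 ≤ C) (hσ : 0 ≤ σ)
    (hre : ∀ x : ℝ, ‖Ψ x‖ ≤ C * (1 + |x|) ^ N) (hz : ∀ z, ‖Ψ z‖ ≤ C * Real.exp (σ * ‖z‖))
    (z : ℂ) : ‖Ψ z‖ ≤ C * (1 + ‖z‖) ^ N * Real.exp (σ * |z.im|) := by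
  have key : ∀ Ψ : ℂ → ℂ, Differentiable ℂ Ψ → (∀ x : ℝ, ‖Ψ x‖ ≤ C * (1 + |x|) ^ N) →
      (∀ z, ‖Ψ z‖ ≤ C * Real.exp (σ * ‖z‖)) → ∀ z : ℂ, 0 ≤ z.im →
      ‖Ψ z‖ ≤ C * (1 + ‖z‖) ^ N * Real.exp (σ * |z.im|) := by
    intro Ψ hΨ hre hz z him
    rw [abs_of_nonneg him]
    rcases le_total 0 z.re with h | h
    · exact E_quad Ψ hΨ C σ N hC hσ (fun x hx => by simpa [abs_of_nonneg hx] using hre x) hz z h him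
    · have := E_quad (fun w => starRingEnd ℂ (Ψ (-starRingEnd ℂ w))) ?_ C σ N hC hσ ?_ ?_ (-starRingEnd ℂ z)
        (by simpa using h) (by simpa using him)
      · simpa using this
      · intro w
        have h1 : DifferentiableAt ℂ (fun w => Ψ (-w)) (starRingEnd ℂ w) := by fun_prop
        have := h1.conj_conj
        simpa [Function.comp_def] using this
      · intro x hx
        have := hre (-x)
        rw [abs_neg, abs_of_nonneg hx] at this
        simpa using this
      · intro w
        have := hz (-starRingEnd ℂ w)
        simpa using this
  rcases le_total 0 z.im with h | h
  · exact key Ψ hΨ hre hz z h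
  · have := key (fun w => Ψ (-w)) (by fun_prop) (fun x => by simpa using hre (-x)) (fun w => by simpa using hz (-w)) (-z) (by simpa using h)
    simpa using this

lemma E_prim (ν : ℝ) (F : ℂ → ℂ) (hF : Differentiable ℂ F)
    (him : ∀ x : ℝ, (F x).im = 0) (hpos : ∀ x : ℝ, 0 ≤ (F x).re)
    (hInt : Integrable (fun x : ℝ => (F x).re * |x| ^ (2 * ν + 1)))
    (Ψ : ℂ → ℂ) (hΨ : ∀ z, HasDerivAt Ψ (F z) z) (h0 : Ψ 0 = 0) :
    ∃ C : ℝ, 0 ≤ C ∧ ∃ N : ℕ, ∀ x : ℝ, ‖Ψ x‖ ≤ C * (1 + |x|) ^ N := by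
  have hcont : Continuous fun x : ℝ => F x := by
    have := hF.continuous
    fun_prop
  have hnorm : ∀ x : ℝ, ‖F x‖ = (F x).re := by
    intro x
    have : F x = ((F x).re : ℂ) := by apply Complex.ext <;> simp [him]
    rw [this, Complex.norm_real, Complex.ofReal_re, Real.norm_of_nonneg (hpos x)]
  obtain ⟨C0, hC0⟩ := (isCompact_Icc (a := (-1:ℝ)) (b := 1)).exists_bound_of_continuousOn hcont.continuousOn
  have hC0p : 0 ≤ C0 := (norm_nonneg _).trans (hC0 0 (by simp))
  obtain ⟨N, hN⟩ := exists_nat_ge (max 1 (-(2 * ν + 1)))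
  have hN1 : 1 ≤ N := by exact_mod_cast (le_max_left _ _).trans hN
  have hN2 : -(2 * ν + 1) ≤ N := (le_max_right _ _).trans hN
  set I := ∫ x : ℝ, (F x).re * |x| ^ (2 * ν + 1) with hI
  have hIp : 0 ≤ I := integral_nonneg fun x => mul_nonneg (hpos x) (by positivity)
  refine ⟨C0 + I, by positivity, N, fun x => ?_⟩
  have hftc : ∫ t in (0:ℝ)..x, F t = Ψ x := by
    have := intervalIntegral.integral_eq_sub_of_hasDerivAt (a := 0) (b := x) (f := fun t : ℝ => Ψ t) (f' := fun t : ℝ => F t)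
      (fun t _ => (hΨ t).comp_ofReal) (hcont.intervalIntegrable _ _)
    rw [this]; simp [h0]
  have hx1 : (1 + |x|) ≤ (1 + |x|) ^ N := le_self_pow₀ (by linarith [abs_nonneg x]) (by omega)
  have hpt : ∀ t ∈ uIoc (0:ℝ) x, ‖F t‖ ≤ C0 + (1 + |x|) ^ N * ((F t).re * |t| ^ (2 * ν + 1)) := by
    intro t ht
    have htx : |t| ≤ |x| := by
      rcases le_total 0 x with h | h
      · rw [uIoc_of_le h] at ht; rw [abs_of_pos ht.1, abs_of_nonneg h]; exact ht.2
      · rw [uIoc_of_ge h] at ht; rw [abs_of_nonpos ht.2, abs_of_nonpos h]; linarith [ht.1]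
    have hFp := hpos t
    rcases le_total |t| 1 with h | h
    · refine (hC0 t (abs_le.mp h)).trans ?_
      have : 0 ≤ (1 + |x|) ^ N * ((F t).re * |t| ^ (2 * ν + 1)) := by positivity
      linarith
    · rw [hnorm]
      have hw : 1 ≤ (1 + |x|) ^ N * |t| ^ (2 * ν + 1) := by
        have h3 : |t| ^ (-(2 * ν + 1)) ≤ (1 + |x|) ^ N := by
          calc _ ≤ |t| ^ (N:ℝ) := Real.rpow_le_rpow_of_exponent_le h hN2
            _ = |t| ^ N := Real.rpow_natCast _ _
            _ ≤ _ := by gcongr; linarith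
        rw [Real.rpow_neg (abs_nonneg _)] at h3
        have h4 : 0 < |t| ^ (2 * ν + 1) := by positivity
        calc 1 = (|t| ^ (2 * ν + 1))⁻¹ * |t| ^ (2 * ν + 1) := by field_simp
          _ ≤ _ := by gcongr
      have := mul_le_mul_of_nonneg_left hw hFp
      nlinarith
  rw [← hftc, intervalIntegral.norm_intervalIntegral_eq]
  have hgi : IntegrableOn (fun t : ℝ => C0 + (1 + |x|) ^ N * ((F t).re * |t| ^ (2 * ν + 1))) (uIoc (0:ℝ) x) := by
    refine Integrable.add ?_ (hInt.integrableOn.const_mul _)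
    exact integrableOn_const (by simp [uIoc])
  calc _ ≤ ∫ t in uIoc (0:ℝ) x, (C0 + (1 + |x|) ^ N * ((F t).re * |t| ^ (2 * ν + 1))) := by
        refine norm_integral_le_of_norm_le hgi ?_
        filter_upwards [ae_restrict_mem measurableSet_uIoc] with t ht using hpt t ht
    _ = C0 * |x| + (1 + |x|) ^ N * ∫ t in uIoc (0:ℝ) x, (F t).re * |t| ^ (2 * ν + 1) := by
        rw [integral_add _ (hInt.integrableOn.const_mul _), integral_const_mul]
        · congr 1
          rw [setIntegral_const]
          simp [Measure.real, uIoc, mul_comm, max_sub_min_eq_abs]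
        · exact integrableOn_const (by simp [uIoc])
    _ ≤ C0 * (1 + |x|) ^ N + (1 + |x|) ^ N * I := by
        gcongr
        · linarith
        · refine setIntegral_le_integral hInt ?_
          filter_upwards with t
          have := hpos t
          simp only [Pi.zero_apply]; positivity
    _ = _ := by ring

noncomputable def ES (z : ℂ) : ℂ := dslope Complex.sin 0 z

lemma E_S_diff : Differentiable ℂ ES := by
  have := (Complex.differentiableOn_dslope (f := Complex.sin) (s := univ) (c := 0) univ_mem).mpr Complex.differentiable_sin.differentiableOn
  exact differentiableOn_univ.mp this

lemma E_S_zero : ES 0 = 1 := by simp [ES, dslope_same]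

lemma E_S_ne (z : ℂ) (hz : z ≠ 0) : ES z = Complex.sin z / z := by
  rw [ES, dslope_of_ne _ hz, slope_def_field]; simp

lemma E_S_even (z : ℂ) : ES (-z) = ES z := by
  by_cases hz : z = 0
  · simp [hz]
  · rw [E_S_ne _ hz, E_S_ne _ (neg_ne_zero.mpr hz), Complex.sin_neg, neg_div_neg_eq]

lemma E_S_real (x : ℝ) : ∃ r : ℝ, ES x = r ∧ |r| ≤ 1 := by
  by_cases hx : x = 0
  · exact ⟨1, by simp [hx, E_S_zero], by simp⟩
  · refine ⟨Real.sin x / x, by rw [E_S_ne _ (by exact_mod_cast hx)]; push_cast; rfl, ?_⟩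
    rw [abs_div, div_le_one (abs_pos.mpr hx)]
    exact Real.abs_sin_le_abs

lemma E_sin_bound (z : ℂ) : ‖Complex.sin z‖ ≤ Real.exp |z.im| := by
  rw [Complex.sin, norm_div, norm_mul, Complex.norm_I, mul_one, Complex.norm_two, div_le_iff₀ two_pos]
  refine (norm_sub_le _ _).trans ?_
  rw [Complex.norm_exp, Complex.norm_exp]
  have e1 : (-z * Complex.I).re = z.im := by simp
  have e2 : (z * Complex.I).re = -z.im := by simp
  rw [e1, e2]
  have h1 : Real.exp (z.im) ≤ Real.exp |z.im| := Real.exp_le_exp.mpr (le_abs_self _)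
  have h2 : Real.exp (-z.im) ≤ Real.exp |z.im| := Real.exp_le_exp.mpr (neg_le_abs _)
  linarith

lemma E_S_bound : ∃ B : ℝ, 0 ≤ B ∧ ∀ z : ℂ, ‖ES z‖ ≤ B * Real.exp |z.im| / (1 + ‖z‖) := by
  obtain ⟨B0, hB0⟩ := (isCompact_closedBall (0:ℂ) 1).exists_bound_of_continuousOn E_S_diff.continuous.continuousOn
  have hB0p : 0 ≤ B0 := (norm_nonneg _).trans (hB0 0 (by simp))
  refine ⟨2 * B0 + 2, by positivity, fun z => ?_⟩
  have he : 1 ≤ Real.exp |z.im| := Real.one_le_exp (abs_nonneg _)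
  rw [le_div_iff₀ (by positivity)]
  rcases le_total ‖z‖ 1 with h | h
  · have h1 := hB0 z (by simpa using h)
    calc _ ≤ B0 * (1 + 1) := by gcongr
      _ ≤ (2 * B0 + 2) * 1 := by linarith
      _ ≤ _ := by gcongr
  · have hz : z ≠ 0 := by rintro rfl; norm_num at h
    rw [E_S_ne z hz, norm_div]
    have h1 := E_sin_bound z
    calc ‖Complex.sin z‖ / ‖z‖ * (1 + ‖z‖) ≤ Real.exp |z.im| / ‖z‖ * (‖z‖ + ‖z‖) := by gcongr
      _ = 2 * Real.exp |z.im| := by field_simp; ring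
      _ ≤ _ := by gcongr; linarith

lemma E_growth (ν δ : ℝ) (hδ : 0 < δ) (F : ℂ → ℂ) (hF : Differentiable ℂ F) (htype : ExpTypeLE F δ)
    (him : ∀ x : ℝ, (F x).im = 0) (hpos : ∀ x : ℝ, 0 ≤ (F x).re)
    (hInt : Integrable (fun x : ℝ => (F x).re * |x| ^ (2 * ν + 1))) :
    ∃ N : ℕ, ∀ ε > 0, ∃ C : ℝ, 0 ≤ C ∧ ∀ z, ‖F z‖ ≤ C * (1 + ‖z‖) ^ N * Real.exp ((δ + ε) * |z.im|) := by
  obtain ⟨Ψ, hΨ0, hΨ⟩ := hF.isExactOn_univ.with_val_at 0 0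
  replace hΨ : ∀ z, HasDerivAt Ψ (F z) z := fun z => by simpa using hΨ z (mem_univ z)
  have hΨd : Differentiable ℂ Ψ := fun z => (hΨ z).differentiableAt
  obtain ⟨C1, hC1, N, hN⟩ := E_prim ν F hF him hpos hInt Ψ hΨ hΨ0
  refine ⟨N, fun ε hε => ?_⟩
  obtain ⟨C2, hC2⟩ := htype (ε / 2) (by positivity)
  have hC2p : 0 ≤ C2 := by
    have := (norm_nonneg _).trans (hC2 0); simpa using this
  have hΨg : ∀ z, ‖Ψ z‖ ≤ (C2 * (2 / ε)) * Real.exp ((δ + ε) * ‖z‖) := by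
    intro z
    have h := (convex_closedBall (0:ℂ) ‖z‖).norm_image_sub_le_of_norm_hasDerivWithin_le (f := Ψ) (f' := F)
      (C := C2 * Real.exp ((δ + ε / 2) * ‖z‖)) (fun w _ => (hΨ w).hasDerivWithinAt) (fun w hw => by
        refine (hC2 w).trans ?_
        have : ‖w‖ ≤ ‖z‖ := by simpa using hw
        gcongr) (x := 0) (y := z) (by simp) (by simp)
    rw [hΨ0, sub_zero, sub_zero] at h
    refine h.trans ?_
    have h2 : ‖z‖ ≤ 2 / ε * Real.exp (ε / 2 * ‖z‖) := by
      have := Real.add_one_le_exp (ε / 2 * ‖z‖)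
      calc ‖z‖ = 2 / ε * (ε / 2 * ‖z‖) := by field_simp
        _ ≤ _ := by gcongr; linarith
    calc _ ≤ C2 * Real.exp ((δ + ε / 2) * ‖z‖) * (2 / ε * Real.exp (ε / 2 * ‖z‖)) := by gcongr
      _ = C2 * (2 / ε) * (Real.exp ((δ + ε / 2) * ‖z‖) * Real.exp (ε / 2 * ‖z‖)) := by ring
      _ = _ := by rw [← Real.exp_add]; congr 2; ring
  set C3 := max C1 (C2 * (2 / ε)) with hC3
  have hC3p : 0 ≤ C3 := hC1.trans (le_max_left _ _)
  have hall := E_all Ψ hΨd C3 (δ + ε) N hC3p (by positivity)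
    (fun x => (hN x).trans (by gcongr; exact le_max_left _ _))
    (fun z => (hΨg z).trans (by gcongr; exact le_max_right _ _))
  refine ⟨C3 * 2 ^ N * Real.exp (δ + ε), by positivity, fun z => ?_⟩
  have hcau := Complex.norm_deriv_le_of_forall_mem_sphere_norm_le (c := z) (R := 1)
    (C := C3 * (2 * (1 + ‖z‖)) ^ N * Real.exp ((δ + ε) * (|z.im| + 1))) one_pos hΨd.diffContOnCl (fun w hw => by
      refine (hall w).trans ?_
      have hwz : ‖w - z‖ = 1 := by simpa [dist_eq_norm] using hw
      have h1 : ‖w‖ ≤ ‖z‖ + 1 := by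
        calc ‖w‖ = ‖z + (w - z)‖ := by congr 1; ring
          _ ≤ _ := (norm_add_le _ _).trans (by rw [hwz])
      have h2 : |w.im| ≤ |z.im| + 1 := by
        have h3 := Complex.abs_im_le_norm (w - z)
        rw [hwz, Complex.sub_im] at h3
        have h4 := abs_add_le z.im (w.im - z.im)
        rw [add_sub_cancel] at h4
        linarith
      have h5 : 1 + ‖w‖ ≤ 2 * (1 + ‖z‖) := by linarith [norm_nonneg z]
      gcongr)
  rw [(hΨ z).deriv, div_one] at hcau
  refine hcau.trans (le_of_eq ?_)
  rw [mul_pow, mul_add, mul_one, Real.exp_add]; ring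

lemma E_lower_even (ν δ : ℝ) (hν : -1 < ν) (hδ : 0 < δ) (F : ℂ → ℂ) (hF : Differentiable ℂ F)
    (htype : ExpTypeLE F δ)
    (him : ∀ x : ℝ, (F x).im = 0) (hpos : ∀ x : ℝ, 0 ≤ (F x).re)
    (heven : ∀ x : ℝ, F (-x : ℝ) = F x) (h0 : 1 ≤ (F 0).re)
    (hInt : Integrable (fun x : ℝ => (F x).re * |x| ^ (2 * ν + 1))) :
    CLam ν δ ≤ ∫ x : ℝ, (F x).re * |x| ^ (2 * ν + 1) := by
  obtain ⟨N, hN⟩ := E_growth ν δ hδ F hF htype him hpos hInt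
  obtain ⟨B, hB, hSB⟩ := E_S_bound
  obtain ⟨K, hK⟩ := exists_nat_gt (max 2 (2 * ν + 2))
  have hK2 : 2 ≤ K := by
    have : (2:ℝ) < K := (le_max_left _ _).trans_lt hK
    exact_mod_cast this.le
  have hKν : 2 * ν + 2 < K := (le_max_right _ _).trans_lt hK
  set m := N + K with hm
  have key : ∀ ε : ℝ, 0 < ε → CLam ν (δ + 2 * ε) ≤ ∫ x : ℝ, (F x).re * |x| ^ (2 * ν + 1) := by
    intro ε hε
    have hmp : (0:ℝ) < 2 * m := by
      have : 0 < m := by omega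
      positivity
    set e := ε / (2 * m) with he
    have hep : 0 < e := by positivity
    obtain ⟨C, hC, hFC⟩ := hN ε hε
    set G : ℂ → ℂ := fun z => F z * ES (e * z) ^ (2 * m) with hG
    have hGd : Differentiable ℂ G := by
      have := E_S_diff
      simp only [hG]
      fun_prop
    have hreal : ∀ x : ℝ, ∃ r : ℝ, 0 ≤ r ∧ r ≤ 1 ∧ (G x).re = (F x).re * r := by
      intro x
      obtain ⟨r, hr, hr1⟩ := E_S_real (e * x)
      refine ⟨r ^ (2 * m), by rw [pow_mul]; positivity, ?_, ?_⟩
      · rw [← abs_of_nonneg (by rw [pow_mul]; positivity : 0 ≤ r ^ (2 * m)), abs_pow]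
        exact pow_le_one₀ (abs_nonneg _) hr1
      · simp only [hG]
        push_cast at hr
        rw [hr, ← Complex.ofReal_pow, Complex.re_mul_ofReal]
    set s := min e 1 with hs
    have hsp : 0 < s := lt_min hep one_pos
    set D := C * (B / s) ^ (2 * m) with hD
    have hDp : 0 ≤ D := by positivity
    have hGb : ∀ z : ℂ, ‖G z‖ ≤ D * Real.exp ((δ + 2 * ε) * |z.im|) / (1 + ‖z‖) ^ K := by
      intro z
      have h1 : ‖ES (e * z)‖ ≤ B / s * Real.exp (e * |z.im|) / (1 + ‖z‖) := by
        refine (hSB _).trans ?_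
        have e1 : |((e:ℂ) * z).im| = e * |z.im| := by
          rw [Complex.im_ofReal_mul, abs_mul, abs_of_pos hep]
        have e2 : ‖(e:ℂ) * z‖ = e * ‖z‖ := by
          rw [norm_mul, Complex.norm_real, Real.norm_of_nonneg hep.le]
        rw [e1, e2]
        have h3 : s * (1 + ‖z‖) ≤ 1 + e * ‖z‖ := by
          have := min_le_left e 1
          have := min_le_right e 1
          have := norm_nonneg z
          nlinarith
        calc _ ≤ B * Real.exp (e * |z.im|) / (s * (1 + ‖z‖)) := by gcongr
          _ = _ := by field_simp
      simp only [hG]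
      rw [norm_mul, norm_pow]
      have hz1 : 1 ≤ 1 + ‖z‖ := by linarith [norm_nonneg z]
      calc _ ≤ (C * (1 + ‖z‖) ^ N * Real.exp ((δ + ε) * |z.im|)) * (B / s * Real.exp (e * |z.im|) / (1 + ‖z‖)) ^ (2 * m) := by
            gcongr; exact hFC z
        _ = D * (Real.exp ((δ + ε) * |z.im|) * Real.exp (e * |z.im|) ^ (2 * m)) * ((1 + ‖z‖) ^ N / (1 + ‖z‖) ^ (2 * m)) := by
            rw [div_pow, mul_pow, hD]; ring
        _ = D * Real.exp ((δ + 2 * ε) * |z.im|) * ((1 + ‖z‖) ^ N / (1 + ‖z‖) ^ (2 * m)) := by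
            rw [← Real.exp_nat_mul, ← Real.exp_add]
            congr 3
            have hem : e * (2 * m) = ε := by rw [he]; exact div_mul_cancel₀ _ hmp.ne'
            push_cast
            linear_combination |z.im| * hem
        _ ≤ D * Real.exp ((δ + 2 * ε) * |z.im|) * (1 / (1 + ‖z‖) ^ K) := by
            refine mul_le_mul_of_nonneg_left ?_ (by positivity)
            rw [div_le_div_iff₀ (by positivity) (by positivity), ← pow_add, one_mul]
            exact pow_le_pow_right₀ hz1 (by omega)
        _ = _ := by ring
    have hGpos : ∀ x : ℝ, 0 ≤ (G x).re := by
      intro x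
      obtain ⟨r, hr, _, h⟩ := hreal x
      rw [h]; exact mul_nonneg (hpos x) hr
    have hGle : ∀ x : ℝ, (G x).re ≤ (F x).re := by
      intro x
      obtain ⟨r, _, hr, h⟩ := hreal x
      rw [h]; exact mul_le_of_le_one_right (hpos x) hr
    have hle : ∀ x : ℝ, (G x).re * |x| ^ (2 * ν + 1) ≤ (F x).re * |x| ^ (2 * ν + 1) := fun x =>
      mul_le_mul_of_nonneg_right (hGle x) (by positivity)
    have hGint : Integrable (fun x : ℝ => (G x).re * |x| ^ (2 * ν + 1)) := by
      refine hInt.mono' ?_ ?_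
      · have := hGd.continuous
        have h1 : Measurable fun x : ℝ => (G x).re := (by fun_prop : Continuous fun x : ℝ => (G x).re).measurable
        have h2 : Measurable fun x : ℝ => |x| ^ (2 * ν + 1) := (by fun_prop : Measurable fun x : ℝ => |x|).pow_const _
        exact (h1.mul h2).aestronglyMeasurable
      · filter_upwards with x
        rw [Real.norm_of_nonneg (mul_nonneg (hGpos x) (by positivity))]
        exact hle x
    refine le_trans ?_ (integral_mono hGint hInt hle)
    refine D_lower ν hν G hGd D (δ + 2 * ε) (by positivity) ?_ D K hK2 hKν ?_ hGpos ?_ ?_ hGint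
    · intro x y
      have := hGb (x + y * Complex.I)
      simp only [Complex.add_im, Complex.ofReal_im, Complex.mul_im, Complex.ofReal_re, Complex.I_im, mul_one,
        Complex.I_re, mul_zero, add_zero, zero_add] at this
      refine this.trans ?_
      have hx : |x| ≤ ‖(x:ℂ) + y * Complex.I‖ := by
        have := Complex.abs_re_le_norm ((x:ℂ) + y * Complex.I); simpa using this
      set w := ‖(x:ℂ) + y * Complex.I‖
      have hw : 0 ≤ w := norm_nonneg _
      have : 1 + x ^ 2 ≤ (1 + w) ^ K := by
        calc 1 + x ^ 2 ≤ (1 + |x|) ^ 2 := by rw [← sq_abs]; nlinarith [abs_nonneg x]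
          _ ≤ (1 + w) ^ 2 := by gcongr
          _ ≤ _ := pow_le_pow_right₀ (by linarith) hK2
      gcongr
    · intro x hx
      have := hGb x
      simp only [Complex.ofReal_im, abs_zero, mul_zero, Real.exp_zero, mul_one, Complex.norm_real, Real.norm_eq_abs] at this
      refine this.trans ?_
      have := abs_pos.mpr hx
      gcongr
      linarith
    · intro x
      simp only [hG]
      rw [heven, Complex.ofReal_neg, mul_neg, E_S_even]
    · simp only [hG, mul_zero, E_S_zero, one_pow, mul_one]; exact h0
  have hlim : Tendsto (fun ε : ℝ => CLam ν (δ + 2 * ε)) (𝓝[>] 0) (𝓝 (CLam ν δ)) := by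
    have : ContinuousAt (fun ε : ℝ => CLam ν (δ + 2 * ε)) 0 := by
      unfold CLam
      refine ContinuousAt.mul continuousAt_const ?_
      refine ContinuousAt.rpow_const ?_ (Or.inl ?_)
      · refine ContinuousAt.div continuousAt_const (by fun_prop) (by simpa using hδ.ne')
      · simp; exact hδ.ne'
    have h := this.tendsto
    simp only [mul_zero, add_zero] at h
    exact h.mono_left nhdsWithin_le_nhds
  exact le_of_tendsto hlim (by filter_upwards [self_mem_nhdsWithin] with ε hε using key ε hε)

lemma E_lower (ν δ : ℝ) (hν : -1 < ν) (hδ : 0 < δ) (F : ℂ → ℂ) (hF : Differentiable ℂ F)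
    (htype : ExpTypeLE F δ)
    (him : ∀ x : ℝ, (F x).im = 0) (hpos : ∀ x : ℝ, 0 ≤ (F x).re) (h0 : 1 ≤ (F 0).re)
    (hInt : Integrable (fun x : ℝ => (F x).re * |x| ^ (2 * ν + 1))) :
    CLam ν δ ≤ ∫ x : ℝ, (F x).re * |x| ^ (2 * ν + 1) := by
  set E : ℂ → ℂ := fun z => (1 / 2 : ℝ) * (F z + F (-z)) with hE
  have hre : ∀ x : ℝ, (E x).re = 1 / 2 * ((F x).re + (F (-x : ℝ)).re) := by
    intro x
    simp only [hE]
    rw [Complex.re_ofReal_mul, Complex.add_re, Complex.ofReal_neg]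
  have hint2 : Integrable (fun x : ℝ => (F (-x : ℝ)).re * |x| ^ (2 * ν + 1)) := by
    have := hInt.comp_neg
    simpa using this
  have hint2v : ∫ x : ℝ, (F (-x : ℝ)).re * |x| ^ (2 * ν + 1) = ∫ x : ℝ, (F x).re * |x| ^ (2 * ν + 1) := by
    have := integral_neg_eq_self (fun x : ℝ => (F x).re * |x| ^ (2 * ν + 1)) volume
    simpa using this
  have hfun : (fun x : ℝ => (E x).re * |x| ^ (2 * ν + 1)) =
      fun x : ℝ => 1 / 2 * ((F x).re * |x| ^ (2 * ν + 1) + (F (-x : ℝ)).re * |x| ^ (2 * ν + 1)) := by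
    ext x; rw [hre]; ring
  have hEint : Integrable (fun x : ℝ => (E x).re * |x| ^ (2 * ν + 1)) := by
    rw [hfun]; exact (hInt.add hint2).const_mul _
  have hval : ∫ x : ℝ, (E x).re * |x| ^ (2 * ν + 1) = ∫ x : ℝ, (F x).re * |x| ^ (2 * ν + 1) := by
    rw [hfun, integral_const_mul, integral_add hInt hint2, hint2v]; ring
  rw [← hval]
  refine E_lower_even ν δ hν hδ E ?_ ?_ ?_ ?_ ?_ ?_ hEint
  · simp only [hE]; fun_prop
  · intro ε hε
    obtain ⟨C, hC⟩ := htype ε hε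
    refine ⟨C, fun z => ?_⟩
    simp only [hE]
    have h1 := hC z
    have h2 := hC (-z)
    rw [norm_neg] at h2
    rw [norm_mul, Complex.norm_real, Real.norm_of_nonneg (by norm_num)]
    have := norm_add_le (F z) (F (-z))
    linarith
  · intro x
    simp only [hE]
    rw [Complex.im_ofReal_mul, Complex.add_im, him, ← Complex.ofReal_neg, him]; simp
  · intro x
    rw [hre]; have := hpos x; have := hpos (-x); linarith
  · intro x
    simp only [hE]; push_cast; rw [neg_neg, add_comm]
  · have := hre 0
    simp only [Complex.ofReal_zero, neg_zero] at this
    rw [this]; linarith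


/-- `ρ` is a probability measure whose two-sided Laplace transform is `1 / Q` on a strip. -/
def GLap (ρ : Measure ℝ) (c : ℝ) (Q : ℂ → ℂ) : Prop :=
  IsProbabilityMeasure ρ ∧ ∀ z : ℂ, |z.re| ≤ c →
    Integrable (fun t : ℝ => Complex.exp (z * t)) ρ ∧ (∫ t : ℝ, Complex.exp (z * t) ∂ρ) * Q z = 1

lemma G_conv {ρ ρ' : Measure ℝ} {c : ℝ} {Q Q' : ℂ → ℂ} (h : GLap ρ c Q) (h' : GLap ρ' c Q') :
    GLap (ρ.conv ρ') c (fun z => Q z * Q' z) := by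
  obtain ⟨i, h⟩ := h
  obtain ⟨i', h'⟩ := h'
  refine ⟨inferInstance, fun z hz => ?_⟩
  obtain ⟨a, b⟩ := h z hz
  obtain ⟨a', b'⟩ := h' z hz
  have key : (fun p : ℝ × ℝ => Complex.exp (z * p.1) * Complex.exp (z * p.2)) =
      fun p : ℝ × ℝ => Complex.exp (z * ((p.1 + p.2 : ℝ) : ℂ)) := by
    funext p; rw [← Complex.exp_add]; push_cast; ring_nf
  have hm : AEStronglyMeasurable (fun t : ℝ => Complex.exp (z * t)) (Measure.map (fun p : ℝ × ℝ => p.1 + p.2) (ρ.prod ρ')) := by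
    apply Continuous.aestronglyMeasurable; fun_prop
  constructor
  · unfold Measure.conv
    rw [integrable_map_measure hm (by fun_prop)]
    have := a.mul_prod a'
    rw [key] at this
    exact this
  · unfold Measure.conv
    rw [integral_map (by fun_prop) hm]
    have := integral_prod_mul (μ := ρ) (ν := ρ') (fun t : ℝ => Complex.exp (z * t)) (fun t : ℝ => Complex.exp (z * t))
    rw [key] at this
    rw [this]
    linear_combination ((∫ t : ℝ, Complex.exp (z * t) ∂ρ') * Q' z) * b + b'

lemma G_one (c : ℝ) : GLap (Measure.dirac 0) c (fun _ => 1) := by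
  refine ⟨inferInstance, fun z _ => ⟨?_, by simp⟩⟩
  exact integrable_dirac (by simp)

lemma G_base (ξ : ℝ) (hξ : 0 < ξ) (z : ℂ) (hz : |z.re| < ξ) :
    Integrable (fun t : ℝ => Complex.exp (z * t) * ((ξ / 2 * Real.exp (-(ξ * |t|)) : ℝ) : ℂ)) ∧
    (∫ t : ℝ, Complex.exp (z * t) * ((ξ / 2 * Real.exp (-(ξ * |t|)) : ℝ) : ℂ)) * (1 - z ^ 2 / ξ ^ 2) = 1 := by
  rw [abs_lt] at hz
  have e1 : ∀ t : ℝ, t ∈ Ioi (0:ℝ) → Complex.exp (z * t) * ((ξ / 2 * Real.exp (-(ξ * |t|)) : ℝ) : ℂ) =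
      (ξ / 2 : ℂ) * Complex.exp ((z - ξ) * t) := by
    intro t ht
    rw [abs_of_pos ht]; push_cast
    rw [mul_left_comm, ← Complex.exp_add]; ring_nf
  have e2 : ∀ t : ℝ, t ∈ Iic (0:ℝ) → Complex.exp (z * t) * ((ξ / 2 * Real.exp (-(ξ * |t|)) : ℝ) : ℂ) =
      (ξ / 2 : ℂ) * Complex.exp ((z + ξ) * t) := by
    intro t ht
    rw [abs_of_nonpos ht]; push_cast
    rw [mul_left_comm, ← Complex.exp_add]; ring_nf
  have r1 : (z - ξ).re < 0 := by simp; linarith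
  have r2 : 0 < (z + ξ).re := by simp; linarith
  have n1 : z - ξ ≠ 0 := fun h => by rw [h] at r1; simp at r1
  have n2 : z + ξ ≠ 0 := fun h => by rw [h] at r2; simp at r2
  have n3 : (ξ : ℂ) ≠ 0 := by exact_mod_cast hξ.ne'
  have i1 : IntegrableOn (fun t : ℝ => Complex.exp (z * t) * ((ξ / 2 * Real.exp (-(ξ * |t|)) : ℝ) : ℂ)) (Ioi 0) :=
    IntegrableOn.congr_fun ((integrableOn_exp_mul_complex_Ioi r1 0).const_mul _) (fun t ht => (e1 t ht).symm) measurableSet_Ioi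
  have i2 : IntegrableOn (fun t : ℝ => Complex.exp (z * t) * ((ξ / 2 * Real.exp (-(ξ * |t|)) : ℝ) : ℂ)) (Iic 0) :=
    IntegrableOn.congr_fun ((integrableOn_exp_mul_complex_Iic r2 0).const_mul _) (fun t ht => (e2 t ht).symm) measurableSet_Iic
  refine ⟨?_, ?_⟩
  · rw [← integrableOn_univ, ← Iic_union_Ioi (a := (0:ℝ))]; exact i2.union i1
  · rw [← intervalIntegral.integral_Iic_add_Ioi i2 i1, setIntegral_congr_fun measurableSet_Ioi e1,
      setIntegral_congr_fun measurableSet_Iic e2, integral_const_mul, integral_const_mul,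
      integral_exp_mul_complex_Ioi r1, integral_exp_mul_complex_Iic r2]
    simp
    field_simp
    ring

lemma G_factor (a c : ℝ) (ha : 0 < a) (hac : a * c ^ 2 < 1) (hc : 0 < c) :
    ∃ ρ, GLap ρ c (fun z => 1 - a * z ^ 2) := by
  set ξ := (√a)⁻¹ with hξd
  have hξ : 0 < ξ := by positivity
  have hξ2 : (ξ ^ 2 : ℝ) = a⁻¹ := by rw [hξd, inv_pow, Real.sq_sqrt ha.le]
  have hcξ : c < ξ := by
    apply lt_of_pow_lt_pow_left₀ 2 hξ.le
    rw [hξ2, lt_inv_comm₀ (by positivity) ha, lt_inv_comm₀ ha (by positivity)]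
    rw [← one_div, lt_div_iff₀ ha]; linarith
  let d : ℝ → NNReal := fun t => Real.toNNReal (ξ / 2 * Real.exp (-(ξ * |t|)))
  have hdm : Measurable d := by
    apply Measurable.real_toNNReal; fun_prop
  have hdv : ∀ t, ((d t : ℝ)) = ξ / 2 * Real.exp (-(ξ * |t|)) := fun t => Real.coe_toNNReal _ (by positivity)
  have hI : ∀ z : ℂ, (∫ t : ℝ, Complex.exp (z * t) ∂(volume.withDensity fun t => (d t : ENNReal))) =
      ∫ t : ℝ, Complex.exp (z * t) * ((ξ / 2 * Real.exp (-(ξ * |t|)) : ℝ) : ℂ) := by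
    intro z
    rw [integral_withDensity_eq_integral_smul hdm]
    congr 1; funext t
    rw [NNReal.smul_def, hdv, Complex.real_smul, mul_comm]
  have hInt : ∀ z : ℂ, |z.re| < ξ → Integrable (fun t : ℝ => Complex.exp (z * t)) (volume.withDensity fun t => (d t : ENNReal)) := by
    intro z hz
    rw [integrable_withDensity_iff_integrable_smul hdm]
    refine (G_base ξ hξ z hz).1.congr (Eventually.of_forall fun t => ?_)
    simp only
    rw [NNReal.smul_def, hdv, Complex.real_smul, mul_comm]
  have hprob : IsProbabilityMeasure (volume.withDensity fun t => (d t : ENNReal)) := by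
    have h0 := hInt 0 (by simpa using hξ)
    have h1 := (G_base ξ hξ 0 (by simpa using hξ)).2
    rw [← hI] at h1
    simp only [zero_mul, Complex.exp_zero] at h0 h1
    have hfin : IsFiniteMeasure (volume.withDensity fun t => (d t : ENNReal)) := by
      rw [integrable_const_iff] at h0
      simpa using h0
    rw [isProbabilityMeasure_iff_real]
    simpa using h1
  refine ⟨_, hprob, fun z hz => ⟨hInt z (hz.trans_lt hcξ), ?_⟩⟩
  have h2 := (G_base ξ hξ z (hz.trans_lt hcξ)).2
  rw [hI]
  have : ((ξ : ℂ) ^ 2) = (a : ℂ)⁻¹ := by exact_mod_cast hξ2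
  rw [this, div_inv_eq_mul, mul_comm (z ^ 2)] at h2
  exact h2

lemma G_prod (c : ℝ) (hc : 0 < c) (a : ℝ → ℝ) (S : Finset ℝ) (h : ∀ s ∈ S, 0 < a s ∧ a s * c ^ 2 < 1) :
    ∃ ρ, GLap ρ c (fun z => ∏ s ∈ S, (1 - a s * z ^ 2)) := by
  induction S using Finset.induction_on with
  | empty => exact ⟨_, by simpa using G_one c⟩
  | insert x S hx ih =>
    obtain ⟨ρ, hρ⟩ := ih fun s hs => h s (Finset.mem_insert_of_mem hs)
    obtain ⟨ρ', hρ'⟩ := G_factor (a x) c (h x (Finset.mem_insert_self _ _)).1 (h x (Finset.mem_insert_self _ _)).2 hc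
    refine ⟨ρ'.conv ρ, ?_⟩
    · simp only [Finset.prod_insert hx]
      exact G_conv hρ' hρ


noncomputable def Hb (ν δ : ℝ) (k : ℕ) : ℝ :=
  (-1) ^ k * ((δ ^ 2 / 16) ^ k / ((ascPochhammer ℝ k).eval (ν + 2) * k.factorial))

noncomputable def Ha (ν δ : ℝ) (n k : ℕ) : ℝ :=
  if k ≤ n then Acoef ν n k * (δ ^ 2 / (16 * n ^ 2)) ^ k else 0

noncomputable def Hj (ν δ : ℝ) (w : ℂ) : ℂ := ∑' k, (Hb ν δ k : ℂ) * w ^ k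

lemma H_poch_lower (ν : ℝ) (hν : -1 < ν) (k : ℕ) : (k.factorial : ℝ) ≤ (ascPochhammer ℝ k).eval (ν + 2) := by
  induction k with
  | zero => simp
  | succ k ih =>
    rw [ascPochhammer_succ_eval, Nat.factorial_succ, Nat.cast_mul, mul_comm]
    have : (0:ℝ) ≤ k := by positivity
    push_cast
    exact mul_le_mul ih (by linarith) (by positivity) (by linarith [(Nat.cast_nonneg (α := ℝ) k.factorial)])

lemma H_poch_upper (x : ℝ) (hx : 0 < x) (n k : ℕ) (hk : k ≤ n) : (ascPochhammer ℝ k).eval x ≤ (x + n) ^ k := by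
  induction k with
  | zero => simp
  | succ k ih =>
    rw [ascPochhammer_succ_eval, pow_succ]
    have h2 : (k : ℝ) ≤ n := by exact_mod_cast (by omega : k ≤ n)
    exact mul_le_mul (ih (by omega)) (by linarith) (by positivity) (by positivity)

lemma H_a_bound (ν δ : ℝ) (hν : -1 < ν) (n k : ℕ) (hn : 1 ≤ n) :
    |Ha ν δ n k| ≤ (δ ^ 2 / 16 * (4 + |ν|)) ^ k / k.factorial := by
  unfold Ha
  split_ifs with hk
  swap
  · simp; positivity
  have hn' : (1:ℝ) ≤ n := by exact_mod_cast hn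
  have hp := H_poch_lower ν hν k
  have hf : (1:ℝ) ≤ k.factorial := by exact_mod_cast Nat.factorial_pos k
  have hpos : 0 < (ascPochhammer ℝ k).eval (n + ν + 3/2) := ascPochhammer_pos _ _ (by linarith)
  have hu : (ascPochhammer ℝ k).eval (n + ν + 3/2) ≤ ((4 + |ν|) * n) ^ k := by
    refine (H_poch_upper (n + ν + 3/2) (by linarith) n k hk).trans ?_
    refine pow_le_pow_left₀ (by linarith) ?_ k
    have := le_abs_self ν
    nlinarith [abs_nonneg ν]
  have hc : (n.choose k : ℝ) ≤ n ^ k / k.factorial := Nat.choose_le_pow_div k n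
  unfold Acoef
  rw [abs_mul, abs_mul, abs_mul, abs_pow, abs_neg, abs_one, one_pow, one_mul, abs_of_nonneg (by positivity : (0:ℝ) ≤ n.choose k),
    abs_of_pos (div_pos hpos (by linarith)), abs_of_nonneg (by positivity)]
  calc _ ≤ (n ^ k / k.factorial) * (((4 + |ν|) * n) ^ k / 1) * (δ ^ 2 / (16 * n ^ 2)) ^ k := by
        have hd : (ascPochhammer ℝ k).eval (n + ν + 3/2) / (ascPochhammer ℝ k).eval (ν + 2) ≤ ((4 + |ν|) * n) ^ k / 1 :=
          div_le_div₀ (by positivity) hu one_pos (by linarith)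
        have hd0 := (div_pos hpos (by linarith : 0 < (ascPochhammer ℝ k).eval (ν + 2))).le
        refine mul_le_mul_of_nonneg_right (mul_le_mul hc hd hd0 (by positivity)) (by positivity)
    _ = ((n * ((4 + |ν|) * n)) * (δ ^ 2 / (16 * n ^ 2))) ^ k / k.factorial := by
        rw [mul_pow (_ * _) (_ / _), mul_pow (n:ℝ) (_ * _)]; ring
    _ = _ := by
        congr 2
        field_simp

lemma H_b_bound (ν δ : ℝ) (hν : -1 < ν) (k : ℕ) :
    |Hb ν δ k| ≤ (δ / 2) ^ (2 * k) / (2 * k).factorial := by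
  have hp := H_poch_lower ν hν k
  have hf : (1:ℝ) ≤ k.factorial := by exact_mod_cast Nat.factorial_pos k
  unfold Hb
  rw [abs_mul, abs_pow, abs_neg, abs_one, one_pow, one_mul, abs_of_nonneg (div_nonneg (by positivity) (mul_nonneg (by linarith) (by linarith)))]
  have hcb : ((2 * k).factorial : ℝ) ≤ 4 ^ k * (k.factorial * k.factorial) := by
    have h1 := Nat.centralBinom_le_four_pow k
    have h2 := Nat.choose_mul_factorial_mul_factorial (show k ≤ 2 * k by omega)
    rw [show 2 * k - k = k by omega, ← Nat.centralBinom_eq_two_mul_choose, mul_assoc] at h2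
    rw [← h2]
    exact_mod_cast Nat.mul_le_mul_right _ h1
  rw [div_le_div_iff₀ (by nlinarith) (by positivity)]
  calc (δ ^ 2 / 16) ^ k * ((2 * k).factorial : ℝ) ≤ (δ ^ 2 / 16) ^ k * (4 ^ k * (k.factorial * k.factorial)) := by gcongr
    _ = (δ / 2) ^ (2 * k) * (k.factorial * k.factorial) := by
        rw [← mul_assoc, ← mul_pow, pow_mul]; congr 2; ring
    _ ≤ _ := by
      have : 0 ≤ (δ / 2) ^ (2 * k) := by rw [pow_mul]; positivity
      gcongr

lemma H_limit (ν δ : ℝ) (hν : -1 < ν) (k : ℕ) : Tendsto (fun n => Ha ν δ n k) atTop (𝓝 (Hb ν δ k)) := by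
  have hinv : Tendsto (fun n : ℕ => (1:ℝ) / n) atTop (𝓝 0) := tendsto_const_div_atTop_nhds_zero_nat 1
  have key : Tendsto (fun n : ℕ => (n.choose k : ℝ) * (ascPochhammer ℝ k).eval (n + ν + 3/2) * ((1:ℝ) / n ^ 2) ^ k) atTop (𝓝 (1 / k.factorial)) := by
    induction k with
    | zero => simp
    | succ k ih =>
      have h1 : Tendsto (fun n : ℕ => (1 - k * ((1:ℝ) / n)) * (1 + (ν + 3 / 2 + k) * ((1:ℝ) / n)) / (k + 1)) atTop (𝓝 ((1 - k * 0) * (1 + (ν + 3 / 2 + k) * 0) / (k + 1))) :=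
        ((tendsto_const_nhds.sub (hinv.const_mul _)).mul (tendsto_const_nhds.add (hinv.const_mul _))).div_const _
      have h2 := ih.mul h1
      have e : (1 / (k.factorial : ℝ)) * ((1 - k * 0) * (1 + (ν + 3 / 2 + k) * 0) / (k + 1)) = 1 / (k + 1).factorial := by
        rw [Nat.factorial_succ]; push_cast; field_simp; ring
      rw [e] at h2
      refine h2.congr' ?_
      filter_upwards [eventually_ge_atTop (k + 1)] with n hn
      have hn0 : (n : ℝ) ≠ 0 := by exact_mod_cast (by omega : n ≠ 0)
      have hch : (n.choose (k + 1) : ℝ) = n.choose k * (n - k) / (k + 1) := by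
        have := Nat.choose_succ_right_eq n k
        rw [eq_div_iff (by positivity), ← Nat.cast_sub (by omega)]
        exact_mod_cast this
      rw [hch, ascPochhammer_succ_eval, pow_succ ((1:ℝ) / n ^ 2) k]
      generalize ((1:ℝ) / n ^ 2) ^ k = q1
      generalize (ascPochhammer ℝ k).eval (n + ν + 3/2) = q2
      field_simp
      ring
  have h3 := (key.mul_const ((δ ^ 2 / 16) ^ k / (ascPochhammer ℝ k).eval (ν + 2))).const_mul ((-1) ^ k)
  have e : (-1) ^ k * (1 / (k.factorial : ℝ) * ((δ ^ 2 / 16) ^ k / (ascPochhammer ℝ k).eval (ν + 2))) = Hb ν δ k := by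
    unfold Hb
    rw [mul_comm ((ascPochhammer ℝ k).eval (ν + 2)) (k.factorial : ℝ), ← div_div]
    ring
  rw [e] at h3
  refine h3.congr' ?_
  filter_upwards [eventually_ge_atTop k] with n hn
  unfold Ha Acoef
  rw [if_pos hn, show δ ^ 2 / (16 * (n:ℝ) ^ 2) = (1 / (n:ℝ) ^ 2) * (δ ^ 2 / 16) by ring, mul_pow]
  ring

lemma H_aeval (ν δ : ℝ) (n : ℕ) (w : ℂ) :
    aeval (w * ((δ ^ 2 / (16 * n ^ 2) : ℝ) : ℂ)) (Apoly ν n) = ∑' k, (Ha ν δ n k : ℂ) * w ^ k := by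
  rw [tsum_eq_sum (s := Finset.range (n + 1))]
  · unfold Apoly
    rw [map_sum]
    refine Finset.sum_congr rfl fun k hk => ?_
    rw [map_mul, aeval_C, map_pow, aeval_X, Ha, if_pos (by simpa [Nat.lt_succ_iff] using hk), mul_pow]
    simp
    ring
  · intro k hk
    rw [Ha, if_neg (by simpa [Nat.lt_succ_iff] using hk)]; simp

lemma H_tendsto (ν δ : ℝ) (hν : -1 < ν) (w : ℕ → ℂ) (w0 : ℂ) (R : ℝ) (hR : ∀ n, ‖w n‖ ≤ R)
    (hw : Tendsto w atTop (𝓝 w0)) :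
    Tendsto (fun n : ℕ => aeval (w n * ((δ ^ 2 / (16 * n ^ 2) : ℝ) : ℂ)) (Apoly ν n)) atTop (𝓝 (Hj ν δ w0)) := by
  simp only [H_aeval]
  unfold Hj
  refine tendsto_tsum_of_dominated_convergence (bound := fun k => (δ ^ 2 / 16 * (4 + |ν|) * R) ^ k / k.factorial)
    (Real.summable_pow_div_factorial _) ?_ ?_
  · intro k
    exact ((Complex.continuous_ofReal.tendsto _).comp (H_limit ν δ hν k)).mul (hw.pow k)
  · filter_upwards [eventually_ge_atTop 1] with n hn k
    rw [norm_mul, norm_pow, Complex.norm_real, Real.norm_eq_abs, mul_pow, mul_div_right_comm]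
    have h0 := norm_nonneg (w n)
    exact mul_le_mul (H_a_bound ν δ hν n k hn) (pow_le_pow_left₀ h0 (hR n) k) (by positivity) (by positivity)

lemma H_near_one (ν δ : ℝ) (hν : -1 < ν) (n : ℕ) (hn : 1 ≤ n) (w : ℂ) (R : ℝ) (hR : ‖w‖ ≤ R) :
    ‖aeval (w * ((δ ^ 2 / (16 * n ^ 2) : ℝ) : ℂ)) (Apoly ν n) - 1‖ ≤ Real.exp (δ ^ 2 / 16 * (4 + |ν|) * R) - 1 := by
  rw [H_aeval]
  have hb : ∀ k, ‖(Ha ν δ n k : ℂ) * w ^ k‖ ≤ (δ ^ 2 / 16 * (4 + |ν|) * R) ^ k / k.factorial := by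
    intro k
    rw [norm_mul, norm_pow, Complex.norm_real, Real.norm_eq_abs, mul_pow, mul_div_right_comm]
    exact mul_le_mul (H_a_bound ν δ hν n k hn) (pow_le_pow_left₀ (norm_nonneg _) hR k) (by positivity) (by positivity)
  have hs := Real.summable_pow_div_factorial (δ ^ 2 / 16 * (4 + |ν|) * R)
  have hsum : Summable fun k => (Ha ν δ n k : ℂ) * w ^ k := Summable.of_norm_bounded hs hb
  have hexp : Real.exp (δ ^ 2 / 16 * (4 + |ν|) * R) = ∑' k : ℕ, (δ ^ 2 / 16 * (4 + |ν|) * R) ^ k / k.factorial := by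
    rw [Real.exp_eq_exp_ℝ, NormedSpace.exp_eq_tsum_div]
  have h0 : (Ha ν δ n 0 : ℂ) * w ^ 0 = 1 := by simp [Ha, Acoef]
  rw [hsum.tsum_eq_zero_add, h0, add_sub_cancel_left, hexp, hs.tsum_eq_zero_add]
  simp only [pow_zero, Nat.factorial_zero, Nat.cast_one, div_one, add_sub_cancel_left]
  exact tsum_of_norm_bounded ((summable_nat_add_iff 1).2 hs).hasSum fun k => hb (k + 1)

lemma H_b_norm (ν δ : ℝ) (hν : -1 < ν) (z : ℂ) (k : ℕ) :
    ‖(Hb ν δ k : ℂ) * (z ^ 2) ^ k‖ ≤ (δ / 2 * ‖z‖) ^ (2 * k) / (2 * k).factorial := by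
  rw [norm_mul, norm_pow, norm_pow, Complex.norm_real, Real.norm_eq_abs, mul_pow, mul_div_right_comm, ← pow_mul]
  exact mul_le_mul_of_nonneg_right (H_b_bound ν δ hν k) (by positivity)

/-- square of the function below -/
noncomputable def HP (ν δ : ℝ) (z : ℂ) : ℂ := Hj ν δ (z ^ 2) ^ 2

lemma H_j_bound (ν δ : ℝ) (hν : -1 < ν) (hδ : 0 < δ) (z : ℂ) : ‖Hj ν δ (z ^ 2)‖ ≤ Real.exp (δ / 2 * ‖z‖) := by
  have h := Real.hasSum_cosh (δ / 2 * ‖z‖)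
  refine (tsum_of_norm_bounded h (H_b_norm ν δ hν z)).trans ?_
  rw [Real.cosh_eq]
  have : Real.exp (-(δ / 2 * ‖z‖)) ≤ Real.exp (δ / 2 * ‖z‖) := by
    apply Real.exp_le_exp.2; have : 0 ≤ δ / 2 * ‖z‖ := by positivity
    linarith
  linarith

lemma H_P_bound (ν δ : ℝ) (hν : -1 < ν) (hδ : 0 < δ) (z : ℂ) : ‖HP ν δ z‖ ≤ Real.exp (δ * ‖z‖) := by
  unfold HP
  rw [norm_pow]
  calc _ ≤ Real.exp (δ / 2 * ‖z‖) ^ 2 := by gcongr; exact H_j_bound ν δ hν hδ z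
    _ = _ := by rw [← Real.exp_nat_mul]; congr 1; push_cast; ring

lemma H_P_diff (ν δ : ℝ) (hν : -1 < ν) (hδ : 0 < δ) : Differentiable ℂ (HP ν δ) := by
  have : Differentiable ℂ fun z => Hj ν δ (z ^ 2) := by
    intro z
    have hd : DifferentiableOn ℂ (fun z : ℂ => ∑' k, (Hb ν δ k : ℂ) * (z ^ 2) ^ k) (Metric.ball 0 (‖z‖ + 1)) := by
      refine Complex.differentiableOn_tsum_of_summable_norm (u := fun k => (δ / 2 * (‖z‖ + 1)) ^ (2 * k) / (2 * k).factorial) (Real.hasSum_cosh _).summable ?_ Metric.isOpen_ball ?_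
      · intro k; fun_prop
      · intro k w hw
        have : ‖w‖ ≤ ‖z‖ + 1 := by simpa using (Metric.mem_ball.1 hw).le
        exact (H_b_norm ν δ hν w k).trans (by gcongr)
    exact hd.differentiableAt (Metric.isOpen_ball.mem_nhds (by simp))
  unfold HP
  fun_prop

lemma H_P_zero (ν δ : ℝ) : HP ν δ 0 = 1 := by
  unfold HP Hj
  rw [tsum_eq_single 0]
  · simp [Hb]
  · intro k hk; simp [hk]

lemma H_j_real (ν δ : ℝ) (x : ℝ) : Hj ν δ ((x : ℂ) ^ 2) = ((∑' k, Hb ν δ k * (x ^ 2) ^ k : ℝ) : ℂ) := by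
  unfold Hj; push_cast; rfl

lemma H_P_real (ν δ : ℝ) (x : ℝ) : HP ν δ x = (((HP ν δ x).re : ℝ) : ℂ) ∧ 0 ≤ (HP ν δ x).re := by
  unfold HP
  rw [H_j_real, ← Complex.ofReal_pow]
  exact ⟨by rw [Complex.ofReal_re], by rw [Complex.ofReal_re]; positivity⟩


lemma I_fatou (g : ℕ → ℝ → ℝ) (f : ℝ → ℝ) (Λ : ℝ) (hm : ∀ n, Measurable (g n)) (hg0 : ∀ n x, 0 ≤ g n x)
    (hgi : ∀ᶠ n in atTop, Integrable (g n)) (hfm : Measurable f)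
    (hlim : ∀ᵐ x : ℝ, Tendsto (fun n => g n x) atTop (𝓝 (f x)))
    (hL : Tendsto (fun n => ∫ x, g n x) atTop (𝓝 Λ)) : Integrable f ∧ ∫ x, f x ≤ Λ := by
  have hΛ : 0 ≤ Λ := ge_of_tendsto' hL fun n => integral_nonneg (hg0 n)
  have hf0 : ∀ᵐ x : ℝ, 0 ≤ f x := by
    filter_upwards [hlim] with x hx
    exact ge_of_tendsto' hx fun n => hg0 n x
  have h1 : ∫⁻ x, ENNReal.ofReal (f x) ≤ ENNReal.ofReal Λ := by
    calc ∫⁻ x, ENNReal.ofReal (f x) = ∫⁻ x, liminf (fun n => ENNReal.ofReal (g n x)) atTop := by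
          apply lintegral_congr_ae
          filter_upwards [hlim] with x hx
          exact ((ENNReal.continuous_ofReal.tendsto _).comp hx).liminf_eq.symm
      _ ≤ liminf (fun n => ∫⁻ x, ENNReal.ofReal (g n x)) atTop :=
          lintegral_liminf_le fun n => (hm n).ennreal_ofReal
      _ = ENNReal.ofReal Λ := by
          apply Tendsto.liminf_eq
          refine ((ENNReal.continuous_ofReal.tendsto _).comp hL).congr' ?_
          filter_upwards [hgi] with n hn
          exact ofReal_integral_eq_lintegral_ofReal hn (Eventually.of_forall (hg0 n))
  have hi : Integrable f := ⟨hfm.aestronglyMeasurable, by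
    rw [hasFiniteIntegral_iff_ofReal hf0]
    exact h1.trans_lt ENNReal.ofReal_lt_top⟩
  refine ⟨hi, ?_⟩
  rw [← ofReal_integral_eq_lintegral_ofReal hi hf0] at h1
  exact (ENNReal.ofReal_le_ofReal_iff hΛ).1 h1

lemma I_aeval_real (p : ℝ[X]) (x : ℝ) : aeval (x : ℂ) p = ((p.eval x : ℝ) : ℂ) := by
  rw [show (x : ℂ) = algebraMap ℝ ℂ x from rfl, aeval_algebraMap_apply, coe_aeval_eq_eval]; rfl

lemma I_P (ν δ : ℝ) (hν : -1 < ν) (hδ : 0 < δ) :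
    Integrable (fun x : ℝ => (HP ν δ x).re * |x| ^ (2 * ν + 1)) ∧
    ∫ x : ℝ, (HP ν δ x).re * |x| ^ (2 * ν + 1) ≤ CLam ν δ := by
  set L : ℕ → ℝ := fun n => 2 * n / δ with hLd
  have hL : Tendsto L atTop atTop := by
    have := (tendsto_natCast_atTop_atTop (R := ℝ)).const_mul_atTop (show (0:ℝ) < 2 / δ by positivity)
    refine this.congr fun n => ?_
    simp only [hLd]; ring
  let G : ℕ → ℝ → ℝ := fun n θ => ((Apoly ν n) ^ 2).eval (Real.sin (θ / 2) ^ 2)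
  have hGc : ∀ n, Continuous (G n) := fun n => (Polynomial.continuous _).comp (by fun_prop)
  have hG0 : ∀ n x, 0 ≤ G n x := fun n x => by simp only [G, eval_pow]; positivity
  have hInt : ∀ᶠ n : ℕ in atTop, ∫ x, G n (x / L n) * DW ν (L n) x = (2 * n / δ) ^ (2 * ν + 2) * CJ ν hν (Apoly ν n) := by
    filter_upwards [eventually_ge_atTop 1] with n hn
    have hLp : 0 < L n := by
      have : (0:ℝ) < n := by exact_mod_cast hn
      simp only [hLd]; positivity
    rw [← D_scale ν (L n) hLp (G n), ← B_sq ν hν n (CJ ν hν) (Ckap ν) (C_mom ν hν), C_J_apply]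
  have hPdiff := H_P_diff ν δ hν hδ
  refine I_fatou (fun n x => G n (x / L n) * DW ν (L n) x) _ (CLam ν δ) ?_ ?_ ?_ ?_ ?_ ?_
  · intro n
    exact ((hGc n).measurable.comp (by fun_prop)).mul (D_DW_meas ν (L n))
  · exact fun n x => mul_nonneg (hG0 _ _) (D_DW_nonneg _ _ _)
  · filter_upwards [hInt, eventually_ge_atTop 1] with n hn h1
    apply Integrable.of_integral_ne_zero
    rw [hn]
    have : (0:ℝ) < n := by exact_mod_cast h1
    have h2 : 0 < CJ ν hν (Apoly ν n) := by
      rw [← B_sq ν hν n (CJ ν hν) (Ckap ν) (C_mom ν hν)]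
      refine C_strict ν hν _ (pow_ne_zero _ (B_ne_zero ν n)) fun y _ => ?_
      rw [eval_pow]; positivity
    positivity
  · refine Measurable.mul ?_ (by fun_prop)
    have := hPdiff.continuous
    fun_prop
  · have hne : ∀ᵐ x : ℝ, x ≠ 0 := by simp [ae_iff]
    filter_upwards [hne] with x hx
    refine Tendsto.mul ?_ (D_DW_tendsto ν x hx L hL)
    have hs := D_sinlim x L hL
    have hw : Tendsto (fun n => (((2 * L n * Real.sin (x / (2 * L n))) ^ 2 : ℝ) : ℂ)) atTop (𝓝 ((x : ℂ) ^ 2)) := by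
      have := (Complex.continuous_ofReal.tendsto _).comp (hs.pow 2)
      simpa [Function.comp_def] using this
    have hb : ∀ n, ‖(((2 * L n * Real.sin (x / (2 * L n))) ^ 2 : ℝ) : ℂ)‖ ≤ x ^ 2 := by
      intro n
      rw [Complex.norm_real, Real.norm_eq_abs, abs_of_nonneg (by positivity)]
      rw [sq_le_sq, abs_mul]
      by_cases h0 : 2 * L n = 0
      · rw [h0]; simp
      · calc _ ≤ |2 * L n| * |x / (2 * L n)| := mul_le_mul_of_nonneg_left Real.abs_sin_le_abs (abs_nonneg _)
          _ = |x| := by rw [← abs_mul, mul_div_cancel₀ _ h0]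
    have ht := H_tendsto ν δ hν _ _ _ hb hw
    have ht2 := (Complex.continuous_re.tendsto _).comp (ht.pow 2)
    refine ht2.congr' ?_
    filter_upwards [eventually_ge_atTop 1] with n hn
    have hn0 : (n:ℝ) ≠ 0 := by exact_mod_cast (by omega : n ≠ 0)
    simp only [Function.comp, G]
    rw [← Complex.ofReal_mul, I_aeval_real, ← Complex.ofReal_pow, Complex.ofReal_re, eval_pow]
    congr 2
    rw [show x / L n / 2 = x / (2 * L n) by rw [div_div, mul_comm]]
    generalize Real.sin (x / (2 * L n)) = q
    simp only [hLd]
    field_simp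
    ring
  · refine (C_lambda' ν hν δ hδ).congr' ?_
    filter_upwards [hInt] with n hn using hn.symm


lemma J_seq (ν δ : ℝ) (hν : -1 < ν) (hδ : 0 < δ) : ∃ c : ℝ, 0 < c ∧ ∀ n : ℕ, 1 ≤ n → ∃ ρ : Measure ℝ,
    GLap ρ c (fun z => (aeval (z ^ 2 * ((δ ^ 2 / (16 * n ^ 2) : ℝ) : ℂ)) (Apoly ν n)) ^ 2) ∧
    Integrable (fun t => Real.exp (c * |t|)) ρ ∧ ∫ t, Real.exp (c * |t|) ∂ρ ≤ 8 := by
  set B := δ ^ 2 / 16 * (4 + |ν|) with hB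
  have hBp : 0 < B := by positivity
  set c := √(1 / (3 * B)) with hc
  have hcp : 0 < c := by positivity
  have hc2 : c ^ 2 = 1 / (3 * B) := Real.sq_sqrt (by positivity)
  have hBc : B * c ^ 2 = 1 / 3 := by rw [hc2]; field_simp
  have hexp : Real.exp (B * c ^ 2) - 1 ≤ 1 / 2 := by
    rw [hBc]
    have := Real.one_sub_le_exp_neg (1/3)
    rw [Real.exp_neg] at this
    have h2 := Real.exp_pos (1/3)
    rw [le_inv_comm₀ (by norm_num) h2] at this
    norm_num at this ⊢
    linarith
  refine ⟨c, hcp, fun n hn => ?_⟩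
  have hn0 : (0:ℝ) < n := by exact_mod_cast hn
  set κ : ℝ := δ ^ 2 / (16 * n ^ 2) with hκ
  have hκp : 0 < κ := by positivity
  have hnear : ∀ w : ℂ, ‖w‖ ≤ c ^ 2 → ‖aeval (w * (κ : ℂ)) (Apoly ν n) - 1‖ ≤ 1 / 2 := fun w hw =>
    (H_near_one ν δ hν n hn w (c ^ 2) hw).trans hexp
  obtain ⟨S, -, hS, hfac⟩ := B_roots ν hν n (CJ ν hν) (Ckap ν) (C_mom ν hν) (C_strict ν hν)
  obtain ⟨ρ₁, hρ₁⟩ := G_prod c hcp (fun s => s⁻¹ * κ) S (by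
    intro s hs
    obtain ⟨s0, s1, s2⟩ := hS s hs
    refine ⟨by positivity, ?_⟩
    by_contra hcon
    push Not at hcon
    have h1 : s ≤ κ * c ^ 2 := by
      rw [mul_assoc, ← div_eq_inv_mul, le_div_iff₀ s0] at hcon; linarith
    have h2 := hnear ((s / κ : ℝ) : ℂ) (by
      rw [Complex.norm_real, Real.norm_eq_abs, abs_of_pos (by positivity), div_le_iff₀ hκp]; linarith)
    rw [← Complex.ofReal_mul, div_mul_cancel₀ _ hκp.ne', I_aeval_real, s2] at h2
    norm_num at h2)
  have hQ : (fun z : ℂ => ∏ s ∈ S, (1 - ((s⁻¹ * κ : ℝ) : ℂ) * z ^ 2)) = fun z => aeval (z ^ 2 * (κ : ℂ)) (Apoly ν n) := by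
    funext z
    rw [hfac, map_prod]
    refine Finset.prod_congr rfl fun s _ => ?_
    simp
    ring
  rw [hQ] at hρ₁
  have hρ := G_conv hρ₁ hρ₁
  simp only [← pow_two] at hρ
  refine ⟨_, hρ, ?_⟩
  generalize ρ₁.conv ρ₁ = ρ at hρ
  have hpm : ∀ e : ℝ, |e| = c → Integrable (fun t => Real.exp (e * t)) ρ ∧ ∫ t, Real.exp (e * t) ∂ρ ≤ 4 := by
    intro e he
    obtain ⟨h1, h2⟩ := hρ.2 (e : ℂ) (by simp [he])
    have hfe : (fun t : ℝ => Complex.exp (e * t)) = fun t : ℝ => ((Real.exp (e * t) : ℝ) : ℂ) := by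
      funext t; push_cast; rfl
    rw [hfe] at h1 h2
    have h1' := h1.re
    refine ⟨h1', ?_⟩
    rw [integral_complex_ofReal] at h2
    have h3 := hnear ((e:ℂ) ^ 2) (by rw [norm_pow, Complex.norm_real, Real.norm_eq_abs, he])
    have h4 : ((e:ℂ) ^ 2) * (κ : ℂ) = ((e ^ 2 * κ : ℝ) : ℂ) := by push_cast; ring
    beta_reduce at h2
    rw [h4, I_aeval_real] at h3 h2
    set q := (Apoly ν n).eval (e ^ 2 * κ) with hq
    have h5 : |q - 1| ≤ 1 / 2 := by
      rw [← Real.norm_eq_abs, ← Complex.norm_real]; push_cast; exact h3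
    have h6 : (∫ t, Real.exp (e * t) ∂ρ) * q ^ 2 = 1 := by exact_mod_cast h2
    rw [abs_le] at h5
    have h7 : 1 / 4 ≤ q ^ 2 := by nlinarith
    have h8 : 0 ≤ ∫ t, Real.exp (e * t) ∂ρ := integral_nonneg fun t => (Real.exp_pos _).le
    nlinarith
  obtain ⟨i1, b1⟩ := hpm c (abs_of_pos hcp)
  obtain ⟨i2, b2⟩ := hpm (-c) (by rw [abs_neg, abs_of_pos hcp])
  have hle : ∀ t : ℝ, Real.exp (c * |t|) ≤ Real.exp (c * t) + Real.exp (-c * t) := by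
    intro t
    have := Real.exp_pos (c * t)
    have := Real.exp_pos (-c * t)
    rcases abs_cases t with ⟨h, _⟩ | ⟨h, _⟩ <;> rw [h]
    · linarith
    · rw [mul_neg, ← neg_mul]; linarith
  have hi : Integrable (fun t => Real.exp (c * |t|)) ρ := by
    refine (i1.add i2).mono' (by fun_prop) (Eventually.of_forall fun t => ?_)
    rw [Real.norm_eq_abs, abs_of_pos (Real.exp_pos _)]; exact hle t
  refine ⟨hi, ?_⟩
  calc _ ≤ ∫ t, (Real.exp (c * t) + Real.exp (-c * t)) ∂ρ := integral_mono hi (i1.add i2) hle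
    _ = _ + _ := integral_add i1 i2
    _ ≤ 8 := by linarith

lemma J_measure (ν δ : ℝ) (hν : -1 < ν) (hδ : 0 < δ) : ∃ c : ℝ, 0 < c ∧ ∃ ρ : Measure ℝ,
    GLap ρ c (HP ν δ) ∧ Integrable (fun t => Real.exp (c * |t|)) ρ := by
  obtain ⟨c, hc, H⟩ := J_seq ν δ hν hδ
  choose! r hr hri hrb using H
  have hprob : ∀ n : ℕ, IsProbabilityMeasure (r (n + 1)) := fun n => (hr (n + 1) (by omega)).1
  let R : ℕ → ProbabilityMeasure ℝ := fun n => ⟨r (n + 1), hprob n⟩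
  let Qs : ℕ → ℂ → ℂ := fun n z => (aeval (z ^ 2 * ((δ ^ 2 / (16 * n ^ 2) : ℝ) : ℂ)) (Apoly ν n)) ^ 2
  have hQlim : ∀ z : ℂ, Tendsto (fun n => Qs (n + 1) z) atTop (𝓝 (HP ν δ z)) := by
    intro z
    have := (H_tendsto ν δ hν (fun _ => z ^ 2) (z ^ 2) ‖z ^ 2‖ (fun _ => le_rfl) tendsto_const_nhds).pow 2
    exact (tendsto_add_atTop_iff_nat 1).2 this
  have hcf : ∀ n : ℕ, ∀ y : ℝ, charFun (r (n + 1)) y * Qs (n + 1) (y * Complex.I) = 1 := by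
    intro n y
    have := ((hr (n + 1) (by omega)).2 (y * Complex.I) (by simp [hc.le])).2
    rw [charFun_apply_real]
    convert this using 3
    · funext t; ring_nf
  have hP1 : ∀ y : ℝ, HP ν δ (y * Complex.I) ≠ 0 := by
    intro y h0
    have h1 : 1 ≤ ‖HP ν δ (y * Complex.I)‖ := by
      refine ge_of_tendsto' (hQlim (y * Complex.I)).norm fun n => ?_
      have h := congrArg norm (hcf n y)
      rw [norm_mul, norm_one] at h
      have h2 := norm_charFun_le_one (μ := r (n + 1)) y
      have h3 := norm_nonneg (Qs (n + 1) (y * Complex.I))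
      nlinarith
    rw [h0] at h1; norm_num at h1
  have hcflim : ∀ y : ℝ, Tendsto (fun n => charFun (r (n + 1)) y) atTop (𝓝 ((HP ν δ (y * Complex.I))⁻¹)) := by
    intro y
    refine ((hQlim (y * Complex.I)).inv₀ (hP1 y)).congr fun n => ?_
    exact (eq_inv_of_mul_eq_one_left (hcf n y)).symm
  have hPc := (H_P_diff ν δ hν hδ).continuous
  have htight : IsTightMeasureSet (Set.range fun n => r (n + 1)) := by
    refine isTightMeasureSet_of_tendsto_charFun (f := fun y : ℝ => (HP ν δ (y * Complex.I))⁻¹) ?_ hcflim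
    refine ContinuousAt.inv₀ ?_ (hP1 0)
    fun_prop
  have hcomp : IsCompact (closure (Set.range R)) := by
    apply isCompact_closure_of_isTightMeasureSet
    convert htight using 1
    ext m
    constructor
    · rintro ⟨_, ⟨n, rfl⟩, rfl⟩; exact ⟨n, rfl⟩
    · rintro ⟨n, rfl⟩; exact ⟨R n, ⟨n, rfl⟩, rfl⟩
  obtain ⟨P, -, hP⟩ := hcomp.exists_mapClusterPt (f := atTop) (u := R)
    (by simp only [le_principal_iff, mem_map]; exact Eventually.of_forall fun n => subset_closure ⟨n, rfl⟩)
  obtain ⟨U, hU, hlim⟩ := mapClusterPt_iff_ultrafilter.1 hP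
  set ρ : Measure ℝ := (P : Measure ℝ) with hρ
  have hρp : IsProbabilityMeasure ρ := by rw [hρ]; infer_instance
  have hcfρ : ∀ y : ℝ, charFun ρ y = (HP ν δ (y * Complex.I))⁻¹ := by
    intro y
    have h1 := (ProbabilityMeasure.tendsto_iff_forall_integral_rclike_tendsto ℂ).1 hlim (BoundedContinuousFunction.innerProbChar y)
    simp_rw [← charFun_eq_integral_innerProbChar] at h1
    exact tendsto_nhds_unique h1 ((hcflim y).mono_left hU)
  have htr : ∀ N : ℕ, ∫ t, min (Real.exp (c * |t|)) N ∂ρ ≤ 8 := by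
    intro N
    let f : BoundedContinuousFunction ℝ ℝ := BoundedContinuousFunction.ofNormedAddCommGroup
      (fun t => min (Real.exp (c * |t|)) N) (by fun_prop) N (fun t => by
        have h0 : 0 ≤ min (Real.exp (c * |t|)) (N : ℝ) := le_min (Real.exp_pos _).le (by positivity)
        rw [Real.norm_eq_abs, abs_of_nonneg h0]; exact min_le_right _ _)
    have h1 := ProbabilityMeasure.tendsto_iff_forall_integral_tendsto.1 hlim f
    refine le_of_tendsto' h1 fun n => ?_
    refine le_trans ?_ (hrb (n + 1) (by omega))
    have : IsProbabilityMeasure (r (n + 1)) := hprob n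
    exact integral_mono (f.integrable (r (n + 1))) (hri (n + 1) (by omega)) fun t => min_le_left _ _
  have hInt : Integrable (fun t => Real.exp (c * |t|)) ρ := by
    refine ⟨by fun_prop, ?_⟩
    rw [hasFiniteIntegral_iff_ofReal (Eventually.of_forall fun t => (Real.exp_pos _).le)]
    have hle : ∫⁻ t, ENNReal.ofReal (Real.exp (c * |t|)) ∂ρ ≤ ENNReal.ofReal 8 := by
      calc ∫⁻ t, ENNReal.ofReal (Real.exp (c * |t|)) ∂ρ
          = ∫⁻ t, liminf (fun N : ℕ => ENNReal.ofReal (min (Real.exp (c * |t|)) N)) atTop ∂ρ := by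
            refine lintegral_congr fun t => ?_
            symm
            apply Tendsto.liminf_eq
            apply tendsto_const_nhds.congr'
            obtain ⟨N0, hN0⟩ := exists_nat_ge (Real.exp (c * |t|))
            filter_upwards [eventually_ge_atTop N0] with N hN
            rw [min_eq_left (hN0.trans (by exact_mod_cast hN))]
        _ ≤ liminf (fun N : ℕ => ∫⁻ t, ENNReal.ofReal (min (Real.exp (c * |t|)) N) ∂ρ) atTop :=
            lintegral_liminf_le fun n => by fun_prop
        _ ≤ ENNReal.ofReal 8 := by
            refine liminf_le_of_le (by isBoundedDefault) fun b hb => ?_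
            obtain ⟨N, hN⟩ := hb.exists
            refine hN.trans ?_
            rw [← ofReal_integral_eq_lintegral_ofReal]
            · exact ENNReal.ofReal_le_ofReal (htr N)
            · refine Integrable.of_bound (by fun_prop) (N : ℝ) (Eventually.of_forall fun t => ?_)
              have h0 : 0 ≤ min (Real.exp (c * |t|)) (N : ℝ) := le_min (Real.exp_pos _).le (by positivity)
              rw [Real.norm_eq_abs, abs_of_nonneg h0]; exact min_le_right _ _
            · exact Eventually.of_forall fun t => le_min (Real.exp_pos _).le (by positivity)
    exact hle.trans_lt ENNReal.ofReal_lt_top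
  have hexpI : ∀ e : ℝ, |e| ≤ c → Integrable (fun t => Real.exp (e * t)) ρ := by
    intro e he
    refine hInt.mono' (by fun_prop) (Eventually.of_forall fun t => ?_)
    rw [Real.norm_eq_abs, abs_of_pos (Real.exp_pos _)]
    apply Real.exp_le_exp.2
    calc e * t ≤ |e * t| := le_abs_self _
      _ = |e| * |t| := abs_mul _ _
      _ ≤ _ := by gcongr
  have hsub : Ioo (-c) c ⊆ interior (ProbabilityTheory.integrableExpSet id ρ) := by
    apply interior_maximal _ isOpen_Ioo
    intro e he
    exact hexpI e (abs_le.2 ⟨he.1.le, he.2.le⟩)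
  have hEq : EqOn (fun z => ProbabilityTheory.complexMGF id ρ z * HP ν δ z) (fun _ => 1) {z : ℂ | z.re ∈ Ioo (-c) c} := by
    refine AnalyticOnNhd.eqOn_of_preconnected_of_frequently_eq (z₀ := 0) ?_ ?_ ?_ ?_ ?_
    · refine AnalyticOnNhd.mul ?_ ?_
      · exact ProbabilityTheory.analyticOnNhd_complexMGF.mono fun z hz => hsub hz
      · exact fun z _ => (H_P_diff ν δ hν hδ).analyticAt z
    · exact analyticOnNhd_const
    · apply Convex.isPreconnected
      exact (convex_Ioo (-c) c).is_linear_preimage (f := Complex.re) ⟨by simp, by simp⟩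
    · simp [hc]
    · have ht : Tendsto (fun n : ℕ => (((1 / ((n:ℝ) + 1) : ℝ) : ℂ) * Complex.I)) atTop (𝓝[≠] 0) := by
        refine tendsto_nhdsWithin_iff.2 ⟨?_, ?_⟩
        · have h1 := (Complex.continuous_ofReal.tendsto _).comp (tendsto_one_div_add_atTop_nhds_zero_nat (𝕜 := ℝ))
          have h2 := h1.mul_const Complex.I
          simpa [Function.comp_def] using h2
        · refine Eventually.of_forall fun n => ?_
          have : (1 / ((n:ℝ) + 1)) ≠ 0 := by positivity
          simp only [mem_compl_iff, mem_singleton_iff, mul_eq_zero, Complex.I_ne_zero, or_false, Complex.ofReal_eq_zero]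
          exact this
      refine ht.frequently (Eventually.of_forall fun n => ?_).frequently
      rw [ProbabilityTheory.complexMGF_id_mul_I, hcfρ]
      exact inv_mul_cancel₀ (hP1 _)
  refine ⟨c / 2, by positivity, ρ, ⟨hρp, fun z hz => ⟨?_, ?_⟩⟩, ?_⟩
  · refine (hexpI z.re (by linarith)).mono' (by fun_prop) (Eventually.of_forall fun t => ?_)
    rw [Complex.norm_exp]; simp
  · rw [abs_le] at hz
    exact hEq (show z ∈ {z : ℂ | z.re ∈ Ioo (-c) c} from ⟨by linarith, by linarith⟩)
  · refine hInt.mono' (by fun_prop) (Eventually.of_forall fun t => ?_)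
    rw [Real.norm_eq_abs, abs_of_pos (Real.exp_pos _)]
    apply Real.exp_le_exp.2
    have := abs_nonneg t
    nlinarith


lemma K_m (μ : SignedMeasure ℝ) : Measurable (fun x => μ (Iic x)) ∧
    ∃ T, Tendsto (fun x => μ (Iic x)) atTop (𝓝 T) := by
  have h : ∀ x, μ (Iic x) = μ.toJordanDecomposition.posPart.real (Iic x) - μ.toJordanDecomposition.negPart.real (Iic x) := by
    intro x
    conv_lhs => rw [← μ.toSignedMeasure_toJordanDecomposition]
    rw [JordanDecomposition.toSignedMeasure, VectorMeasure.sub_apply,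
      Measure.toSignedMeasure_apply_measurable measurableSet_Iic, Measure.toSignedMeasure_apply_measurable measurableSet_Iic]
  have hmono : ∀ (p : Measure ℝ) [IsFiniteMeasure p], Monotone fun x => p.real (Iic x) :=
    fun p _ x y hxy => measureReal_mono (Iic_subset_Iic.2 hxy)
  have hlim : ∀ (p : Measure ℝ) [IsFiniteMeasure p], Tendsto (fun x => p.real (Iic x)) atTop (𝓝 (p.real univ)) := by
    intro p _
    exact (ENNReal.tendsto_toReal (measure_ne_top p univ)).comp (tendsto_measure_Iic_atTop p)
  simp only [h]
  exact ⟨(hmono _).measurable.sub (hmono _).measurable, _, (hlim _).sub (hlim _)⟩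

lemma K_exp_int (δ : ℝ) (z : ℂ) (hz : 0 < z.re) : IntegrableOn (fun l : ℝ => Real.exp (-(z.re * l))) (Ioi (-δ)) ∧
    ∫ l in Ioi (-δ), Real.exp (-(z.re * l)) = Real.exp (z.re * δ) / z.re := by
  have h := integrableOn_exp_mul_Ioi (a := -z.re) (by linarith) (-δ)
  have h2 := integral_exp_mul_Ioi (a := -z.re) (by linarith) (-δ)
  simp only [neg_mul] at h h2
  refine ⟨h, ?_⟩
  rw [h2]
  rw [mul_neg, neg_neg, neg_div_neg_eq]

lemma K_int (δ : ℝ) (m : ℝ → ℝ) (hm : Measurable m) (h0 : ∀ x, 0 ≤ m x) (h1 : ∀ x, m x ≤ 1)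
    (hs : ∀ x, x < -δ → m x = 0) (z : ℂ) (hz : 0 < z.re) :
    Integrable (fun l : ℝ => (m l : ℂ) * Complex.exp (-(z * l))) ∧
    ‖∫ l : ℝ, (m l : ℂ) * Complex.exp (-(z * l))‖ ≤ Real.exp (z.re * δ) / z.re := by
  obtain ⟨a, b⟩ := K_exp_int δ z hz
  have hae : ∀ᵐ l : ℝ, l ≠ -δ := by simp [ae_iff]
  have hbd : ∀ᵐ l : ℝ, ‖(m l : ℂ) * Complex.exp (-(z * l))‖ ≤ (Ioi (-δ)).indicator (fun l : ℝ => Real.exp (-(z.re * l))) l := by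
    filter_upwards [hae] with l hl
    rw [norm_mul, Complex.norm_exp, Complex.norm_real, Real.norm_eq_abs, abs_of_nonneg (h0 l)]
    by_cases h : l ∈ Ioi (-δ)
    · rw [indicator_of_mem h]
      simp only [Complex.neg_re, Complex.mul_re, Complex.ofReal_re, Complex.ofReal_im, mul_zero, sub_zero]
      exact mul_le_of_le_one_left (Real.exp_pos _).le (h1 l)
    · rw [indicator_of_notMem h, hs l (lt_of_le_of_ne (not_lt.1 h) hl)]; simp
  have hi : Integrable ((Ioi (-δ)).indicator (fun l : ℝ => Real.exp (-(z.re * l)))) := a.integrable_indicator measurableSet_Ioi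
  refine ⟨hi.mono' (by fun_prop) hbd, ?_⟩
  rw [← b, ← integral_indicator measurableSet_Ioi]
  exact norm_integral_le_of_norm_le hi hbd

lemma K_T (δ : ℝ) (m : ℝ → ℝ) (hm : Measurable m) (h0 : ∀ x, 0 ≤ m x) (h1 : ∀ x, m x ≤ 1)
    (hs : ∀ x, x < -δ → m x = 0) (T : ℝ) (hT : Tendsto m atTop (𝓝 T))
    (hH3 : Tendsto (fun y : ℝ => (1 / y) * ∫ x in Iic y, m x) atTop (𝓝 1)) : 1 ≤ T := by
  by_contra hcon
  push Not at hcon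
  obtain ⟨r, hr1, hr2⟩ := exists_between hcon
  obtain ⟨X, hX⟩ := eventually_atTop.1 (hT.eventually_lt_const hr1)
  have hInt : ∀ y, IntegrableOn m (Iic y) := by
    intro y
    have : IntegrableOn m (Icc (-δ) y) := by
      refine Measure.integrableOn_of_bounded (M := 1) (by simp) hm.aestronglyMeasurable (Eventually.of_forall fun x => ?_)
      rw [Real.norm_eq_abs, abs_of_nonneg (h0 x)]; exact h1 x
    refine this.of_forall_diff_eq_zero measurableSet_Iic fun x hx => hs x ?_
    by_contra hc
    exact hx.2 ⟨not_lt.1 hc, hx.1⟩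
  have hbound : ∀ᶠ y : ℝ in atTop, (1 / y) * ∫ x in Iic y, m x ≤ ((∫ x in Iic X, m x) - r * X) / y + r := by
    filter_upwards [eventually_ge_atTop X, eventually_gt_atTop 0] with y hy hy0
    have e : ∫ x in Iic y, m x = (∫ x in Iic X, m x) + ∫ x in Ioc X y, m x := by
      rw [← Iic_union_Ioc_eq_Iic hy, setIntegral_union (Iic_disjoint_Ioc le_rfl) measurableSet_Ioc (hInt X)
        ((hInt y).mono_set Ioc_subset_Iic_self)]
    have e2 : ∫ x in Ioc X y, m x ≤ r * (y - X) := by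
      calc _ ≤ ∫ x in Ioc X y, r := setIntegral_mono_on ((hInt y).mono_set Ioc_subset_Iic_self) (by simp) measurableSet_Ioc
            fun x hx => (hX x hx.1.le).le
        _ = _ := by simp [hy, mul_comm]
    rw [e]
    calc _ ≤ (1 / y) * ((∫ x in Iic X, m x) + r * (y - X)) := by gcongr
      _ = _ := by field_simp; ring
  have hlim : Tendsto (fun y : ℝ => ((∫ x in Iic X, m x) - r * X) / y + r) atTop (𝓝 (0 + r)) :=
    (tendsto_const_nhds.div_atTop tendsto_id).add_const r
  have := le_of_tendsto_of_tendsto hH3 hlim hbound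
  linarith

lemma K_f_lower (δ : ℝ) (m : ℝ → ℝ) (hm : Measurable m) (h0 : ∀ x, 0 ≤ m x) (h1 : ∀ x, m x ≤ 1)
    (hs : ∀ x, x < -δ → m x = 0) (r Y : ℝ) (hr : ∀ l, Y ≤ l → r ≤ m l) (x : ℝ) (hx : 0 < x) :
    r * Real.exp (-(x * Y)) ≤ ∫ l : ℝ, x * Real.exp (-l * x) * m l := by
  have hi := (K_int δ m hm h0 h1 hs (x : ℂ) (by simpa using hx)).1
  have hi2 : Integrable fun l : ℝ => x * Real.exp (-l * x) * m l := by
    have := (hi.re).const_mul x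
    refine this.congr (Eventually.of_forall fun l => ?_)
    have : (m l : ℂ) * Complex.exp (-(x * l)) = ((m l * Real.exp (-(x * l)) : ℝ) : ℂ) := by push_cast; rfl
    simp only [this]
    rw [show (RCLike.re ((m l * Real.exp (-(x * l)) : ℝ) : ℂ)) = m l * Real.exp (-(x * l)) from rfl]
    rw [show -l * x = -(x * l) by ring]; ring
  obtain ⟨a, b⟩ := K_exp_int (-Y) (x : ℂ) (by simpa using hx)
  simp only [neg_neg, Complex.ofReal_re] at a b
  calc r * Real.exp (-(x * Y)) = ∫ l in Ioi Y, r * x * Real.exp (-(x * l)) := by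
        rw [integral_const_mul, b]; field_simp
    _ ≤ ∫ l in Ioi Y, x * Real.exp (-l * x) * m l := by
        refine setIntegral_mono_on (a.const_mul _) hi2.integrableOn measurableSet_Ioi fun l hl => ?_
        rw [show -l * x = -(x * l) by ring]
        have h2 := hr l (le_of_lt hl)
        have h3 := mul_pos hx (Real.exp_pos (-(x * l)))
        nlinarith
    _ ≤ _ := setIntegral_le_integral hi2 (Eventually.of_forall fun l => by have := h0 l; positivity)

lemma K_M0 (δ : ℝ) (m : ℝ → ℝ) (hm : Measurable m) (h0 : ∀ x, 0 ≤ m x) (h1 : ∀ x, m x ≤ 1)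
    (hs : ∀ x, x < -δ → m x = 0) (T : ℝ) (hT : Tendsto m atTop (𝓝 T)) (hT1 : 1 ≤ T)
    (M : ℝ → ℝ) (hM : Continuous M) (hMf : ∀ x, 0 < x → (∫ l : ℝ, x * Real.exp (-l * x) * m l) ≤ M x) : 1 ≤ M 0 := by
  refine le_of_forall_lt fun r hr => ?_
  obtain ⟨r', hr1, hr2⟩ := exists_between hr
  refine hr1.trans_le ?_
  obtain ⟨Y, hY⟩ := eventually_atTop.1 (hT.eventually_const_lt (hr2.trans_le hT1))
  have hl : Tendsto (fun x : ℝ => r' * Real.exp (-(x * Y))) (𝓝[>] 0) (𝓝 (r' * Real.exp (-(0 * Y)))) :=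
    (Continuous.tendsto (by fun_prop) 0).mono_left nhdsWithin_le_nhds
  have hr' : Tendsto M (𝓝[>] 0) (𝓝 (M 0)) := (hM.tendsto 0).mono_left nhdsWithin_le_nhds
  have := le_of_tendsto_of_tendsto hl hr' (by
    filter_upwards [self_mem_nhdsWithin] with x hx
    exact (K_f_lower δ m hm h0 h1 hs r' Y (fun l hl => (hY l hl).le) x hx).trans (hMf x hx))
  simpa using this


noncomputable def LV (v : ℝ → ℝ) (z : ℂ) : ℂ := ∫ t : ℝ, (v t : ℂ) * Complex.exp (-(z * t))

lemma L_holo (v : ℝ → ℝ) (hv : Measurable v) (h0 : ∀ t, 0 ≤ v t) (I : Set ℝ) (hI : IsOpen I)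
    (hInt : ∀ x ∈ I, Integrable fun t : ℝ => v t * Real.exp (-(x * t))) :
    DifferentiableOn ℂ (LV v) {z | z.re ∈ I} := by
  let d : ℝ → NNReal := fun t => Real.toNNReal (v t)
  have hdm : Measurable d := hv.real_toNNReal
  have hdv : ∀ t, ((d t : ℝ)) = v t := fun t => Real.coe_toNNReal _ (h0 t)
  have hJ : IsOpen (Neg.neg ⁻¹' I) := hI.preimage continuous_neg
  have hsub : Neg.neg ⁻¹' I ⊆ interior (ProbabilityTheory.integrableExpSet id (volume.withDensity fun t => (d t : ENNReal))) := by
    apply interior_maximal _ hJ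
    intro e he
    have := hInt (-e) he
    change Integrable (fun t => Real.exp (e * t)) _
    rw [integrable_withDensity_iff_integrable_smul hdm]
    refine this.congr (Eventually.of_forall fun t => ?_)
    simp only [neg_mul, neg_neg]
    rw [NNReal.smul_def, hdv, smul_eq_mul]
  have hE : LV v = fun z => ProbabilityTheory.complexMGF id (volume.withDensity fun t => (d t : ENNReal)) (-z) := by
    funext z
    unfold LV ProbabilityTheory.complexMGF
    rw [integral_withDensity_eq_integral_smul hdm]
    congr 1; funext t
    rw [NNReal.smul_def, hdv, Complex.real_smul, neg_mul]; rfl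
  rw [hE]
  refine (ProbabilityTheory.differentiableOn_complexMGF).comp differentiable_neg.differentiableOn ?_
  intro z hz
  exact hsub (by simpa using hz)

lemma L_real (v : ℝ → ℝ) (x : ℝ) : LV v x = ((∫ t : ℝ, v t * Real.exp (-(x * t)) : ℝ) : ℂ) := by
  unfold LV
  rw [← integral_complex_ofReal]
  congr 1; funext t; push_cast; rfl

lemma L_norm (v : ℝ → ℝ) (h0 : ∀ t, 0 ≤ v t) (z : ℂ) : ‖LV v z‖ ≤ ∫ t : ℝ, v t * Real.exp (-(z.re * t)) := by
  unfold LV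
  refine (norm_integral_le_integral_norm _).trans (le_of_eq ?_)
  congr 1; funext t
  rw [norm_mul, Complex.norm_exp, Complex.norm_real, Real.norm_eq_abs, abs_of_nonneg (h0 t)]
  simp

lemma L_cint (v : ℝ → ℝ) (hv : Measurable v) (h0 : ∀ t, 0 ≤ v t) (z : ℂ)
    (h : Integrable fun t : ℝ => v t * Real.exp (-(z.re * t))) :
    Integrable fun t : ℝ => (v t : ℂ) * Complex.exp (-(z * t)) := by
  refine h.mono' (by fun_prop) (Eventually.of_forall fun t => ?_)
  rw [norm_mul, Complex.norm_exp, Complex.norm_real, Real.norm_eq_abs, abs_of_nonneg (h0 t)]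
  simp

/-- bound on the right half line -/
lemma L_right (δ : ℝ) (v : ℝ → ℝ) (hv : Measurable v) (h0 : ∀ t, 0 ≤ v t) (h1 : ∀ t, v t ≤ 1)
    (hs : ∀ t, t < -δ → v t = 0) (x : ℝ) (hx : 0 < x) :
    Integrable (fun t : ℝ => v t * Real.exp (-(x * t))) ∧
    ∫ t : ℝ, v t * Real.exp (-(x * t)) ≤ Real.exp (x * δ) / x := by
  obtain ⟨a, b⟩ := K_int δ v hv h0 h1 hs (x : ℂ) (by simpa using hx)
  have e : (fun l : ℝ => (v l : ℂ) * Complex.exp (-(x * l))) = fun l : ℝ => ((v l * Real.exp (-(x * l)) : ℝ) : ℂ) := by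
    funext l; push_cast; rfl
  rw [e] at a b
  rw [integral_complex_ofReal, Complex.norm_real] at b
  exact ⟨a.re, (le_abs_self _).trans b⟩

/-- bound on the left half line -/
lemma L_left (v : ℝ → ℝ) (hv : Measurable v) (h0 : ∀ t, 0 ≤ v t) (hs : ∀ t, 0 < t → v t = 0)
    (K c x : ℝ) (hK : 0 ≤ K) (hb : ∀ t, v t ≤ K * Real.exp (c * t)) (hx : x < c) :
    Integrable (fun t : ℝ => v t * Real.exp (-(x * t))) ∧
    ∫ t : ℝ, v t * Real.exp (-(x * t)) ≤ K / (c - x) := by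
  have a := (integrableOn_exp_mul_Iic (a := c - x) (by linarith) 0).const_mul K
  have b := integral_exp_mul_Iic (a := c - x) (by linarith) 0
  have hle : ∀ t, v t * Real.exp (-(x * t)) ≤ (Iic 0).indicator (fun t => K * Real.exp ((c - x) * t)) t := by
    intro t
    by_cases ht : t ∈ Iic (0:ℝ)
    · rw [indicator_of_mem ht]
      calc _ ≤ K * Real.exp (c * t) * Real.exp (-(x * t)) := by gcongr; exact hb t
        _ = _ := by rw [mul_assoc, ← Real.exp_add]; ring_nf
    · rw [indicator_of_notMem ht, hs t (not_le.1 ht)]; simp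
  have hI : Integrable ((Iic (0:ℝ)).indicator (fun t => K * Real.exp ((c - x) * t))) :=
    IntegrableOn.integrable_indicator a measurableSet_Iic
  have hi : Integrable (fun t : ℝ => v t * Real.exp (-(x * t))) := by
    refine hI.mono' (by fun_prop) (Eventually.of_forall fun t => ?_)
    rw [Real.norm_eq_abs, abs_of_nonneg (mul_nonneg (h0 t) (Real.exp_pos _).le)]
    exact hle t
  refine ⟨hi, (integral_mono hi hI hle).trans (le_of_eq ?_)⟩
  rw [integral_indicator measurableSet_Iic, integral_const_mul, b]
  simp [div_eq_mul_inv]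

lemma L_u (δ c : ℝ) (hc : 0 < c) (m : ℝ → ℝ) (hm : Measurable m) (h0 : ∀ x, 0 ≤ m x) (h1 : ∀ x, m x ≤ 1)
    (hs : ∀ x, x < -δ → m x = 0) (ρ : Measure ℝ) (P : ℂ → ℂ) (hP : ∀ z, P (-z) = P z)
    (hρ : GLap ρ c P) (hρi : Integrable (fun t => Real.exp (c * |t|)) ρ) :
    ∃ (u : ℝ → ℝ) (K : ℝ), Measurable u ∧ (∀ t, 0 ≤ u t) ∧ (∀ t, u t ≤ 1) ∧ 0 ≤ K ∧ (∀ t, u t ≤ K * Real.exp (c * t)) ∧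
      ∀ z : ℂ, 0 < z.re → z.re < c → P z * LV u z = LV m z := by
  have hprob := hρ.1
  have hmint : ∀ t, Integrable (fun s => m (t - s)) ρ := by
    intro t
    refine Integrable.of_bound (by apply Measurable.aestronglyMeasurable; fun_prop) 1 (Eventually.of_forall fun s => ?_)
    rw [Real.norm_eq_abs, abs_of_nonneg (h0 _)]; exact h1 _
  refine ⟨fun t => ∫ s, m (t - s) ∂ρ, ∫ s, Real.exp (c * (δ + |s|)) ∂ρ, ?_, ?_, ?_, ?_, ?_, ?_⟩
  · have : StronglyMeasurable (Function.uncurry fun t s : ℝ => m (t - s)) := by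
      apply Measurable.stronglyMeasurable; unfold Function.uncurry; fun_prop
    exact this.integral_prod_right.measurable
  · exact fun t => integral_nonneg fun s => h0 _
  · intro t
    calc _ ≤ ∫ s, (1:ℝ) ∂ρ := integral_mono (hmint t) (by simp) fun s => h1 _
      _ = 1 := by simp
  · exact integral_nonneg fun s => (Real.exp_pos _).le
  · intro t
    have hi : Integrable (fun s => Real.exp (c * (δ + |s|)) * Real.exp (c * t)) ρ := by
      have := (hρi.const_mul (Real.exp (c * δ))).mul_const (Real.exp (c * t))
      refine this.congr (Eventually.of_forall fun s => ?_)
      simp only; rw [← Real.exp_add]; ring_nf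
    rw [← integral_mul_const]
    refine integral_mono (hmint t) hi fun s => ?_
    simp only
    rw [← Real.exp_add]
    by_cases hts : t - s < -δ
    · rw [hs _ hts]; exact (Real.exp_pos _).le
    · refine (h1 _).trans (Real.one_le_exp ?_)
      have := neg_abs_le s
      have : 0 ≤ δ + |s| + t := by linarith [le_abs_self s, neg_abs_le s]
      nlinarith
  · intro z hz0 hzc
    obtain ⟨mi, -⟩ := K_int δ m hm h0 h1 hs z hz0
    have hz' : |(-z).re| ≤ c := by rw [Complex.neg_re, abs_neg, abs_of_pos hz0]; exact hzc.le
    obtain ⟨ei, ev⟩ := hρ.2 (-z) hz'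
    have key : ∀ s t : ℝ, (m (t - s) : ℂ) * Complex.exp (-(z * t)) =
        Complex.exp (-z * s) * ((m (t - s) : ℂ) * Complex.exp (-(z * ((t - s : ℝ) : ℂ)))) := by
      intro s t
      rw [mul_left_comm, ← Complex.exp_add]; push_cast; ring_nf
    have hprod : Integrable (Function.uncurry fun (s t : ℝ) => (m (t - s) : ℂ) * Complex.exp (-(z * t))) (ρ.prod volume) := by
      rw [integrable_prod_iff (by unfold Function.uncurry; apply Measurable.aestronglyMeasurable; fun_prop)]
      constructor
      · refine Eventually.of_forall fun s => ?_
        simp only [Function.uncurry, key]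
        exact (mi.comp_sub_right s).const_mul _
      · simp only [Function.uncurry, key, norm_mul (Complex.exp (-z * _))]
        have : ∀ s : ℝ, ∫ t : ℝ, ‖Complex.exp (-z * s)‖ * ‖(m (t - s) : ℂ) * Complex.exp (-(z * ((t - s : ℝ) : ℂ)))‖ =
            ‖Complex.exp (-z * s)‖ * ∫ t : ℝ, ‖(m t : ℂ) * Complex.exp (-(z * t))‖ := by
          intro s
          rw [integral_const_mul]
          congr 1
          exact integral_sub_right_eq_self (fun t : ℝ => ‖(m t : ℂ) * Complex.exp (-(z * t))‖) s
        simp only [this]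
        exact ei.norm.mul_const _
    have hswap := integral_integral_swap hprod
    have hl : ∀ s : ℝ, ∫ t : ℝ, (m (t - s) : ℂ) * Complex.exp (-(z * t)) = Complex.exp (-z * s) * LV m z := by
      intro s
      simp only [key]
      rw [integral_const_mul]
      congr 1
      exact integral_sub_right_eq_self (fun t : ℝ => (m t : ℂ) * Complex.exp (-(z * t))) s
    simp only [hl] at hswap
    rw [integral_mul_const] at hswap
    have hu : LV (fun t => ∫ s, m (t - s) ∂ρ) z = ∫ t : ℝ, ∫ s : ℝ, (m (t - s) : ℂ) * Complex.exp (-(z * t)) ∂ρ := by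
      unfold LV
      congr 1; funext t
      rw [integral_mul_const, integral_complex_ofReal]
    rw [hu, ← hswap, ← mul_assoc, mul_comm (P z), ← hP z, ev, one_mul]


lemma M_core (δ c K : ℝ) (hδ : 0 < δ) (hc : 0 < c) (hK : 0 ≤ K) (m u : ℝ → ℝ) (hm : Measurable m)
    (h0 : ∀ x, 0 ≤ m x) (h1 : ∀ x, m x ≤ 1) (hs : ∀ x, x < -δ → m x = 0)
    (P : ℂ → ℂ) (hPd : Differentiable ℂ P) (hPb : ∀ z, ‖P z‖ ≤ Real.exp (δ * ‖z‖))
    (hPr : ∀ x : ℝ, P x = (((P x).re : ℝ) : ℂ) ∧ 0 ≤ (P x).re)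
    (hu : Measurable u) (hu0 : ∀ t, 0 ≤ u t) (hu1 : ∀ t, u t ≤ 1) (huK : ∀ t, u t ≤ K * Real.exp (c * t))
    (hPu : ∀ z : ℂ, 0 < z.re → z.re < c → P z * LV u z = LV m z) :
    ∃ L : ℂ → ℂ, Differentiable ℂ L ∧
      (∃ D : ℝ, 0 ≤ D ∧ ∀ z, ‖L z‖ ≤ D * ‖z‖ * Real.exp (δ * ‖z‖)) ∧ 
      (∀ x : ℝ, (L x).im = 0) ∧
      (∀ x : ℝ, x ≤ 0 → (L x).re ≤ 0 ∧ 0 ≤ (L x).re + (P x).re) ∧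
      (∀ x : ℝ, 0 < x → (L x).re ≤ x * ∫ t : ℝ, m t * Real.exp (-(x * t)) ∧
        x * (∫ t : ℝ, m t * Real.exp (-(x * t))) ≤ (L x).re + (P x).re) := by
  set a : ℝ → ℝ := (Iic 0).indicator u with ha
  set b : ℝ → ℝ := (Ioi 0).indicator u with hb
  have ham : Measurable a := hu.indicator measurableSet_Iic
  have hbm : Measurable b := hu.indicator measurableSet_Ioi
  have ha0 : ∀ t, 0 ≤ a t := fun t => indicator_nonneg (fun t _ => hu0 t) t
  have hb0 : ∀ t, 0 ≤ b t := fun t => indicator_nonneg (fun t _ => hu0 t) t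
  have hau : ∀ t, a t ≤ u t := fun t => indicator_le_self' (fun t _ => hu0 t) t
  have hbu : ∀ t, b t ≤ u t := fun t => indicator_le_self' (fun t _ => hu0 t) t
  have has : ∀ t, 0 < t → a t = 0 := fun t ht => indicator_of_notMem (by simpa using ht) _
  have hbs : ∀ t, t < -(0:ℝ) → b t = 0 := fun t ht => indicator_of_notMem (by simp at ht ⊢; exact ht.le) _
  have hab : ∀ t, u t = a t + b t := by
    intro t
    by_cases h : t ≤ 0
    · simp [ha, hb, h]
    · simp [ha, hb, h, not_le.1 h]
  have hAl := fun x (hx : x < c) => L_left a ham ha0 has K c x hK (fun t => (hau t).trans (huK t)) hx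
  have hAl0 := fun x (hx : x < 0) => L_left a ham ha0 has 1 0 x zero_le_one
    (fun t => by simpa using (hau t).trans (hu1 t)) hx
  have hBr := fun x (hx : 0 < x) => L_right 0 b hbm hb0 (fun t => (hbu t).trans (hu1 t)) hbs x hx
  have hFr := fun x (hx : 0 < x) => L_right δ m hm h0 h1 hs x hx
  have hAd := L_holo a ham ha0 (Iio c) isOpen_Iio (fun x hx => (hAl x hx).1)
  have hBd := L_holo b hbm hb0 (Ioi 0) isOpen_Ioi (fun x hx => (hBr x hx).1)
  have hFd := L_holo m hm h0 (Ioi 0) isOpen_Ioi (fun x hx => (hFr x hx).1)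
  have key : ∀ z : ℂ, 0 < z.re → z.re < c → z * P z * LV a z = z * LV m z - z * P z * LV b z := by
    intro z hz hzc
    have : LV u z = LV a z + LV b z := by
      unfold LV
      rw [← integral_add (L_cint a ham ha0 z (hAl _ hzc).1) (L_cint b hbm hb0 z (hBr _ hz).1)]
      congr 1; funext t; rw [hab]; push_cast; ring
    rw [← hPu z hz hzc, this]; ring
  set L : ℂ → ℂ := fun z => if z.re < c / 2 then z * P z * LV a z else z * LV m z - z * P z * LV b z with hL
  have hL1 : ∀ z : ℂ, z.re < c → L z = z * P z * LV a z := by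
    intro z hz
    simp only [hL]
    split_ifs with h
    · rfl
    · exact (key z (by push Not at h; linarith) hz).symm
  have hL2 : ∀ z : ℂ, 0 < z.re → L z = z * LV m z - z * P z * LV b z := by
    intro z hz
    simp only [hL]
    split_ifs with h
    · exact key z hz (by linarith)
    · rfl
  have o1 : IsOpen {z : ℂ | z.re ∈ Iio c} := isOpen_Iio.preimage Complex.continuous_re
  have o2 : IsOpen {z : ℂ | z.re ∈ Ioi (0:ℝ)} := isOpen_Ioi.preimage Complex.continuous_re
  refine ⟨L, ?_, ⟨(2 * K + 4) / c, by positivity, ?_⟩, ?_, ?_, ?_⟩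
  · intro z
    by_cases h : z.re < c
    · have h' := (hAd.differentiableAt (o1.mem_nhds h))
      have : DifferentiableAt ℂ (fun z => z * P z * LV a z) z := (differentiableAt_id.mul (hPd z)).mul h'
      exact this.congr_of_eventuallyEq (by filter_upwards [o1.mem_nhds h] with w hw using hL1 w hw)
    · have hz : 0 < z.re := by push Not at h; linarith
      have h' := (hBd.differentiableAt (o2.mem_nhds hz))
      have h'' := (hFd.differentiableAt (o2.mem_nhds hz))
      have : DifferentiableAt ℂ (fun z => z * LV m z - z * P z * LV b z) z :=
        (differentiableAt_id.mul h'').sub ((differentiableAt_id.mul (hPd z)).mul h')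
      exact this.congr_of_eventuallyEq (by filter_upwards [o2.mem_nhds hz] with w hw using hL2 w hw)
  · intro z
    have hn := norm_nonneg z
    have he := Real.exp_pos (δ * ‖z‖)
    by_cases h : z.re < c / 2
    · rw [hL1 z (by linarith), norm_mul, norm_mul]
      have hA : ‖LV a z‖ ≤ 2 * K / c := by
        refine (L_norm a ha0 z).trans ((hAl z.re (by linarith)).2.trans ?_)
        rw [div_le_div_iff₀ (by linarith) hc]
        nlinarith
      calc _ ≤ ‖z‖ * Real.exp (δ * ‖z‖) * (2 * K / c) := by
            gcongr; exact hPb z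
        _ ≤ ‖z‖ * Real.exp (δ * ‖z‖) * ((2 * K + 4) / c) := by gcongr; linarith
        _ = _ := by ring
    · push Not at h
      have hz : 0 < z.re := by linarith
      have hi : 1 / z.re ≤ 2 / c := by rw [div_le_div_iff₀ hz hc]; linarith
      have hB : ‖LV b z‖ ≤ 2 / c := by
        refine (L_norm b hb0 z).trans ((hBr z.re hz).2.trans ?_)
        simpa using hi
      have hF : ‖LV m z‖ ≤ Real.exp (δ * ‖z‖) * (2 / c) := by
        refine (L_norm m h0 z).trans ((hFr z.re hz).2.trans ?_)
        rw [div_eq_mul_one_div]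
        have := Complex.re_le_norm z
        rw [mul_comm z.re δ]
        gcongr
      rw [hL2 z hz]
      calc _ ≤ ‖z‖ * ‖LV m z‖ + ‖z‖ * ‖P z‖ * ‖LV b z‖ := by
            refine (norm_sub_le _ _).trans ?_
            rw [norm_mul, norm_mul, norm_mul]
        _ ≤ ‖z‖ * (Real.exp (δ * ‖z‖) * (2 / c)) + ‖z‖ * Real.exp (δ * ‖z‖) * (2 / c) := by
            gcongr; exact hPb z
        _ = 4 / c * ‖z‖ * Real.exp (δ * ‖z‖) := by ring
        _ ≤ _ := by gcongr; linarith
  · intro x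
    by_cases h : x < c
    · rw [hL1 x (by simpa using h), L_real, (hPr x).1, ← Complex.ofReal_mul, ← Complex.ofReal_mul, Complex.ofReal_im]
    · rw [hL2 x (by simp; push Not at h; linarith), L_real, L_real, (hPr x).1, ← Complex.ofReal_mul, ← Complex.ofReal_mul,
        ← Complex.ofReal_mul, ← Complex.ofReal_sub, Complex.ofReal_im]
  · intro x hx
    have e : (L x).re = x * (P x).re * ∫ t : ℝ, a t * Real.exp (-(x * t)) := by
      rw [hL1 x (by simp; linarith), L_real, (hPr x).1, ← Complex.ofReal_mul, ← Complex.ofReal_mul, Complex.ofReal_re, Complex.ofReal_re]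
    have hA0 : 0 ≤ ∫ t : ℝ, a t * Real.exp (-(x * t)) := integral_nonneg fun t => mul_nonneg (ha0 t) (Real.exp_pos _).le
    have hp := (hPr x).2
    rw [e]
    constructor
    · exact mul_nonpos_of_nonpos_of_nonneg (mul_nonpos_of_nonpos_of_nonneg hx hp) hA0
    · rcases hx.lt_or_eq with hx | hx
      · have := (hAl0 x hx).2
        rw [zero_sub, le_div_iff₀ (by linarith)] at this
        nlinarith
      · rw [show (x * (P x).re * ∫ t : ℝ, a t * Real.exp (-(x * t))) = 0 by rw [hx]; ring, zero_add]; exact hp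
  · intro x hx
    have e : (L x).re = x * (∫ t : ℝ, m t * Real.exp (-(x * t))) - x * (P x).re * ∫ t : ℝ, b t * Real.exp (-(x * t)) := by
      rw [hL2 x (by simpa using hx), L_real, L_real, (hPr x).1, ← Complex.ofReal_mul, ← Complex.ofReal_mul,
        ← Complex.ofReal_mul, ← Complex.ofReal_sub, Complex.ofReal_re, Complex.ofReal_re]
    have hB0 : 0 ≤ ∫ t : ℝ, b t * Real.exp (-(x * t)) := integral_nonneg fun t => mul_nonneg (hb0 t) (Real.exp_pos _).le
    have hp := (hPr x).2
    have hB := (hBr x hx).2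
    rw [mul_zero, Real.exp_zero, le_div_iff₀ hx] at hB
    rw [e]
    constructor
    · have : 0 ≤ x * (P x).re * ∫ t : ℝ, b t * Real.exp (-(x * t)) := by positivity
      linarith
    · nlinarith

lemma M_type (δ D : ℝ) (hD : 0 ≤ D) (L : ℂ → ℂ)
    (h : ∀ z, ‖L z‖ ≤ D * ‖z‖ * Real.exp (δ * ‖z‖)) : ExpTypeLE L δ := by
  intro ε hε
  refine ⟨D / ε, fun z => (h z).trans ?_⟩
  have h1 : ε * ‖z‖ ≤ Real.exp (ε * ‖z‖) := by have := Real.add_one_le_exp (ε * ‖z‖); linarith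
  rw [add_mul, Real.exp_add]
  calc _ = D / ε * (Real.exp (δ * ‖z‖) * (ε * ‖z‖)) := by field_simp
    _ ≤ _ := by gcongr

lemma M_type_add (δ : ℝ) (F G : ℂ → ℂ) (hF : ExpTypeLE F δ) (hG : ExpTypeLE G δ) :
    ExpTypeLE (fun z => F z + G z) δ := by
  intro ε hε
  obtain ⟨C, hC⟩ := hF ε hε
  obtain ⟨D, hD⟩ := hG ε hε
  exact ⟨C + D, fun z => (norm_add_le _ _).trans (by rw [add_mul]; exact add_le_add (hC z) (hD z))⟩

lemma M_type_neg (δ : ℝ) (F : ℂ → ℂ) (hF : ExpTypeLE F δ) : ExpTypeLE (fun z => - F z) δ := by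
  intro ε hε
  obtain ⟨C, hC⟩ := hF ε hε
  exact ⟨C, fun z => by rw [norm_neg]; exact hC z⟩

lemma M_type_HP (ν δ : ℝ) (hν : -1 < ν) (hδ : 0 < δ) : ExpTypeLE (HP ν δ) δ := by
  intro ε hε
  refine ⟨1, fun z => (H_P_bound ν δ hν hδ z).trans ?_⟩
  rw [one_mul]
  gcongr
  linarith

lemma M_final (ν δ : ℝ) (hν : -1 < ν) (hδ : 0 < δ)
    (m : ℝ → ℝ) (hm : Measurable m) (h0 : ∀ x, 0 ≤ m x) (h1 : ∀ x, m x ≤ 1) (hs : ∀ x, x < -δ → m x = 0)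
    (T : ℝ) (hT : Tendsto m atTop (𝓝 T))
    (hH3 : Tendsto (fun y : ℝ => (1 / y) * ∫ x in Iic y, m x) atTop (𝓝 1))
    (fμ : ℝ → ℝ) (hfμ : ∀ x : ℝ, fμ x = if 0 < x then ∫ lam : ℝ, x * Real.exp (-lam * x) * m lam else 0) :
    sInf {v : ℝ | ∃ L M : ℂ → ℂ, Differentiable ℂ L ∧ Differentiable ℂ M ∧ ExpTypeLE L δ ∧ ExpTypeLE M δ ∧
      (∀ x : ℝ, (L x).im = 0) ∧ (∀ x : ℝ, (M x).im = 0) ∧ (∀ x : ℝ, (L x).re ≤ fμ x ∧ fμ x ≤ (M x).re) ∧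
      Integrable (fun x : ℝ => ((M x).re - (L x).re) * |x| ^ (2 * ν + 1)) ∧
      v = ∫ x : ℝ, ((M x).re - (L x).re) * |x| ^ (2 * ν + 1)} = CLam ν δ := by
  set S : Set ℝ := {v : ℝ | ∃ L M : ℂ → ℂ, Differentiable ℂ L ∧ Differentiable ℂ M ∧ ExpTypeLE L δ ∧ ExpTypeLE M δ ∧
      (∀ x : ℝ, (L x).im = 0) ∧ (∀ x : ℝ, (M x).im = 0) ∧ (∀ x : ℝ, (L x).re ≤ fμ x ∧ fμ x ≤ (M x).re) ∧
      Integrable (fun x : ℝ => ((M x).re - (L x).re) * |x| ^ (2 * ν + 1)) ∧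
      v = ∫ x : ℝ, ((M x).re - (L x).re) * |x| ^ (2 * ν + 1)} with hS
  have hlow : ∀ v ∈ S, CLam ν δ ≤ v := by
    rintro v ⟨L, M, hL, hM, hLt, hMt, hLi, hMi, hle, hInt, rfl⟩
    have hM0 : 1 ≤ (M (0:ℝ)).re := by
      refine K_M0 δ m hm h0 h1 hs T hT (K_T δ m hm h0 h1 hs T hT hH3) (fun x => (M x).re)
        (Complex.continuous_re.comp (hM.continuous.comp Complex.continuous_ofReal)) ?_
      intro x hx
      have := (hle x).2
      rwa [hfμ, if_pos hx] at this
    have hL0 : (L (0:ℝ)).re ≤ 0 := by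
      have := (hle 0).1
      rwa [hfμ, if_neg (lt_irrefl _)] at this
    rw [Complex.ofReal_zero] at hM0 hL0
    have := E_lower ν δ hν hδ (fun z => M z + - L z) (by fun_prop) (M_type_add δ _ _ hMt (M_type_neg δ _ hLt))
      (fun x => by simp [hLi x, hMi x])
      (fun x => by have := hle x; simp only [Complex.add_re, Complex.neg_re]; linarith)
      (by simp only [Complex.add_re, Complex.neg_re]; linarith)
      (by simpa only [Complex.add_re, Complex.neg_re, ← sub_eq_add_neg, Complex.sub_re] using hInt)
    simpa only [Complex.add_re, Complex.neg_re, ← sub_eq_add_neg, Complex.sub_re] using this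
  have hex : ∃ v ∈ S, v ≤ CLam ν δ := by
    obtain ⟨c, hc, ρ, hρ, hρi⟩ := J_measure ν δ hν hδ
    obtain ⟨u, K, hu, hu0, hu1, hK, huK, hPu⟩ := L_u δ c hc m hm h0 h1 hs ρ (HP ν δ)
      (fun z => by unfold HP; rw [neg_sq]) hρ hρi
    obtain ⟨L, hLd, ⟨D, hD, hLD⟩, hLi, hneg, hpos⟩ := M_core δ c K hδ hc hK m u hm h0 h1 hs (HP ν δ) (H_P_diff ν δ hν hδ)
      (H_P_bound ν δ hν hδ) (H_P_real ν δ) hu hu0 hu1 huK hPu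
    obtain ⟨hi1, hi2⟩ := I_P ν δ hν hδ
    have hLt := M_type δ D hD L hLD
    have e : ∀ x : ℝ, ((L x + HP ν δ x).re - (L x).re) = (HP ν δ x).re := fun x => by simp
    refine ⟨_, ⟨L, fun z => L z + HP ν δ z, hLd, hLd.add (H_P_diff ν δ hν hδ), hLt,
      M_type_add δ _ _ hLt (M_type_HP ν δ hν hδ), hLi, ?_, ?_, ?_, rfl⟩, ?_⟩
    · intro x
      rw [Complex.add_im, hLi, (H_P_real ν δ x).1, Complex.ofReal_im, add_zero]
    · intro x
      rw [Complex.add_re, hfμ]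
      split_ifs with hx
      · have e2 : ∫ lam : ℝ, x * Real.exp (-lam * x) * m lam = x * ∫ t : ℝ, m t * Real.exp (-(x * t)) := by
          rw [← integral_const_mul]
          congr 1; funext t
          rw [show -t * x = -(x * t) by ring]; ring
        rw [e2]; exact hpos x hx
      · exact hneg x (not_lt.1 hx)
    · simpa only [e] using hi1
    · simpa only [e] using hi2
  obtain ⟨v, hv, hvle⟩ := hex
  exact le_antisymm ((csInf_le ⟨_, hlow⟩ hv).trans hvle) (le_csInf ⟨v, hv⟩ hlow)

end

/-- (Theorem 3, truncated case.) Let `ν > -1`, `δ > 0`, and `μ` a signed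
Borel measure satisfying (H1)-(H2)-(H3) with `supp(μ) ⊂ [-δ,∞)`.  Then the infimum of
`∫ {M(x) - L(x)} |x|^{2ν+1} dx` over all pairs of real entire functions `L, M` of
exponential type at most `δ` with `L ≤ f_μ ≤ M` on `ℝ` equals
`Γ(ν+1)Γ(ν+2)(4/δ)^{2ν+2}`. -/
theorem stmt8 (ν δ : ℝ) (hν : -1 < ν) (hδ : 0 < δ)
    (μ : MeasureTheory.SignedMeasure ℝ)
    (hsupp : ∀ s : Set ℝ, MeasurableSet s → s ⊆ Set.Iio (-δ) → μ s = 0)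
    (hdist : ∀ x : ℝ, 0 ≤ μ (Set.Iic x) ∧ μ (Set.Iic x) ≤ 1)
    (hH3 : Filter.Tendsto (fun y : ℝ => (1 / y) * ∫ x in Set.Iic y, μ (Set.Iic x))
      Filter.atTop (nhds 1))
    (fμ : ℝ → ℝ)
    (hfμ : ∀ x : ℝ, fμ x =
      if 0 < x then ∫ lam : ℝ, x * Real.exp (-lam * x) * μ (Set.Iic lam) else 0) :
    sInf {v : ℝ | ∃ L M : ℂ → ℂ,
        Differentiable ℂ L ∧ Differentiable ℂ M ∧
        ExpTypeLE L δ ∧ ExpTypeLE M δ ∧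
        (∀ x : ℝ, (L x).im = 0) ∧ (∀ x : ℝ, (M x).im = 0) ∧
        (∀ x : ℝ, (L x).re ≤ fμ x ∧ fμ x ≤ (M x).re) ∧
        MeasureTheory.Integrable (fun x : ℝ => ((M x).re - (L x).re) * |x| ^ (2 * ν + 1)) ∧
        v = ∫ x : ℝ, ((M x).re - (L x).re) * |x| ^ (2 * ν + 1)} =
      Real.Gamma (ν + 1) * Real.Gamma (ν + 2) * (4 / δ) ^ (2 * ν + 2) := by
  obtain ⟨hm, T, hT⟩ := K_m μ
  have h := M_final ν δ hν hδ (fun x => μ (Iic x)) hm (fun x => (hdist x).1) (fun x => (hdist x).2)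
    (fun x hx => hsupp _ measurableSet_Iic (fun y hy => lt_of_le_of_lt hy hx)) T hT hH3 fμ hfμ
  unfold CLam at h
  exact h
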